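/- arXiv:1105.5959 — 2 statements merged into one kernel-verified Lean document; each statement's English description precedes it below -/
import Mathlib

section
/- For all pairs (f, f^[1]) and (g, g^[1]) in D_ℓ², the limits W(f,g)(a) := lim_{x↓a, x∈𝕋} W(f,g)(σ(x)) and W(f,g)(b) := lim_{x↑b, x∈𝕋} W(f,g)(σ(x)) exist and are finite complex numbers. -/
open MeasureTheory Set Filter
open scoped ENNReal NNReal Classical

/-- Forward shift of a time scale. -/
noncomputable def tsSigma (T : Set ℝ) (t : ℝ) : ℝ :=
  if ({s | s ∈ T ∧ t < s}).Nonempty then sInf {s | s ∈ T ∧ t < s} else sSup T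

/-- Backward shift of a time scale. -/
noncomputable def tsRho (T : Set ℝ) (t : ℝ) : ℝ :=
  if ({s | s ∈ T ∧ s < t}).Nonempty then sSup {s | s ∈ T ∧ s < t} else sInf T

/-- `𝕋_κ` : the time scale with the left endpoint removed if it is finite and right-scattered. -/
noncomputable def tsKappa (T : Set ℝ) : Set ℝ :=
  if BddBelow T ∧ sInf T < tsSigma T (sInf T) then T \ {sInf T} else T

/-- Extension `p̄` of a function on `𝕋_κ` to all of `ℝ`. -/
noncomputable def extK (T : Set ℝ) (p : ℝ → ℂ) (t : ℝ) : ℂ :=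
  if t ∈ tsKappa T then p t else p (tsSigma (tsKappa T) t)

/-- Coercion of a real-valued coefficient to a complex-valued one. -/
def cR (f : ℝ → ℝ) : ℝ → ℂ := fun t => (f t : ℂ)

/-- `(u, u^[1])` is an integrated pair with density `h` against the measure `μ = dσ_κ`. -/
def IsPair (T : Set ℝ) (μ : Measure ℝ) (p : ℝ → ℂ) (u u1 h : ℝ → ℂ) : Prop :=
  ∀ c x : ℝ, c ≤ x →
    u x = u c + ∫ t in c..x, u1 t / extK T p t ∧
    u1 x = u1 c + ∫ t in Set.Ioc c x, h t ∂μ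

/-- `(u, u^[1])` is a solution pair of `(ℓ - z) u = g`. -/
def IsSLSol (T : Set ℝ) (μ : Measure ℝ) (p r q : ℝ → ℂ) (z : ℂ) (g : ℝ → ℂ)
    (u u1 : ℝ → ℂ) : Prop :=
  IsPair T μ p u u1 (fun t => (q t - z * r t) * u t - r t * g t)

/-- Wronskian of two pairs. -/
def Wr (u u1 v v1 : ℝ → ℂ) (x : ℝ) : ℂ := u x * v1 x - u1 x * v x

/-- The integrand `|u|² r` as an `ℝ≥0∞`-valued function. -/
noncomputable def sqWeight (r : ℝ → ℝ) (u : ℝ → ℂ) (t : ℝ) : ℝ≥0∞ :=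
  ((‖u t‖₊ : ℝ≥0∞)) ^ 2 * ENNReal.ofReal (r t)

/-- `u` lies in `L²` near the left endpoint `a`. -/
def L2NearLeft (T : Set ℝ) (μ : Measure ℝ) (r : ℝ → ℝ) (u : ℝ → ℂ) : Prop :=
  ∀ c ∈ tsKappa T, ∫⁻ t in {t | (∃ s ∈ T, s < t) ∧ t ≤ c} ∩ tsKappa T, sqWeight r u t ∂μ < ∞

/-- `u` lies in `L²` near the right endpoint `b`. -/
def L2NearRight (T : Set ℝ) (μ : Measure ℝ) (r : ℝ → ℝ) (u : ℝ → ℂ) : Prop :=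
  ∀ c ∈ tsKappa T, ∫⁻ t in {t | c ≤ t ∧ ∃ s ∈ T, t < s} ∩ tsKappa T, sqWeight r u t ∂μ < ∞

/-- `ℓ` is in the limit-circle case at the left endpoint. -/
def LimitCircleLeft (T : Set ℝ) (μ : Measure ℝ) (p r q : ℝ → ℝ) : Prop :=
  ∀ z : ℂ, ∀ u u1 : ℝ → ℂ, IsSLSol T μ (cR p) (cR r) (cR q) z 0 u u1 → L2NearLeft T μ r u

/-- `ℓ` is in the limit-point case at the left endpoint. -/
def LimitPointLeft (T : Set ℝ) (μ : Measure ℝ) (p r q : ℝ → ℝ) : Prop :=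
  ∀ z : ℂ, ∃ u u1 : ℝ → ℂ, IsSLSol T μ (cR p) (cR r) (cR q) z 0 u u1 ∧ ¬ L2NearLeft T μ r u

/-- `ℓ` is in the limit-circle case at the right endpoint. -/
def LimitCircleRight (T : Set ℝ) (μ : Measure ℝ) (p r q : ℝ → ℝ) : Prop :=
  ∀ z : ℂ, ∀ u u1 : ℝ → ℂ, IsSLSol T μ (cR p) (cR r) (cR q) z 0 u u1 → L2NearRight T μ r u

/-- `ℓ` is in the limit-point case at the right endpoint. -/
def LimitPointRight (T : Set ℝ) (μ : Measure ℝ) (p r q : ℝ → ℝ) : Prop :=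
  ∀ z : ℂ, ∃ u u1 : ℝ → ℂ, IsSLSol T μ (cR p) (cR r) (cR q) z 0 u u1 ∧ ¬ L2NearRight T μ r u

/-- The action `ℓ u = (-h + q u)/r` of the differential expression on a pair with density `h`. -/
noncomputable def ellApply (r q : ℝ → ℝ) (h u : ℝ → ℂ) (t : ℝ) : ℂ :=
  (-h t + (q t : ℂ) * u t) / (r t : ℂ)

/-- Membership in `L²(𝕋_κ; r dσ_κ)`. -/
def MemL2T (T : Set ℝ) (μ : Measure ℝ) (r : ℝ → ℝ) (u : ℝ → ℂ) : Prop :=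
  ∫⁻ t in tsKappa T, sqWeight r u t ∂μ < ∞

/-- The pair `(u, u^[1])` with density `h` belongs to `D_ℓ²`. -/
def MemD2 (T : Set ℝ) (μ : Measure ℝ) (p r q : ℝ → ℝ) (u u1 h : ℝ → ℂ) : Prop :=
  LocallyIntegrable h μ ∧ IsPair T μ (cR p) u u1 h ∧ MemL2T T μ r u ∧
    MemL2T T μ r (ellApply r q h u)

/-- The filter `x ↓ a`, `x ∈ 𝕋`. -/
noncomputable def leftLimFilter (T : Set ℝ) : Filter ℝ :=
  if BddBelow T then nhdsWithin (sInf T) T else Filter.atBot ⊓ Filter.principal T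

/-- The filter `x ↑ b`, `x ∈ 𝕋`. -/
noncomputable def rightLimFilter (T : Set ℝ) : Filter ℝ :=
  if BddAbove T then nhdsWithin (sSup T) T else Filter.atTop ⊓ Filter.principal T

/-- The measure `r dσ_κ` on `𝕋_κ`, giving the Hilbert space `L²(𝕋_κ; r dσ_κ)`. -/
noncomputable def wM (T : Set ℝ) (μ : Measure ℝ) (r : ℝ → ℝ) : Measure ℝ :=
  (μ.restrict (tsKappa T)).withDensity fun t => ENNReal.ofReal (r t)


theorem kap_sub (T : Set ℝ) : tsKappa T ⊆ T := by
  unfold tsKappa; split_ifs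
  · exact sdiff_subset
  · exact subset_rfl

theorem kap_mem (T : Set ℝ) {s0 s : ℝ} (h0 : s0 ∈ T) (h : s0 < s) (hs : s ∈ T) :
    s ∈ tsKappa T := by
  unfold tsKappa; split_ifs with h'
  · refine ⟨hs, fun hh => ?_⟩
    have : s = sInf T := hh
    have := csInf_le h'.1 h0
    linarith
  · exact hs

theorem sig_le (T : Set ℝ) {t s : ℝ} (hs : s ∈ T) (h : t < s) : tsSigma T t ≤ s := by
  unfold tsSigma
  rw [if_pos ⟨s, hs, h⟩]
  exact csInf_le ⟨t, fun x hx => hx.2.le⟩ ⟨hs, h⟩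

theorem le_sig (T : Set ℝ) {t s : ℝ} (hs : s ∈ T) (h : t ≤ s) : t ≤ tsSigma T t := by
  unfold tsSigma
  split_ifs with h'
  · exact le_csInf h' fun x hx => hx.2.le
  · have : s = t := by
      by_contra hne
      exact h' ⟨s, hs, lt_of_le_of_ne h (Ne.symm hne)⟩
    subst this
    refine le_csSup ⟨s, fun x hx => ?_⟩ hs
    by_contra hlt
    exact h' ⟨x, hx, not_le.1 hlt⟩

theorem sig_mono (T : Set ℝ) : Monotone (tsSigma T) := by
  intro t t' htt
  unfold tsSigma
  split_ifs with h1 h2 h2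
  · exact csInf_le_csInf ⟨t, fun x hx => hx.2.le⟩ h2 (fun x hx => ⟨hx.1, htt.trans_lt hx.2⟩)
  · obtain ⟨s, hs⟩ := h1
    refine (csInf_le ⟨t, fun x hx => hx.2.le⟩ hs).trans (le_csSup ⟨t', fun x hx => ?_⟩ hs.1)
    by_contra hlt
    exact h2 ⟨x, hx, not_le.1 hlt⟩
  · obtain ⟨s, hs⟩ := h2
    exact absurd ⟨s, hs.1, htt.trans_lt hs.2⟩ h1
  · exact le_rfl

theorem kap_closed (T : Set ℝ) (hcl : IsClosed T) : IsClosed (tsKappa T) := by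
  unfold tsKappa; split_ifs with h
  · have : T \ {sInf T} = T ∩ Ici (tsSigma T (sInf T)) := by
      ext s
      constructor
      · rintro ⟨hs, hne⟩
        exact ⟨hs, sig_le T hs (lt_of_le_of_ne (csInf_le h.1 hs) (fun e => hne e.symm))⟩
      · rintro ⟨hs, hge⟩
        refine ⟨hs, fun e => ?_⟩
        have e' : s = sInf T := e
        have : tsSigma T (sInf T) ≤ s := hge
        linarith [h.2]
    rw [this]
    exact hcl.inter isClosed_Ici
  · exact hcl

theorem mu_lf (μ : Measure ℝ) (σ : ℝ → ℝ)
    (hμ : ∀ c d : ℝ, c ≤ d → μ (Set.Ioc c d) = ENNReal.ofReal (σ d - σ c)) :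
    IsLocallyFiniteMeasure μ := by
  refine ⟨fun x => ⟨Ioc (x-1) (x+1), Ioc_mem_nhds (by linarith) (by linarith), ?_⟩⟩
  rw [hμ _ _ (by linarith)]
  exact ENNReal.ofReal_lt_top

theorem nu_lf (μ : Measure ℝ) (σ : ℝ → ℝ)
    (hμ : ∀ c d : ℝ, c ≤ d → μ (Set.Ico c d) = ENNReal.ofReal (σ d - σ c)) :
    IsLocallyFiniteMeasure μ := by
  refine ⟨fun x => ⟨Ico (x-1) (x+1), Ico_mem_nhds (by linarith) (by linarith), ?_⟩⟩
  rw [hμ _ _ (by linarith)]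
  exact ENNReal.ofReal_lt_top

theorem mu_compl (K : Set ℝ) (hK : IsClosed K) (μ : Measure ℝ)
    (hμ : ∀ c d : ℝ, c ≤ d → μ (Set.Ioc c d) = ENNReal.ofReal (tsSigma K d - tsSigma K c)) :
    μ Kᶜ = 0 := by
  refine measure_null_of_locally_null _ fun x hx => ?_
  obtain ⟨ε, hε, hb⟩ := Metric.isOpen_iff.1 hK.isOpen_compl x hx
  refine ⟨Ioc (x - ε/2) (x + ε/2), mem_nhdsWithin_of_mem_nhds
    (Ioc_mem_nhds (by linarith) (by linarith)), ?_⟩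
  rw [hμ _ _ (by linarith)]
  have : {s | s ∈ K ∧ x + ε/2 < s} = {s | s ∈ K ∧ x - ε/2 < s} := by
    ext s
    constructor
    · rintro ⟨h1, h2⟩; exact ⟨h1, by linarith⟩
    · rintro ⟨h1, h2⟩
      refine ⟨h1, ?_⟩
      by_contra hlt
      refine hb (?_ : s ∈ Metric.ball x ε) h1
      rw [Metric.mem_ball, Real.dist_eq, abs_lt]
      constructor <;> linarith [not_lt.1 hlt]
  simp [tsSigma, this]

/-- the map underlying the extension -/
noncomputable def phiK (T : Set ℝ) (t : ℝ) : ℝ :=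
  if t ∈ tsKappa T then t else tsSigma (tsKappa T) t

theorem extK_eq (T : Set ℝ) (p : ℝ → ℂ) (t : ℝ) : extK T p t = p (phiK T t) := by
  unfold extK phiK; split_ifs <;> rfl

theorem phi_mono (T : Set ℝ) : Monotone (phiK T) := by
  intro t t' htt
  unfold phiK
  split_ifs with h1 h2 h2
  · exact htt
  · exact (le_sig _ h1 le_rfl).trans (sig_mono _ htt)
  · exact sig_le _ h2 (lt_of_le_of_ne htt (fun e => h1 (e ▸ h2)))
  · exact sig_mono _ htt

def hullI (T : Set ℝ) : Set ℝ := {t | (∃ s ∈ T, s < t) ∧ (∃ s ∈ T, t ≤ s)}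

theorem hullI_meas (T : Set ℝ) : MeasurableSet (hullI T) := by
  apply Set.OrdConnected.measurableSet
  refine ⟨fun x hx y hy z hz => ?_⟩
  obtain ⟨⟨s, hs, hsx⟩, _⟩ := hx
  obtain ⟨_, s', hs', hsy⟩ := hy
  exact ⟨⟨s, hs, hsx.trans_le hz.1⟩, s', hs', hz.2.trans hsy⟩

theorem phi_lt (T : Set ℝ) {t d : ℝ} (ht : t ∈ hullI T) :
    phiK T t < d ↔ ∃ s ∈ T, t ≤ s ∧ s < d := by
  obtain ⟨⟨s0, hs0, h0⟩, s1, hs1, h1⟩ := ht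
  unfold phiK
  split_ifs with h
  · constructor
    · intro hd; exact ⟨t, kap_sub T h, le_rfl, hd⟩
    · rintro ⟨s, _, h2, h3⟩; exact h2.trans_lt h3
  · constructor
    · intro hd
      have hne : ({s | s ∈ tsKappa T ∧ t < s}).Nonempty := by
        have hk := kap_mem T hs0 (h0.trans_le h1) hs1
        exact ⟨s1, hk, lt_of_le_of_ne h1 (fun e => h (e ▸ hk))⟩
      unfold tsSigma at hd
      rw [if_pos hne] at hd
      obtain ⟨s, hs, hsd⟩ := exists_lt_of_csInf_lt hne hd
      exact ⟨s, kap_sub T hs.1, hs.2.le, hsd⟩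
    · rintro ⟨s, hs, h2, h3⟩
      have hk := kap_mem T hs0 (h0.trans_le h2) hs
      exact (sig_le _ hk (lt_of_le_of_ne h2 (fun e => h (e ▸ hk)))).trans_lt h3

theorem map_phi (T : Set ℝ) (hne : T.Nonempty) (ν : Measure ℝ)
    (hν : ∀ c d : ℝ, c ≤ d → ν (Set.Ico c d) = ENNReal.ofReal (tsRho T d - tsRho T c)) :
    Measure.map (phiK T) ((volume : Measure ℝ).restrict (hullI T)) = ν := by
  have := nu_lf ν _ hν
  symm
  refine Measure.ext_of_Ico _ _ fun c d hcd => ?_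
  rw [hν c d hcd.le, Measure.map_apply (phi_mono T).measurable measurableSet_Ico,
    Measure.restrict_apply ((phi_mono T).measurable measurableSet_Ico)]
  have hle : ∀ {s e : ℝ}, s ∈ T → s < e → s ≤ tsRho T e := by
    intro s e hs hse
    unfold tsRho
    rw [if_pos ⟨s, hs, hse⟩]
    exact le_csSup ⟨e, fun x hx => hx.2.le⟩ ⟨hs, hse⟩
  have hmem : ∀ t, t ∈ phiK T ⁻¹' Ico c d ∩ hullI T ↔ t ∈ hullI T ∧
      (∃ s ∈ T, t ≤ s ∧ s < d) ∧ ¬ (∃ s ∈ T, t ≤ s ∧ s < c) := by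
    intro t
    constructor
    · rintro ⟨⟨h1, h2⟩, h3⟩
      exact ⟨h3, (phi_lt T h3).1 h2, fun h => absurd ((phi_lt T h3).2 h) (not_lt.2 h1)⟩
    · rintro ⟨h3, h1, h2⟩
      exact ⟨⟨not_lt.1 fun h => h2 ((phi_lt T h3).1 h), (phi_lt T h3).2 h1⟩, h3⟩
  apply le_antisymm
  · rw [← Real.volume_Ioo]
    refine measure_mono fun t ht => (hmem t).2 ?_
    obtain ⟨hct, htd⟩ := ht
    have h1 : ∃ s ∈ T, t < s ∧ s < d := by
      by_cases hd : ({s | s ∈ T ∧ s < d}).Nonempty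
      · unfold tsRho at htd
        rw [if_pos hd] at htd
        obtain ⟨s, hs, hts⟩ := exists_lt_of_lt_csSup hd htd
        exact ⟨s, hs.1, hts, hs.2⟩
      · have hc : ¬ ({s | s ∈ T ∧ s < c}).Nonempty := fun ⟨s, hs⟩ => hd ⟨s, hs.1, hs.2.trans hcd⟩
        unfold tsRho at hct htd
        rw [if_neg hd] at htd
        rw [if_neg hc] at hct
        linarith
    obtain ⟨s, hs, hts, hsd⟩ := h1
    refine ⟨⟨?_, s, hs, hts.le⟩, ⟨s, hs, hts.le, hsd⟩, ?_⟩
    · by_cases hc : ({s | s ∈ T ∧ s < c}).Nonempty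
      · obtain ⟨s0, h0⟩ := hc
        exact ⟨s0, h0.1, (hle h0.1 h0.2).trans_lt hct⟩
      · unfold tsRho at hct
        rw [if_neg hc] at hct
        exact exists_lt_of_csInf_lt hne hct
    · rintro ⟨s', hs', h1, h2⟩
      have := hle hs' h2
      linarith
  · rw [← Real.volume_Icc]
    refine measure_mono fun t ht => ?_
    obtain ⟨⟨⟨s0, hs0, h0⟩, _⟩, ⟨s, hs, hts, hsd⟩, hn⟩ := (hmem t).1 ht
    refine ⟨?_, hts.trans (hle hs hsd)⟩
    have key : ∀ x ∈ T, x < c → x < t := fun x hx hxc => not_le.1 fun h => hn ⟨x, hx, h, hxc⟩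
    unfold tsRho
    split_ifs with hc
    · exact csSup_le hc fun x hx => (key x hx.1 hx.2).le
    · have : BddBelow T := ⟨c, fun x hx => not_lt.1 fun h => hc ⟨x, hx, h⟩⟩
      exact (csInf_le this hs0).trans h0.le

theorem pbar_int (T : Set ℝ) (hne : T.Nonempty) (ν : Measure ℝ)
    (hν : ∀ c d : ℝ, c ≤ d → ν (Set.Ico c d) = ENNReal.ofReal (tsRho T d - tsRho T c))
    (p : ℝ → ℝ) (hp : LocallyIntegrable (fun t => 1 / p t) ν) (c d : ℝ) :
    IntegrableOn (fun t => (extK T (cR p) t)⁻¹) (Icc c d) volume := by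
  have h1 : IntegrableOn (fun t => 1 / p (phiK T t)) (Icc c d ∩ hullI T) volume := by
    have h := hp.integrableOn_isCompact (isCompact_Icc (a := phiK T c) (b := phiK T d))
    rw [← map_phi T hne ν hν, IntegrableOn,
      Measure.restrict_map (phi_mono T).measurable measurableSet_Icc] at h
    have h2 := h.comp_measurable (phi_mono T).measurable
    rw [Measure.restrict_restrict ((phi_mono T).measurable measurableSet_Icc)] at h2
    refine IntegrableOn.mono_set (h2 : IntegrableOn _ _ _) ?_
    exact inter_subset_inter_left _ fun t ht => ⟨phi_mono T ht.1, phi_mono T ht.2⟩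
  have h2 : IntegrableOn (fun t => 1 / p (phiK T t)) (Icc c d ∩ {t | ∀ s ∈ T, t ≤ s}) volume := by
    have : IntegrableOn (fun t => 1 / p (sInf (tsKappa T))) (Icc c d ∩ {t | ∀ s ∈ T, t ≤ s}) volume :=
      (integrableOn_const (by simp)).mono_set inter_subset_left
    refine this.congr_fun (fun t ht => ?_) (measurableSet_Icc.inter ?_)
    · have hl : ∀ s ∈ T, t ≤ s := ht.2
      have : phiK T t = sInf (tsKappa T) := by
        unfold phiK
        split_ifs with h
        · exact le_antisymm (le_csInf ⟨t, h⟩ fun s hs => hl s (kap_sub T hs))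
            (csInf_le ⟨t, fun s hs => hl s (kap_sub T hs)⟩ h)
        · have e : {s | s ∈ tsKappa T ∧ t < s} = tsKappa T := by
            ext s
            refine ⟨fun hs => hs.1, fun hs => ⟨hs, lt_of_le_of_ne (hl s (kap_sub T hs)) ?_⟩⟩
            rintro rfl; exact h hs
          unfold tsSigma
          rw [e]
          split_ifs with h'
          · rfl
          · rw [not_nonempty_iff_eq_empty.1 h']; simp
      simp only [this]
    · apply Set.OrdConnected.measurableSet
      exact ⟨fun x hx y hy z hz s hs => hz.2.trans (hy s hs)⟩
  have h3 : IntegrableOn (fun t => 1 / p (phiK T t)) (Icc c d ∩ {t | ∀ s ∈ T, s < t}) volume := by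
    have : IntegrableOn (fun t => 1 / p (sSup (tsKappa T))) (Icc c d ∩ {t | ∀ s ∈ T, s < t}) volume :=
      (integrableOn_const (by simp)).mono_set inter_subset_left
    refine this.congr_fun (fun t ht => ?_) (measurableSet_Icc.inter ?_)
    · have hl : ∀ s ∈ T, s < t := ht.2
      have : phiK T t = sSup (tsKappa T) := by
        unfold phiK
        rw [if_neg fun h => lt_irrefl _ (hl t (kap_sub T h))]
        unfold tsSigma
        rw [if_neg]
        rintro ⟨s, hs, hts⟩
        exact lt_asymm hts (hl s (kap_sub T hs))
      simp only [this]
    · apply Set.OrdConnected.measurableSet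
      exact ⟨fun x hx y hy z hz s hs => (hx s hs).trans_le hz.1⟩
  have h4 := ((h1.union h2).union h3).mono_set (s := Icc c d) (by
    intro t ht
    by_cases ha : ∀ s ∈ T, t ≤ s
    · exact Or.inl (Or.inr ⟨ht, ha⟩)
    by_cases hb : ∀ s ∈ T, s < t
    · exact Or.inr ⟨ht, hb⟩
    push Not at ha hb
    exact Or.inl (Or.inl ⟨ht, ha, hb⟩))
  have h5 : IntegrableOn (fun t => ((1 / p (phiK T t) : ℝ) : ℂ)) (Icc c d) volume := h4.ofReal
  refine h5.congr_fun (fun t _ => ?_) measurableSet_Icc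
  simp [extK_eq, cR]

theorem u1_mul (μ : Measure ℝ) [IsLocallyFiniteMeasure μ] (u1 h F : ℝ → ℂ)
    (hh : LocallyIntegrable h μ) (c d : ℝ)
    (hu : ∀ x, c ≤ x → u1 x = u1 c + ∫ t in Set.Ioc c x, h t ∂μ)
    (hF : IntegrableOn F (Icc c d) volume) :
    IntegrableOn (fun t => u1 t * F t) (Icc c d) volume := by
  have hi : IntegrableOn h (Ioc c d) μ :=
    (hh.integrableOn_isCompact isCompact_Icc).mono_set Ioc_subset_Icc_self
  refine Integrable.bdd_mul (c := ‖u1 c‖ + ∫ t in Ioc c d, ‖h t‖ ∂μ) hF ?_ ?_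
  · have hA : MeasurableSet {z : ℝ × ℝ | z.2 ≤ z.1} := measurableSet_le measurable_snd measurable_fst
    have h1 : AEStronglyMeasurable ({z : ℝ × ℝ | z.2 ≤ z.1}.indicator fun z => h z.2)
        (((volume : Measure ℝ).restrict (Icc c d)).prod (μ.restrict (Ioc c d))) :=
      (hi.aestronglyMeasurable.comp_snd).indicator hA
    have h2 := (h1.integral_prod_right').const_add (u1 c)
    refine h2.congr ?_
    filter_upwards [ae_restrict_mem measurableSet_Icc] with y hy
    rw [hu y hy.1]
    congr 1
    have : (fun t => {z : ℝ × ℝ | z.2 ≤ z.1}.indicator (fun z => h z.2) (y, t)) =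
        (Iic y).indicator h := by
      ext t; simp [indicator]
    rw [this, integral_indicator measurableSet_Iic, Measure.restrict_restrict measurableSet_Iic]
    congr 2
    ext t; simp only [mem_inter_iff, mem_Iic, mem_Ioc]
    constructor
    · rintro ⟨h1, h2, h3⟩; exact ⟨h2, h1⟩
    · rintro ⟨h1, h2⟩; exact ⟨h2, h1, h2.trans hy.2⟩
  · filter_upwards [ae_restrict_mem measurableSet_Icc] with y hy
    rw [hu y hy.1]
    refine (norm_add_le _ _).trans (add_le_add le_rfl ?_)
    refine (norm_integral_le_integral_norm _).trans ?_
    exact setIntegral_mono_set hi.norm (Eventually.of_forall fun _ => norm_nonneg _)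
      (Ioc_subset_Ioc_right hy.2).eventuallyLE

theorem ibp0 (μ : Measure ℝ) [IsLocallyFiniteMeasure μ] (F G : ℝ → ℂ) (c x : ℝ)
    (hF : IntegrableOn F (Ioc c x) volume) (hG : IntegrableOn G (Ioc c x) μ) :
    (∫ s in Ioc c x, F s) * (∫ t in Ioc c x, G t ∂μ) =
      (∫ s in Ioc c x, F s * ∫ t in Ioc c s, G t ∂μ) +
      ∫ t in Ioc c x, (∫ s in Ioc c t, F s) * G t ∂μ := by
  have hH := Integrable.mul_prod (L := ℂ) hF hG
  have hA : MeasurableSet {z : ℝ × ℝ | z.2 ≤ z.1} := measurableSet_le measurable_snd measurable_fst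
  rw [← integral_prod_mul, ← integral_add_compl hA hH, ← integral_indicator hA,
    ← integral_indicator hA.compl, integral_prod _ (hH.indicator hA),
    integral_prod_symm _ (hH.indicator hA.compl)]
  congr 1
  · refine setIntegral_congr_fun measurableSet_Ioc fun s hs => ?_
    have : (fun t => {z : ℝ × ℝ | z.2 ≤ z.1}.indicator (fun z => F z.1 * G z.2) (s, t)) =
        (Iic s).indicator (fun t => F s * G t) := by
      ext t; simp [indicator]
    simp only [this]
    rw [integral_indicator measurableSet_Iic, Measure.restrict_restrict measurableSet_Iic,
      integral_const_mul]
    congr 3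
    ext t; simp only [mem_inter_iff, mem_Iic, mem_Ioc]
    constructor
    · rintro ⟨h1, h2, h3⟩; exact ⟨h2, h1⟩
    · rintro ⟨h1, h2⟩; exact ⟨h2, h1, h2.trans hs.2⟩
  · refine setIntegral_congr_fun measurableSet_Ioc fun t ht => ?_
    have : (fun s => {z : ℝ × ℝ | z.2 ≤ z.1}ᶜ.indicator (fun z => F z.1 * G z.2) (s, t)) =
        (Iio t).indicator (fun s => F s * G t) := by
      ext s; simp [indicator]
    simp only [this]
    rw [integral_indicator measurableSet_Iio, Measure.restrict_restrict measurableSet_Iio,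
      integral_mul_const, integral_Ioc_eq_integral_Ioo]
    congr 3
    ext s; simp only [mem_inter_iff, mem_Iio, mem_Ioc, mem_Ioo]
    constructor
    · rintro ⟨h1, h2, h3⟩; exact ⟨h2, h1⟩
    · rintro ⟨h1, h2⟩; exact ⟨h2, h1, h2.le.trans ht.2⟩

theorem ibp (μ : Measure ℝ) [IsLocallyFiniteMeasure μ] (F G f g1 : ℝ → ℂ) (c x : ℝ) (hcx : c ≤ x)
    (hF : IntegrableOn F (Ioc c x) volume) (hG : IntegrableOn G (Ioc c x) μ)
    (hf : ∀ y, c ≤ y → f y = f c + ∫ s in Ioc c y, F s)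
    (hg : ∀ y, c ≤ y → g1 y = g1 c + ∫ s in Ioc c y, G s ∂μ)
    (hfG : IntegrableOn (fun t => f t * G t) (Ioc c x) μ)
    (hFg : IntegrableOn (fun t => F t * g1 t) (Ioc c x) volume) :
    f x * g1 x = f c * g1 c + (∫ t in Ioc c x, f t * G t ∂μ) + ∫ t in Ioc c x, F t * g1 t := by
  have h0 := ibp0 μ F G c x hF hG
  have e1 : (∫ s in Ioc c x, F s * ∫ t in Ioc c s, G t ∂μ) =
      (∫ t in Ioc c x, F t * g1 t) - (∫ t in Ioc c x, F t) * g1 c := by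
    rw [← integral_mul_const, ← integral_sub hFg (hF.mul_const _)]
    refine setIntegral_congr_fun measurableSet_Ioc fun s hs => ?_
    rw [hg s hs.1.le]; ring
  have e2 : (∫ t in Ioc c x, (∫ s in Ioc c t, F s) * G t ∂μ) =
      (∫ t in Ioc c x, f t * G t ∂μ) - f c * (∫ t in Ioc c x, G t ∂μ) := by
    rw [← integral_const_mul, ← integral_sub hfG (hG.const_mul _)]
    refine setIntegral_congr_fun measurableSet_Ioc fun s hs => ?_
    rw [hf s hs.1.le]; ring
  rw [e1, e2] at h0
  rw [hf x hcx, hg x hcx]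
  linear_combination h0

theorem lim_set {μ : Measure ℝ} {φ : ℝ → ℂ} (hφ : Integrable φ μ) (l : Filter ℝ)
    [l.IsCountablyGenerated] (S : ℝ → Set ℝ) (S0 : Set ℝ) (hS : ∀ y, MeasurableSet (S y))
    (hS0 : MeasurableSet S0) (h : ∀ᵐ t ∂μ, ∀ᶠ y in l, (t ∈ S y ↔ t ∈ S0)) :
    Tendsto (fun y => ∫ t in S y, φ t ∂μ) l (nhds (∫ t in S0, φ t ∂μ)) := by
  simp only [← integral_indicator (hS _), ← integral_indicator hS0]
  refine tendsto_integral_filter_of_dominated_convergence (fun t => ‖φ t‖) ?_ ?_ hφ.norm ?_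
  · exact Eventually.of_forall fun y => hφ.aestronglyMeasurable.indicator (hS y)
  · exact Eventually.of_forall fun y => Eventually.of_forall fun t => norm_indicator_le_norm_self _ _
  · filter_upwards [h] with t ht
    refine tendsto_const_nhds.congr' ?_
    filter_upwards [ht] with y hy
    by_cases h0 : t ∈ S0
    · rw [indicator_of_mem h0, indicator_of_mem (hy.2 h0)]
    · rw [indicator_of_notMem h0, indicator_of_notMem (fun h => h0 (hy.1 h))]

theorem wr_lims {μ : Measure ℝ} {φ W : ℝ → ℂ} (hφ : Integrable φ μ)
    (hW : ∀ c x, c ≤ x → W x = W c + ∫ t in Ioc c x, φ t ∂μ) :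
    (∃ w, Tendsto W atTop (nhds w)) ∧ (∃ w, Tendsto W atBot (nhds w)) ∧
    (∀ s, Tendsto W (nhdsWithin s (Ici s)) (nhds (W s))) ∧
    (∀ s, μ {s} = 0 → Tendsto W (nhdsWithin s (Iic s)) (nhds (W s))) := by
  refine ⟨⟨W 0 + ∫ t in Ioi 0, φ t ∂μ, ?_⟩, ⟨W 0 - ∫ t in Iic 0, φ t ∂μ, ?_⟩, fun s => ?_,
    fun s hs => ?_⟩
  · have := (lim_set hφ atTop (fun y => Ioc 0 y) (Ioi 0) (fun _ => measurableSet_Ioc)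
      measurableSet_Ioi (Eventually.of_forall fun t => by
        filter_upwards [eventually_ge_atTop t] with y hy
        exact ⟨fun h => h.1, fun h => ⟨h, hy⟩⟩)).const_add (W 0)
    refine this.congr' ?_
    filter_upwards [eventually_ge_atTop 0] with y hy using (hW 0 y hy).symm
  · have := (lim_set hφ atBot (fun y => Ioc y 0) (Iic 0) (fun _ => measurableSet_Ioc)
      measurableSet_Iic (Eventually.of_forall fun t => by
        filter_upwards [eventually_lt_atBot t] with y hy
        exact ⟨fun h => h.2, fun h => ⟨hy, h⟩⟩)).const_sub (W 0)
    refine this.congr' ?_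
    filter_upwards [eventually_le_atBot 0] with y hy
    rw [hW y 0 hy]; ring
  · have := (lim_set hφ (nhdsWithin s (Ici s)) (fun y => Ioc s y) ∅ (fun _ => measurableSet_Ioc)
      MeasurableSet.empty (Eventually.of_forall fun t => by
        by_cases hts : t ≤ s
        · exact Eventually.of_forall fun y => ⟨fun h => absurd h.1 (not_lt.2 hts), fun h => h.elim⟩
        · filter_upwards [mem_nhdsWithin_of_mem_nhds (Iio_mem_nhds (not_le.1 hts))] with y hy
          exact ⟨fun h => absurd h.2 (not_le.2 hy), fun h => h.elim⟩)).const_add (W s)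
    simp only [Measure.restrict_empty, integral_zero_measure, add_zero] at this
    refine this.congr' ?_
    filter_upwards [self_mem_nhdsWithin] with y hy using (hW s y hy).symm
  · have hne : ∀ᵐ t ∂μ, t ≠ s := by
      rw [ae_iff]; simpa using hs
    have := (lim_set hφ (nhdsWithin s (Iic s)) (fun y => Ioc y s) ∅ (fun _ => measurableSet_Ioc)
      MeasurableSet.empty (by
        filter_upwards [hne] with t hne
        by_cases hts : s ≤ t
        · exact Eventually.of_forall fun y => ⟨fun h => absurd (le_antisymm h.2 hts) hne, fun h => h.elim⟩
        · filter_upwards [mem_nhdsWithin_of_mem_nhds (Ioi_mem_nhds (not_le.1 hts))] with y hy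
          exact ⟨fun h => absurd h.1 (not_lt.2 (le_of_lt hy)), fun h => h.elim⟩)).const_sub (W s)
    simp only [Measure.restrict_empty, integral_zero_measure, sub_zero] at this
    refine this.congr' ?_
    filter_upwards [self_mem_nhdsWithin] with y hy
    rw [hW y s hy]; ring

theorem pair_cont (f F : ℝ → ℂ) (hF : ∀ c d, IntegrableOn F (Icc c d) volume)
    (hf : ∀ c y, c ≤ y → f y = f c + ∫ s in Ioc c y, F s) : Continuous f := by
  rw [continuous_iff_continuousAt]
  intro x
  have h1 : ContinuousOn f (Icc (x-1) (x+1)) := by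
    refine ((intervalIntegral.continuousOn_primitive (hF (x-1) (x+1))).const_add (f (x-1))).congr ?_
    intro y hy
    exact hf _ y hy.1
  exact h1.continuousAt (Icc_mem_nhds (by linarith) (by linarith))

theorem sq_int (μ : Measure ℝ) (r : ℝ → ℝ) (u : ℝ → ℂ) (hr : AEStronglyMeasurable r μ)
    (hrpos : ∀ᵐ t ∂μ, 0 < r t) (hu : AEStronglyMeasurable u μ)
    (h : ∫⁻ t, sqWeight r u t ∂μ < ∞) : Integrable (fun t => ‖u t‖ ^ 2 * r t) μ := by
  refine ⟨(hu.norm.pow 2).mul hr, ?_⟩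
  rw [hasFiniteIntegral_iff_ofReal]
  · refine lt_of_le_of_lt (le_of_eq ?_) h
    congr 1
    ext t
    rw [sqWeight, ENNReal.ofReal_mul (by positivity), ENNReal.ofReal_pow (norm_nonneg _),
      ofReal_norm]
    rfl
  · filter_upwards [hrpos] with t ht
    simp only [Pi.zero_apply]
    positivity

theorem phi_int (μ : Measure ℝ) (r q : ℝ → ℝ) (f g hf hg : ℝ → ℂ)
    (hr : AEStronglyMeasurable r μ) (hq : AEStronglyMeasurable q μ)
    (hrpos : ∀ᵐ t ∂μ, 0 < r t) (f0 : Continuous f) (g0 : Continuous g)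
    (hfm : AEStronglyMeasurable hf μ) (hgm : AEStronglyMeasurable hg μ)
    (h1 : ∫⁻ t, sqWeight r f t ∂μ < ∞) (h2 : ∫⁻ t, sqWeight r (ellApply r q hf f) t ∂μ < ∞)
    (h3 : ∫⁻ t, sqWeight r g t ∂μ < ∞) (h4 : ∫⁻ t, sqWeight r (ellApply r q hg g) t ∂μ < ∞) :
    Integrable (fun t => f t * hg t - g t * hf t) μ := by
  have hrC : AEStronglyMeasurable (fun t => (r t : ℂ)) μ :=
    Complex.continuous_ofReal.comp_aestronglyMeasurable hr
  have hqC : AEStronglyMeasurable (fun t => (q t : ℂ)) μ :=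
    Complex.continuous_ofReal.comp_aestronglyMeasurable hq
  have hell : ∀ h u : ℝ → ℂ, AEStronglyMeasurable h μ → Continuous u →
      AEStronglyMeasurable (ellApply r q h u) μ := by
    intro h u hh hu
    exact ((hh.aemeasurable.neg.add
      (hqC.aemeasurable.mul hu.measurable.aemeasurable)).div hrC.aemeasurable).aestronglyMeasurable
  have i1 := sq_int μ r f hr hrpos f0.aestronglyMeasurable h1
  have i2 := sq_int μ r _ hr hrpos (hell hf f hfm f0) h2
  have i3 := sq_int μ r g hr hrpos g0.aestronglyMeasurable h3
  have i4 := sq_int μ r _ hr hrpos (hell hg g hgm g0) h4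
  refine (((i1.add i2).add i3).add i4).mono' ((f0.aestronglyMeasurable.mul hgm).sub
    (g0.aestronglyMeasurable.mul hfm)) ?_
  filter_upwards [hrpos] with t ht
  have hne : (r t : ℂ) ≠ 0 := by exact_mod_cast ht.ne'
  have e : f t * hg t - g t * hf t =
      (r t : ℂ) * (g t * ellApply r q hf f t - f t * ellApply r q hg g t) := by
    unfold ellApply
    field_simp
    ring
  rw [e, norm_mul, Complex.norm_real, Real.norm_eq_abs, abs_of_pos ht]
  have h5 := norm_sub_le (g t * ellApply r q hf f t) (f t * ellApply r q hg g t)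
  rw [norm_mul, norm_mul] at h5
  have h6 : ‖g t‖ * ‖ellApply r q hf f t‖ + ‖f t‖ * ‖ellApply r q hg g t‖ ≤
      ‖f t‖ ^ 2 + ‖ellApply r q hf f t‖ ^ 2 + ‖g t‖ ^ 2 + ‖ellApply r q hg g t‖ ^ 2 := by
    nlinarith [sq_nonneg (‖g t‖ - ‖ellApply r q hf f t‖), sq_nonneg (‖f t‖ - ‖ellApply r q hg g t‖),
      sq_nonneg (‖f t‖), sq_nonneg (‖g t‖), sq_nonneg ‖ellApply r q hf f t‖,
      sq_nonneg ‖ellApply r q hg g t‖]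
  have h7 := mul_le_mul_of_nonneg_left (h5.trans h6) ht.le
  simp only [Pi.add_apply]
  linarith

theorem mu_top (T : Set ℝ) (hne : T.Nonempty) (hcl : IsClosed T)
    (hfive : ∃ s : Finset ℝ, ↑s ⊆ T ∧ 5 ≤ s.card) (μ : Measure ℝ)
    (hμ : ∀ c d : ℝ, c ≤ d →
      μ (Set.Ioc c d) = ENNReal.ofReal (tsSigma (tsKappa T) d - tsSigma (tsKappa T) c))
    (hb : BddAbove T) : μ {sSup T} = 0 := by
  have hbT : sSup T ∈ T := hcl.csSup_mem hne hb
  obtain ⟨s0, hs0, hlt⟩ : ∃ s0 ∈ T, s0 < sSup T := by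
    obtain ⟨s, hs, hc⟩ := hfive
    obtain ⟨x, hx, y, hy, hxy⟩ := Finset.one_lt_card.1 (by omega : 1 < s.card)
    rcases lt_or_gt_of_ne hxy with h | h
    · exact ⟨x, hs hx, h.trans_le (le_csSup hb (hs hy))⟩
    · exact ⟨y, hs hy, h.trans_le (le_csSup hb (hs hx))⟩
  have hbK := kap_mem T hs0 hlt hbT
  refine le_antisymm (ENNReal.le_of_forall_pos_le_add fun ε hε _ => ?_) zero_le
  have hε' : (0:ℝ) < ε := hε
  rw [zero_add]
  calc μ {sSup T} ≤ μ (Ioc (sSup T - ε) (sSup T)) := by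
        apply measure_mono
        rw [singleton_subset_iff]
        exact ⟨by linarith, le_rfl⟩
    _ = _ := hμ _ _ (by linarith)
    _ ≤ ENNReal.ofReal ε := by
        apply ENNReal.ofReal_le_ofReal
        have h1 := le_sig _ hbK (by linarith : sSup T - ε ≤ sSup T)
        have h2 : tsSigma (tsKappa T) (sSup T) ≤ sSup T := by
          unfold tsSigma
          rw [if_neg]
          · exact csSup_le_csSup hb ⟨_, hbK⟩ (kap_sub T)
          · rintro ⟨s, hs, h⟩
            exact absurd (le_csSup hb (kap_sub T hs)) (not_le.2 h)
        linarith
    _ = ε := ENNReal.ofReal_coe_nnreal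

/-- For pairs `(f, f^[1])` and `(g, g^[1])` in `D_ℓ²`, the limits of the Wronskian
`W(f,g)(σ(x))` as `x ↓ a` in `𝕋` and as `x ↑ b` in `𝕋` exist and are finite. -/
theorem wronskian_limits_exist_at_endpoints
    (T : Set ℝ) (hne : T.Nonempty) (hcl : IsClosed T)
    (hfive : ∃ s : Finset ℝ, ↑s ⊆ T ∧ 5 ≤ s.card)
    (μ ν : Measure ℝ)
    (hμ : ∀ c d : ℝ, c ≤ d →
      μ (Set.Ioc c d) = ENNReal.ofReal (tsSigma (tsKappa T) d - tsSigma (tsKappa T) c))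
    (hν : ∀ c d : ℝ, c ≤ d → ν (Set.Ico c d) = ENNReal.ofReal (tsRho T d - tsRho T c))
    (p r q : ℝ → ℝ)
    (hr : LocallyIntegrable r μ) (hrpos : ∀ᵐ t ∂μ, 0 < r t)
    (hq : LocallyIntegrable q μ)
    (hpne : ∀ᵐ t ∂ν, p t ≠ 0) (hp : LocallyIntegrable (fun t => 1 / p t) ν)
    (f f1 g g1 : ℝ → ℂ)
    (hf : ∃ h : ℝ → ℂ, MemD2 T μ p r q f f1 h)
    (hg : ∃ h : ℝ → ℂ, MemD2 T μ p r q g g1 h) :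
    (∃ wa : ℂ, Filter.Tendsto (fun x => Wr f f1 g g1 (tsSigma T x))
        (leftLimFilter T) (nhds wa)) ∧
    (∃ wb : ℂ, Filter.Tendsto (fun x => Wr f f1 g g1 (tsSigma T x))
        (rightLimFilter T) (nhds wb)) := by

  obtain ⟨hf', hfl, hfp, hf2, hfe⟩ := hf
  obtain ⟨hg', hgl, hgp, hg2, hge⟩ := hg
  have hlf := mu_lf μ _ hμ
  have hK : ∀ᵐ t ∂μ, t ∈ tsKappa T := mu_compl _ (kap_closed T hcl) μ hμ
  have hres : μ.restrict (tsKappa T) = μ := Measure.restrict_eq_self_of_ae_mem hK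
  unfold MemL2T at hf2 hfe hg2 hge
  rw [hres] at hf2 hfe hg2 hge
  have hP := pbar_int T hne ν hν p hp
  have hFi : ∀ u u1 h : ℝ → ℂ, LocallyIntegrable h μ → IsPair T μ (cR p) u u1 h → ∀ c d,
      IntegrableOn (fun t => u1 t / extK T (cR p) t) (Icc c d) volume := by
    intro u u1 h hl hp c d
    simp only [div_eq_mul_inv]
    exact u1_mul μ u1 h _ hl c d (fun x hx => (hp c x hx).2) (hP c d)
  have hpf : ∀ u u1 h : ℝ → ℂ, IsPair T μ (cR p) u u1 h → ∀ c y, c ≤ y →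
      u y = u c + ∫ s in Ioc c y, u1 s / extK T (cR p) s := by
    intro u u1 h hp c y hy
    rw [← intervalIntegral.integral_of_le hy]
    exact (hp c y hy).1
  have f0 := pair_cont f _ (hFi f f1 hf' hfl hfp) (hpf f f1 hf' hfp)
  have g0 := pair_cont g _ (hFi g g1 hg' hgl hgp) (hpf g g1 hg' hgp)
  have hφ := phi_int μ r q f g hf' hg' hr.aestronglyMeasurable hq.aestronglyMeasurable hrpos f0 g0
    hfl.aestronglyMeasurable hgl.aestronglyMeasurable hf2 hfe hg2 hge
  have hW : ∀ c x, c ≤ x → Wr f f1 g g1 x = Wr f f1 g g1 c +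
      ∫ t in Ioc c x, (f t * hg' t - g t * hf' t) ∂μ := by
    intro c x hcx
    have hsub : Ioc c x ⊆ Icc c x := Ioc_subset_Icc_self
    have iF := hFi f f1 hf' hfl hfp c x
    have iG := hFi g g1 hg' hgl hgp c x
    have jf := hfl.integrableOn_isCompact (isCompact_Icc (a := c) (b := x))
    have jg := hgl.integrableOn_isCompact (isCompact_Icc (a := c) (b := x))
    have k1 : IntegrableOn (fun t => f t * hg' t) (Ioc c x) μ :=
      (jg.continuousOn_mul f0.continuousOn isCompact_Icc).mono_set hsub
    have k2 : IntegrableOn (fun t => g t * hf' t) (Ioc c x) μ :=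
      (jf.continuousOn_mul g0.continuousOn isCompact_Icc).mono_set hsub
    have m1 := u1_mul μ g1 hg' _ hgl c x (fun y hy => (hgp c y hy).2) iF
    have m2 := u1_mul μ f1 hf' _ hfl c x (fun y hy => (hfp c y hy).2) iG
    have e1 := ibp μ _ hg' f g1 c x hcx (iF.mono_set hsub) (jg.mono_set hsub)
      (hpf f f1 hf' hfp c) (fun y hy => (hgp c y hy).2) k1
      (by simpa only [mul_comm] using m1.mono_set hsub)
    have e2 := ibp μ _ hf' g f1 c x hcx (iG.mono_set hsub) (jf.mono_set hsub)
      (hpf g g1 hg' hgp c) (fun y hy => (hfp c y hy).2) k2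
      (by simpa only [mul_comm] using m2.mono_set hsub)
    have e3 : (∫ t in Ioc c x, f1 t / extK T (cR p) t * g1 t) =
        ∫ t in Ioc c x, g1 t / extK T (cR p) t * f1 t := by
      congr 1; ext t; ring
    rw [integral_sub k1 k2]
    unfold Wr
    linear_combination e1 - e2 + e3
  obtain ⟨⟨wt, ht⟩, ⟨wb, hb⟩, hR, hL⟩ := wr_lims hφ hW
  constructor
  · unfold leftLimFilter
    split_ifs with hbd
    · refine ⟨_, (hR (tsSigma T (sInf T))).comp ?_⟩
      rw [tendsto_nhdsWithin_iff]
      constructor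
      · have haT := hcl.csInf_mem hne hbd
        have hn : ({s | s ∈ T ∧ sInf T < s}).Nonempty := by
          obtain ⟨s, hs, hc⟩ := hfive
          obtain ⟨x, hx, y, hy, hxy⟩ := Finset.one_lt_card.1 (by omega : 1 < s.card)
          rcases lt_or_gt_of_ne hxy with h | h
          · exact ⟨y, hs hy, (csInf_le hbd (hs hx)).trans_lt h⟩
          · exact ⟨x, hs hx, (csInf_le hbd (hs hy)).trans_lt h⟩
        rw [tendsto_order]
        constructor
        · intro e he
          filter_upwards [self_mem_nhdsWithin] with x hx
          exact he.trans_le (sig_mono T (csInf_le hbd hx))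
        · intro e he
          rw [tsSigma, if_pos hn] at he
          obtain ⟨s, hs, hse⟩ := exists_lt_of_csInf_lt hn he
          filter_upwards [mem_nhdsWithin_of_mem_nhds (Iio_mem_nhds hs.2)] with x hx
          exact (sig_le T hs.1 hx).trans_lt hse
      · filter_upwards [self_mem_nhdsWithin] with x hx
        exact sig_mono T (csInf_le hbd hx)
    · refine ⟨wb, hb.comp ?_⟩
      rw [tendsto_atBot]
      intro M
      obtain ⟨s, hs, hsM⟩ := not_bddBelow_iff.1 hbd M
      filter_upwards [mem_inf_of_left (Iio_mem_atBot s)] with x hx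
      exact (sig_le T hs hx).trans hsM.le
  · unfold rightLimFilter
    split_ifs with hbd
    · refine ⟨_, (hL (sSup T) (mu_top T hne hcl hfive μ hμ hbd)).comp ?_⟩
      have hub : ∀ x ∈ T, tsSigma T x ≤ sSup T := by
        intro x hx
        by_cases hxb : x < sSup T
        · exact sig_le T (hcl.csSup_mem hne hbd) hxb
        · unfold tsSigma
          rw [if_neg]
          rintro ⟨s, hs, h⟩
          exact hxb (h.trans_le (le_csSup hbd hs))
      rw [tendsto_nhdsWithin_iff]
      constructor
      · refine tendsto_of_tendsto_of_tendsto_of_le_of_le' (g := id) (h := fun _ => sSup T)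
          (tendsto_id.mono_left nhdsWithin_le_nhds) tendsto_const_nhds ?_ ?_
        · filter_upwards [self_mem_nhdsWithin] with x hx using le_sig T hx le_rfl
        · filter_upwards [self_mem_nhdsWithin] with x hx using hub x hx
      · filter_upwards [self_mem_nhdsWithin] with x hx using hub x hx
    · refine ⟨wt, ht.comp ?_⟩
      rw [tendsto_atTop]
      intro M
      filter_upwards [mem_inf_of_left (Ici_mem_atTop M), mem_inf_of_right (mem_principal_self T)]
        with x hx hxT
      exact le_trans hx (le_sig T hxT le_rfl)
end

section
/- ℓ is in the limit-point case at a if and only if W(f,g)(a) = 0 for all (f, f^[1]), (g, g^[1]) ∈ D_ℓ². Furthermore, ℓ is in the limit-circle case at a if and only if there is (f, f^[1]) ∈ D_ℓ² such that W(f, f*)(a) = 0 and W(f, g)(a) ≠ 0 for some (g, g^[1]) ∈ D_ℓ², where f* denotes the complex-conjugate pair (conj f, conj f^[1]). The analogous statements hold at the endpoint b. -/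
open MeasureTheory Set Filter
open scoped ENNReal NNReal Classical

section core
variable {μ : Measure ℝ}

lemma ts_ioc {f : ℝ → ℂ} (hf : LocallyIntegrable f μ) (a b : ℝ) : IntegrableOn f (Ioc a b) μ :=
  (hf.integrableOn_isCompact isCompact_Icc).mono_set Ioc_subset_Icc_self

lemma ts_uioc {f : ℝ → ℂ} (hf : LocallyIntegrable f μ) (a b : ℝ) : IntegrableOn f (uIoc a b) μ :=
  ts_ioc hf _ _

lemma ts_ii {f : ℝ → ℂ} (hf : LocallyIntegrable f μ) (a b : ℝ) : IntervalIntegrable f μ a b :=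
  ⟨ts_ioc hf _ _, ts_ioc hf _ _⟩

lemma ts_li {f : ℝ → ℂ} (hf : ∀ a b, a ≤ b → IntegrableOn f (Ioc a b) μ) :
    LocallyIntegrable f μ := by
  intro x
  exact ⟨Ioc (x-1) (x+1), Ioc_mem_nhds (by linarith) (by linarith), hf _ _ (by linarith)⟩

/-- integration by parts on `(c,x]`. -/
lemma ts_ibp0 [IsLocallyFiniteMeasure μ] {φ h u v : ℝ → ℂ} (hφ : LocallyIntegrable φ volume)
    (hh : LocallyIntegrable h μ) {c x : ℝ} (hcx : c ≤ x)
    (hu : ∀ t ∈ Icc c x, u t = u c + ∫ s in Ioc c t, φ s)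
    (hv : ∀ t ∈ Icc c x, v x = v t + ∫ s in Ioc t x, h s ∂μ) :
    IntegrableOn (fun t => v t * φ t) (Ioc c x) volume ∧
    u x * v x - u c * v c = (∫ t in Ioc c x, u t * h t ∂μ) + ∫ t in Ioc c x, v t * φ t := by
  have i1 : Integrable φ (volume.restrict (Ioc c x)) := ts_ioc hφ _ _
  have i2 : Integrable h (μ.restrict (Ioc c x)) := ts_ioc hh _ _
  set F : ℝ → ℝ → ℂ := fun s t => if s < t then φ s * h t else 0 with hF
  have iF : Integrable (Function.uncurry F)
      ((volume.restrict (Ioc c x)).prod (μ.restrict (Ioc c x))) := by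
    have := (i1.mul_prod i2).indicator (measurableSet_lt measurable_fst measurable_snd :
      MeasurableSet {z : ℝ × ℝ | z.1 < z.2})
    refine this.congr (ae_of_all _ ?_)
    rintro ⟨s, t⟩
    simp only [indicator, mem_setOf_eq, Function.uncurry, hF]
  have e1 : ∀ s ∈ Ioc c x, ∫ t, F s t ∂(μ.restrict (Ioc c x)) = φ s * (v x - v s) := by
    intro s hs
    have : ∀ t, F s t = (Ioi s).indicator (fun t => φ s * h t) t := by
      intro t; simp [hF, indicator]
    simp_rw [this]
    rw [integral_indicator measurableSet_Ioi, Measure.restrict_restrict measurableSet_Ioi,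
      integral_const_mul]
    have : Ioi s ∩ Ioc c x = Ioc s x := by
      ext t; simp only [mem_inter_iff, mem_Ioi, mem_Ioc]
      constructor
      · rintro ⟨a, b, d⟩; exact ⟨a, d⟩
      · rintro ⟨a, b⟩; exact ⟨a, hs.1.trans a, b⟩
    rw [this, hv s ⟨hs.1.le, hs.2⟩]; ring
  have e2 : ∀ t ∈ Ioc c x, ∫ s, F s t ∂(volume.restrict (Ioc c x)) = h t * (u t - u c) := by
    intro t ht
    have : ∀ s, F s t = (Iio t).indicator (fun s => h t * φ s) s := by
      intro s; simp [hF, indicator, mul_comm]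
    simp_rw [this]
    rw [integral_indicator measurableSet_Iio, Measure.restrict_restrict measurableSet_Iio,
      integral_const_mul]
    have : Iio t ∩ Ioc c x = Ioo c t := by
      ext s; simp only [mem_inter_iff, mem_Iio, mem_Ioc, mem_Ioo]
      constructor
      · rintro ⟨a, b, d⟩; exact ⟨b, a⟩
      · rintro ⟨a, b⟩; exact ⟨b, a, b.le.trans ht.2⟩
    rw [this, hu t ⟨ht.1.le, ht.2⟩, integral_Ioc_eq_integral_Ioo]; ring
  have j1 : IntegrableOn (fun s => φ s * (v x - v s)) (Ioc c x) volume := by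
    have := iF.integral_prod_left
    refine this.congr ?_
    filter_upwards [ae_restrict_mem measurableSet_Ioc] with s hs
    exact e1 s hs
  have j2 : IntegrableOn (fun t => h t * (u t - u c)) (Ioc c x) μ := by
    have := iF.integral_prod_right
    refine this.congr ?_
    filter_upwards [ae_restrict_mem measurableSet_Ioc] with s hs
    exact e2 s hs
  have key := integral_integral_swap iF
  rw [setIntegral_congr_fun measurableSet_Ioc e1, setIntegral_congr_fun measurableSet_Ioc e2] at key
  have k1 : IntegrableOn (fun t => v t * φ t) (Ioc c x) volume := by
    have := (i1.const_mul (v x)).sub j1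
    refine this.congr (ae_of_all _ fun t => ?_)
    simp only [Pi.sub_apply]; ring
  have k2 : IntegrableOn (fun t => u t * h t) (Ioc c x) μ := by
    have := (i2.const_mul (u c)).add j2
    refine this.congr (ae_of_all _ fun t => ?_)
    simp only [Pi.add_apply]; ring
  refine ⟨k1, ?_⟩
  have s1 : ∫ s in Ioc c x, φ s * (v x - v s) = v x * (u x - u c) - ∫ t in Ioc c x, v t * φ t := by
    rw [hu x ⟨hcx, le_rfl⟩, add_sub_cancel_left, ← integral_const_mul, ← integral_sub (i1.const_mul _) k1]
    congr 1; ext t; ring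
  have s2 : ∫ t in Ioc c x, h t * (u t - u c) ∂μ = (∫ t in Ioc c x, u t * h t ∂μ) - u c * (v x - v c) := by
    rw [hv c ⟨le_rfl, hcx⟩, add_sub_cancel_left, ← integral_const_mul, ← integral_sub k2 (i2.const_mul _)]
    congr 1; ext t; ring
  rw [s1, s2] at key
  linear_combination key

/-- A regular pair: `u` continuous, everything locally integrable. -/
structure TsPr (μ : Measure ℝ) (Φ u u1 h : ℝ → ℂ) : Prop where
  hh : LocallyIntegrable h μ
  hphi : LocallyIntegrable (fun t => u1 t * Φ t) volume
  hc : Continuous u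
  e0 : ∀ c x, u x = u c + ∫ t in c..x, u1 t * Φ t
  e1 : ∀ c x, u1 x = u1 c + ∫ t in c..x, h t ∂μ

lemma ts_sym {μ : Measure ℝ} {F φ : ℝ → ℂ} (hF : ∀ c x, c ≤ x → F x = F c + ∫ t in Ioc c x, φ t ∂μ)
    (c x : ℝ) : F x = F c + ∫ t in c..x, φ t ∂μ := by
  rcases le_total c x with h | h
  · rw [intervalIntegral.integral_of_le h]; exact hF c x h
  · rw [intervalIntegral.integral_of_ge h, hF x c h]; ring

/-- primitive against `μ` times a locally integrable function -/
lemma ts_prim_mul [IsLocallyFiniteMeasure μ] {φ h v : ℝ → ℂ} (hφ : LocallyIntegrable φ volume)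
    (hh : LocallyIntegrable h μ)
    (hv : ∀ c x, v x = v c + ∫ s in c..x, h s ∂μ) :
    LocallyIntegrable (fun t => v t * φ t) volume := by
  apply ts_li
  intro a b hab
  refine (ts_ibp0 (u := fun t => ∫ s in Ioc a t, φ s) hφ hh hab ?_ ?_).1
  · intro t ht; simp
  · intro t ht; rw [hv t b, intervalIntegral.integral_of_le ht.2]

lemma ts_prim_cont {φ u : ℝ → ℂ} (hφ : LocallyIntegrable φ volume)
    (hu : ∀ c x, u x = u c + ∫ s in c..x, φ s) : Continuous u := by
  have : u = fun x => u 0 + ∫ s in (0:ℝ)..x, φ s := by ext x; exact hu 0 x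
  rw [this]
  exact continuous_const.add (intervalIntegral.continuous_primitive (fun a b => ts_ii hφ a b) 0)

lemma ts_ibp [IsLocallyFiniteMeasure μ] {φ h u v : ℝ → ℂ} (hφ : LocallyIntegrable φ volume)
    (hh : LocallyIntegrable h μ) 
    (hu : ∀ c x, u x = u c + ∫ s in c..x, φ s)
    (hv : ∀ c x, v x = v c + ∫ s in c..x, h s ∂μ) (c x : ℝ) :
    u x * v x - u c * v c = (∫ t in c..x, u t * h t ∂μ) + ∫ t in c..x, v t * φ t := by
  have H : ∀ c x, c ≤ x → 
    u x * v x - u c * v c = (∫ t in Ioc c x, u t * h t ∂μ) + ∫ t in Ioc c x, v t * φ t := by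
    intro c x hcx
    refine (ts_ibp0 hφ hh hcx ?_ ?_).2
    · intro t ht; rw [hu c t, intervalIntegral.integral_of_le ht.1]
    · intro t ht; rw [hv t x, intervalIntegral.integral_of_le ht.2]
  rcases le_total c x with h' | h'
  · rw [intervalIntegral.integral_of_le h', intervalIntegral.integral_of_le h']; exact H c x h'
  · rw [intervalIntegral.integral_of_ge h', intervalIntegral.integral_of_ge h']
    linear_combination - H x c h'

/-- Lagrange identity -/
lemma ts_lagrange [IsLocallyFiniteMeasure μ] {Φ u u1 h v v1 k : ℝ → ℂ}
    (hu : TsPr μ Φ u u1 h) (hv : TsPr μ Φ v v1 k) (c x : ℝ) :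
    Wr u u1 v v1 x = Wr u u1 v v1 c + ∫ t in c..x, (u t * k t - h t * v t) ∂μ := by
  have a := ts_ibp hu.hphi hv.hh hu.e0 hv.e1 c x
  have b := ts_ibp hv.hphi hu.hh hv.e0 hu.e1 c x
  have : ∫ t in c..x, v1 t * (u1 t * Φ t) = ∫ t in c..x, u1 t * (v1 t * Φ t) := by
    congr 1; ext t; ring
  rw [this] at a
  rw [intervalIntegral.integral_sub (ts_ii (hv.hh.continuous_mul hu.hc) c x)
    (ts_ii (hu.hh.mul_continuous hv.hc) c x)]
  have e : ∫ t in c..x, h t * v t ∂μ = ∫ t in c..x, v t * h t ∂μ := by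
    congr 1; ext t; ring
  rw [e]
  unfold Wr
  linear_combination a - b

/-- Non locally integrable junk densities -/
lemma ts_junk {F φ : ℝ → ℂ} (hF : ∀ c x, c ≤ x → F x = F c + ∫ t in Ioc c x, φ t ∂μ)
    (hbad : ¬ LocallyIntegrable φ μ) : ∃ t0 K, ∀ x, x ≠ t0 → F x = K := by
  simp only [LocallyIntegrable, not_forall] at hbad
  obtain ⟨t0, h0⟩ := hbad
  have H : ∀ c x, c < t0 → t0 < x → F x = F c := by
    intro c x hc hx
    have : ¬ IntegrableOn φ (Ioc c x) μ := fun h => h0 ⟨_, Ioc_mem_nhds hc hx, h⟩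
    rw [hF c x (hc.trans hx).le, integral_undef this, add_zero]
  refine ⟨t0, F (t0 - 1), fun x hx => ?_⟩
  rcases lt_or_gt_of_ne hx with h | h
  · rw [← H x (t0+1) h (by linarith), H (t0-1) (t0+1) (by linarith) (by linarith)]
  · exact H _ _ (by linarith) h

/-- Homogeneous solution pairs are regular. -/
lemma ts_reg [IsLocallyFiniteMeasure μ] {Φ Q u u1 : ℝ → ℂ} (hΦ : LocallyIntegrable Φ volume)
    (hQ : LocallyIntegrable Q μ)
    (h0 : ∀ c x, c ≤ x → u x = u c + ∫ t in Ioc c x, u1 t * Φ t)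
    (h1 : ∀ c x, c ≤ x → u1 x = u1 c + ∫ t in Ioc c x, Q t * u t ∂μ) :
    TsPr μ Φ u u1 (fun t => Q t * u t) := by
  have hl : LocallyIntegrable (fun t => Q t * u t) μ := by
    by_contra hb
    obtain ⟨t0, K, hK⟩ := ts_junk h1 hb
    have : LocallyIntegrable (fun t => u1 t * Φ t) volume := by
      refine (hΦ.smul K).congr ?_
      have : ∀ᵐ t : ℝ, t ≠ t0 := by simp [ae_iff]
      filter_upwards [this] with t ht
      simp [hK t ht]
    exact hb (hQ.mul_continuous (ts_prim_cont this (ts_sym h0)))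
  have hm := ts_prim_mul hΦ hl (ts_sym h1)
  exact ⟨hl, hm, ts_prim_cont hm (ts_sym h0), ts_sym h0, ts_sym h1⟩

lemma ts_reg' [IsLocallyFiniteMeasure μ] {Φ h u u1 : ℝ → ℂ} (hΦ : LocallyIntegrable Φ volume)
    (hl : LocallyIntegrable h μ)
    (h0 : ∀ c x, c ≤ x → u x = u c + ∫ t in Ioc c x, u1 t * Φ t)
    (h1 : ∀ c x, c ≤ x → u1 x = u1 c + ∫ t in Ioc c x, h t ∂μ) :
    TsPr μ Φ u u1 h := by
  have hm := ts_prim_mul hΦ hl (ts_sym h1)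
  exact ⟨hl, hm, ts_prim_cont hm (ts_sym h0), ts_sym h0, ts_sym h1⟩

end core

section exun
variable {μ : Measure ℝ}

lemma ts_pow0 {φ : ℝ → ℝ} (hφ : LocallyIntegrable φ volume) (c : ℝ) (n : ℕ) (a x : ℝ) :
    (∫ t in c..x, φ t)^(n+1) = (∫ t in c..a, φ t)^(n+1)
      + ∫ t in a..x, (n+1) * φ t * (∫ s in c..t, φ s)^n := by
  have hφc : LocallyIntegrable (fun t => (φ t : ℂ)) volume := by
    apply ts_li; intro a b _
    exact ((hφ.integrableOn_isCompact isCompact_Icc).mono_set Ioc_subset_Icc_self).ofReal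
  set Z : ℝ → ℂ := fun x => ∫ t in c..x, (φ t : ℂ) with hZ
  have hZr : ∀ x, Z x = ((∫ t in c..x, φ t : ℝ) : ℂ) := fun x => intervalIntegral.integral_ofReal
  have hZe : ∀ a x, Z x = Z a + ∫ t in a..x, (φ t : ℂ) := by
    intro a x
    simp only [hZ]
    rw [intervalIntegral.integral_add_adjacent_intervals] <;> exact ts_ii hφc _ _
  have hZc : Continuous Z := ts_prim_cont hφc hZe
  have main : ∀ n : ℕ, ∀ a x, Z x^(n+1) = Z a^(n+1) + ∫ t in a..x, ((n:ℂ)+1) * φ t * Z t^n := by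
    intro n
    induction n with
    | zero => intro a x; simpa using hZe a x
    | succ n ih =>
      intro a x
      have hl : LocallyIntegrable (fun t => ((n:ℂ)+1) * φ t * Z t^n) volume := by
        have := (hφc.mul_continuous (hZc.pow n)).smul ((n:ℂ)+1)
        refine this.congr (ae_of_all _ fun t => ?_)
        simp [mul_assoc]
      have := ts_ibp (μ := volume) (v := fun t => Z t^(n+1)) hφc hl hZe ih a x
      have e1 : ∫ t in a..x, Z t * (((n:ℂ)+1) * φ t * Z t^n) = ((n:ℂ)+1) * ∫ t in a..x, φ t * Z t^(n+1) := by
        rw [← intervalIntegral.integral_const_mul]; congr 1; ext t; ring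
      have e2 : ∫ t in a..x, Z t^(n+1) * φ t = ∫ t in a..x, φ t * Z t^(n+1) := by
        congr 1; ext t; ring
      have e3 : ∫ t in a..x, (((n+1:ℕ):ℂ)+1) * φ t * Z t^(n+1) = (((n+1:ℕ):ℂ)+1) * ∫ t in a..x, φ t * Z t^(n+1) := by
        rw [← intervalIntegral.integral_const_mul]; congr 1; ext t; ring
      rw [e1, e2] at this
      rw [e3]
      push_cast
      linear_combination this
  have := main n a x
  simp_rw [hZr] at this
  have e : ∫ t in a..x, ((n:ℂ)+1) * φ t * ((∫ s in c..t, φ s : ℝ) : ℂ)^n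
      = ((∫ t in a..x, ((n:ℝ)+1) * φ t * (∫ s in c..t, φ s)^n : ℝ) : ℂ) := by
    rw [← intervalIntegral.integral_ofReal]; congr 1; ext t; push_cast; ring
  rw [e] at this
  exact_mod_cast this

lemma ts_pow {φ : ℝ → ℝ} (hφ : LocallyIntegrable φ volume) (hpos : ∀ t, 0 ≤ φ t) (c : ℝ) (n : ℕ) (x : ℝ) :
    ∫ t in uIoc c x, φ t * (∫ s in uIoc c t, φ s)^n = (∫ t in uIoc c x, φ t)^(n+1) / (n+1) := by
  have h := ts_pow0 hφ c n c x
  have hn : (n:ℝ)+1 ≠ 0 := by positivity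
  rcases le_total c x with hcx | hcx
  · rw [intervalIntegral.integral_same, zero_pow (by simp), zero_add, intervalIntegral.integral_of_le hcx,
      intervalIntegral.integral_of_le hcx] at h
    rw [uIoc_of_le hcx, eq_div_iff hn, h, ← integral_mul_const]
    refine setIntegral_congr_fun measurableSet_Ioc fun t ht => ?_
    rw [uIoc_of_le ht.1.le, intervalIntegral.integral_of_le ht.1.le]; ring
  · rw [intervalIntegral.integral_same, zero_pow (by simp), zero_add, intervalIntegral.integral_of_ge hcx,
      intervalIntegral.integral_of_ge hcx] at h
    rw [uIoc_of_ge hcx, eq_div_iff hn, ← integral_mul_const]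
    have h2 : (∫ t in Ioc x c, φ t)^(n+1) = (-1)^(n+1) * (-(∫ t in Ioc x c, φ t))^(n+1) := by
      rw [← mul_pow]; ring
    rw [h2, h, mul_neg, ← neg_mul, ← integral_const_mul]
    refine setIntegral_congr_fun measurableSet_Ioc fun t ht => ?_
    rw [uIoc_of_ge ht.2, intervalIntegral.integral_of_ge ht.2, neg_pow, pow_succ]
    have : ((-1:ℝ)^n) * (-1)^n = 1 := by rw [← mul_pow]; norm_num
    linear_combination (-(n+1) * φ t * (∫ t in Ioc t c, φ t)^n) * this

lemma ts_uIoc_sub {c t x : ℝ} (h : t ∈ uIcc c x) : uIoc c t ⊆ uIoc c x := by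
  intro s hs
  rw [mem_uIoc] at *
  rw [mem_uIcc] at h
  grind

lemma ts_nint {f : ℝ → ℂ} (hf : LocallyIntegrable f μ) (a b : ℝ) :
    IntegrableOn (fun t => ‖f t‖) (uIoc a b) μ := (ts_uioc hf a b).norm

lemma ts_sint_mono {f : ℝ → ℂ} (hf : LocallyIntegrable f μ) {c t x : ℝ} (h : t ∈ uIcc c x) :
    ∫ s in uIoc c t, ‖f s‖ ∂μ ≤ ∫ s in uIoc c x, ‖f s‖ ∂μ :=
  setIntegral_mono_set (ts_nint hf c x) (ae_of_all _ fun _ => norm_nonneg _)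
    (ts_uIoc_sub h).eventuallyLE

/-- the Volterra operator -/
noncomputable def tsV (μ : Measure ℝ) (Φ Q : ℝ → ℂ) (c : ℝ) (w : ℝ → ℂ) (x : ℝ) : ℂ :=
  ∫ t in c..x, (∫ s in c..t, Q s * w s ∂μ) * Φ t

lemma ts_primM {h : ℝ → ℂ} (hh : LocallyIntegrable h μ) (c a x : ℝ) :
    (∫ t in c..x, h t ∂μ) = (∫ t in c..a, h t ∂μ) + ∫ t in a..x, h t ∂μ := by
  rw [intervalIntegral.integral_add_adjacent_intervals] <;> exact ts_ii hh _ _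

lemma ts_V_li [IsLocallyFiniteMeasure μ] {Φ Q w : ℝ → ℂ} (hΦ : LocallyIntegrable Φ volume)
    (hQ : LocallyIntegrable Q μ) (hw : Continuous w) (c : ℝ) :
    LocallyIntegrable (fun t => (∫ s in c..t, Q s * w s ∂μ) * Φ t) volume :=
  ts_prim_mul (h := fun s => Q s * w s) hΦ (hQ.mul_continuous hw)
    (fun a x => ts_primM (hQ.mul_continuous hw) c a x)

lemma ts_V_cont [IsLocallyFiniteMeasure μ] {Φ Q w : ℝ → ℂ} (hΦ : LocallyIntegrable Φ volume)
    (hQ : LocallyIntegrable Q μ) (hw : Continuous w) (c : ℝ) : Continuous (tsV μ Φ Q c w) :=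
  ts_prim_cont (ts_V_li hΦ hQ hw c) (fun a x => ts_primM (ts_V_li hΦ hQ hw c) c a x)

lemma ts_Vbound [IsLocallyFiniteMeasure μ] {Φ Q w : ℝ → ℂ} (hΦ : LocallyIntegrable Φ volume)
    (hQ : LocallyIntegrable Q μ) (hw : Continuous w) (c x0 M : ℝ) (hM : 0 ≤ M) (n : ℕ)
    (hb : ∀ t ∈ uIcc c x0, ‖w t‖ ≤ M * (∫ s in uIoc c t, ‖Φ s‖)^n / n.factorial) :
    ∀ x ∈ uIcc c x0, ‖tsV μ Φ Q c w x‖ ≤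
      M * (∫ s in uIoc c x0, ‖Q s‖ ∂μ) * (∫ s in uIoc c x, ‖Φ s‖)^(n+1) / (n+1).factorial := by
  intro x hx
  set C := ∫ s in uIoc c x0, ‖Q s‖ ∂μ
  set P : ℝ → ℝ := fun t => ∫ s in uIoc c t, ‖Φ s‖ with hP
  have hC : 0 ≤ C := integral_nonneg fun _ => norm_nonneg _
  have hP0 : ∀ t, 0 ≤ P t := fun t => integral_nonneg fun _ => norm_nonneg _
  have hin : ∀ t ∈ uIcc c x0, ‖∫ s in c..t, Q s * w s ∂μ‖ ≤ M * C * (P t)^n / n.factorial := by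
    intro t ht
    calc ‖∫ s in c..t, Q s * w s ∂μ‖ ≤ ∫ s in uIoc c t, ‖Q s * w s‖ ∂μ :=
          intervalIntegral.norm_integral_le_integral_norm_uIoc
      _ ≤ ∫ s in uIoc c t, ‖Q s‖ * (M * (P t)^n / n.factorial) ∂μ := by
          refine setIntegral_mono_on (ts_nint (hQ.mul_continuous hw) _ _)
            ((ts_nint hQ _ _).mul_const _) measurableSet_uIoc fun s hs => ?_
          rw [norm_mul]
          refine mul_le_mul_of_nonneg_left ?_ (norm_nonneg _)
          have hst : s ∈ uIcc c t := uIoc_subset_uIcc hs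
          refine (hb s (uIcc_subset_uIcc_left ht hst)).trans ?_
          have := ts_sint_mono hΦ hst
          gcongr
      _ = (∫ s in uIoc c t, ‖Q s‖ ∂μ) * (M * (P t)^n / n.factorial) := by
          rw [integral_mul_const]
      _ ≤ C * (M * (P t)^n / n.factorial) := by
          refine mul_le_mul_of_nonneg_right (ts_sint_mono hQ ht) ?_
          have := hP0 t; positivity
      _ = _ := by ring
  have hPc : LocallyIntegrable (fun t => ‖Φ t‖) volume := fun x => (hΦ x).norm
  have hPint : IntegrableOn (fun t => ‖Φ t‖ * (P t)^n) (uIoc c x) volume := by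
    have hPcont : Continuous P := by
      have : P = fun t => |∫ s in c..t, ‖Φ s‖| := by
        ext t
        rw [intervalIntegral.abs_integral_eq_abs_integral_uIoc, abs_of_nonneg (hP0 t)]
      rw [this]
      refine (intervalIntegral.continuous_primitive (fun a b => ?_) c).abs
      exact (ts_ii hΦ a b).norm
    exact ((hPc.mul_continuous (hPcont.pow n)).integrableOn_isCompact isCompact_uIcc).mono_set
      uIoc_subset_uIcc
  calc ‖tsV μ Φ Q c w x‖ ≤ ∫ t in uIoc c x, ‖(∫ s in c..t, Q s * w s ∂μ) * Φ t‖ :=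
        intervalIntegral.norm_integral_le_integral_norm_uIoc
    _ ≤ ∫ t in uIoc c x, M * C / n.factorial * (‖Φ t‖ * (P t)^n) := by
        refine setIntegral_mono_on (ts_nint (ts_V_li hΦ hQ hw c) _ _)
            (hPint.const_mul _) measurableSet_uIoc fun s hs => ?_
        rw [norm_mul]
        have := hin s (uIcc_subset_uIcc_left hx (uIoc_subset_uIcc hs))
        refine (mul_le_mul_of_nonneg_right this (norm_nonneg _)).trans_eq ?_
        ring
    _ = M * C / n.factorial * ((P x)^(n+1) / (n+1)) := by
        rw [integral_const_mul, ts_pow hPc (fun _ => norm_nonneg _)]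
    _ = _ := by
        rw [Nat.factorial_succ]; push_cast
        have : (n.factorial : ℝ) ≠ 0 := by positivity
        have : (n:ℝ)+1 ≠ 0 := by positivity
        simp only [hP]; field_simp

lemma ts_iter_bound [IsLocallyFiniteMeasure μ] {Φ Q : ℝ → ℂ} (hΦ : LocallyIntegrable Φ volume)
    (hQ : LocallyIntegrable Q μ) (w : ℕ → ℝ → ℂ) (hw : ∀ n, Continuous (w n)) (c x0 : ℝ)
    (hs : ∀ n, ∀ x ∈ uIcc c x0, w (n+1) x = tsV μ Φ Q c (w n) x) :
    ∃ M, 0 ≤ M ∧ ∀ n, ∀ x ∈ uIcc c x0,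
      ‖w n x‖ ≤ M * ((∫ s in uIoc c x0, ‖Q s‖ ∂μ) * (∫ s in uIoc c x0, ‖Φ s‖))^n / n.factorial := by
  obtain ⟨M, hM⟩ := isCompact_uIcc.exists_bound_of_continuousOn (hw 0).continuousOn (s := uIcc c x0)
  have hM0 : 0 ≤ M := (norm_nonneg _).trans (hM c left_mem_uIcc)
  refine ⟨M, hM0, ?_⟩
  set C := ∫ s in uIoc c x0, ‖Q s‖ ∂μ
  have hC : 0 ≤ C := integral_nonneg fun _ => norm_nonneg _
  have key : ∀ n, ∀ x ∈ uIcc c x0, ‖w n x‖ ≤ M * C^n * (∫ s in uIoc c x, ‖Φ s‖)^n / n.factorial := by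
    intro n
    induction n with
    | zero => intro x hx; simpa using hM x hx
    | succ n ih =>
      intro x hx
      rw [hs n x hx]
      refine (ts_Vbound hΦ hQ (hw n) c x0 (M * C^n) (by positivity) n ih x hx).trans_eq ?_
      ring
  intro n x hx
  refine (key n x hx).trans ?_
  rw [mul_pow, mul_assoc M]
  have := ts_sint_mono hΦ hx
  have h0 : 0 ≤ ∫ s in uIoc c x, ‖Φ s‖ := integral_nonneg fun _ => norm_nonneg _
  gcongr

/-- uniqueness -/
lemma ts_unique [IsLocallyFiniteMeasure μ] {Φ Q u u1 h : ℝ → ℂ} (hΦ : LocallyIntegrable Φ volume)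
    (hQ : LocallyIntegrable Q μ) (hu : TsPr μ Φ u u1 h) (c x0 : ℝ)
    (hh : ∀ t ∈ uIoc c x0, h t = Q t * u t) (h0 : u c = 0) (h1 : u1 c = 0) :
    u x0 = 0 ∧ u1 x0 = 0 := by
  have hu1 : ∀ x ∈ uIcc c x0, u1 x = ∫ s in c..x, Q s * u s ∂μ := by
    intro x hx
    rw [hu.e1 c x, h1, zero_add]
    refine intervalIntegral.integral_congr_ae (ae_of_all _ fun t ht => ?_)
    exact hh t (ts_uIoc_sub hx ht)
  have hV : ∀ x ∈ uIcc c x0, u x = tsV μ Φ Q c u x := by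
    intro x hx
    rw [hu.e0 c x, h0, zero_add]
    refine intervalIntegral.integral_congr_ae (ae_of_all _ fun t ht => ?_)
    rw [hu1 t (uIoc_subset_uIcc (ts_uIoc_sub hx ht))]
  obtain ⟨M, hM0, hM⟩ := ts_iter_bound hΦ hQ (fun _ => u) (fun _ => hu.hc) c x0 (fun _ => hV)
  have hz : ∀ x ∈ uIcc c x0, u x = 0 := by
    intro x hx
    set D := (∫ s in uIoc c x0, ‖Q s‖ ∂μ) * (∫ s in uIoc c x0, ‖Φ s‖)
    have ht : Tendsto (fun n : ℕ => M * D^n / n.factorial) atTop (nhds 0) := by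
      have := (FloorSemiring.tendsto_pow_div_factorial_atTop D).const_mul M
      simpa [mul_div_assoc] using this
    have := ge_of_tendsto' ht (fun n => hM n x hx)
    exact norm_le_zero_iff.1 this
  refine ⟨hz _ right_mem_uIcc, ?_⟩
  rw [hu1 _ right_mem_uIcc]
  rw [intervalIntegral.integral_congr_ae (g := fun _ => 0), intervalIntegral.integral_zero]
  refine ae_of_all _ fun t ht => ?_
  rw [hz t (uIoc_subset_uIcc ht), mul_zero]

lemma ts_exists [IsLocallyFiniteMeasure μ] {Φ Q G : ℝ → ℂ} (hΦ : LocallyIntegrable Φ volume)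
    (hQ : LocallyIntegrable Q μ) (hG : LocallyIntegrable G μ) (c : ℝ) (α β : ℂ) :
    ∃ u u1, TsPr μ Φ u u1 (fun t => Q t * u t + G t) ∧ u c = α ∧ u1 c = β := by
  set k : ℝ → ℂ := fun t => β + ∫ s in c..t, G s ∂μ with hk
  have hke : ∀ a x, k x = k a + ∫ s in a..x, G s ∂μ := by
    intro a x; simp only [hk]; rw [ts_primM hG c a x]; ring
  have hkl : LocallyIntegrable (fun t => k t * Φ t) volume := ts_prim_mul hΦ hG hke
  set w0 : ℝ → ℂ := fun x => α + ∫ t in c..x, k t * Φ t with hw0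
  have hw0c : Continuous w0 := by
    refine ts_prim_cont hkl fun a x => ?_
    simp only [hw0]; rw [ts_primM hkl c a x]; ring
  set w : ℕ → ℝ → ℂ := fun n => (tsV μ Φ Q c)^[n] w0 with hw
  have hws : ∀ n, w (n+1) = tsV μ Φ Q c (w n) := fun n => Function.iterate_succ_apply' _ _ _
  have hwc : ∀ n, Continuous (w n) := by
    intro n
    induction n with
    | zero => exact hw0c
    | succ n ih => rw [hws]; exact ts_V_cont hΦ hQ ih c
  have hbd : ∀ x0, ∃ b : ℕ → ℝ, Summable b ∧ ∀ n, ∀ x ∈ uIcc c x0, ‖w n x‖ ≤ b n := by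
    intro x0
    obtain ⟨M, hM0, hM⟩ := ts_iter_bound hΦ hQ w hwc c x0 (fun n x _ => by rw [hws])
    refine ⟨_, ?_, hM⟩
    simp_rw [mul_div_assoc]
    exact (Real.summable_pow_div_factorial _).mul_left M
  set u : ℝ → ℂ := fun x => ∑' n, w n x with hu
  have huc0 : ∀ x0, ContinuousOn u (uIcc c x0) := by
    intro x0
    obtain ⟨b, hb, hb'⟩ := hbd x0
    exact continuousOn_tsum (fun n => (hwc n).continuousOn) hb hb'
  have huc : Continuous u := by
    rw [continuous_iff_continuousAt]
    intro x
    have hmem : uIcc c (x+1) ∪ uIcc c (x-1) ∈ nhds x := by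
      filter_upwards [Icc_mem_nhds (show x - 1 < x by linarith) (show x < x + 1 by linarith)] with y hy
      rcases le_total c y with h | h
      · left; rw [mem_uIcc]; left; exact ⟨h, hy.2⟩
      · right; rw [mem_uIcc]; right; exact ⟨hy.1, h⟩
    exact ((huc0 (x+1)).union_of_isClosed (huc0 (x-1)) isClosed_Icc isClosed_Icc).continuousAt hmem
  have hVu : ∀ x, HasSum (fun n => tsV μ Φ Q c (w n) x) (tsV μ Φ Q c u x) := by
    intro x
    obtain ⟨b, hb, hb'⟩ := hbd x
    have hb0 : ∀ n, 0 ≤ b n := fun n => (norm_nonneg _).trans (hb' n c left_mem_uIcc)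
    have hin : ∀ t ∈ uIcc c x, HasSum (fun n => ∫ s in c..t, Q s * w n s ∂μ) (∫ s in c..t, Q s * u s ∂μ) := by
      intro t ht
      refine intervalIntegral.hasSum_integral_of_dominated_convergence (fun n s => ‖Q s‖ * b n) ?_ ?_ ?_ ?_ ?_
      · intro n; exact (ts_uioc (hQ.mul_continuous (hwc n)) c t).aestronglyMeasurable
      · intro n; refine ae_of_all _ fun s hs => ?_
        rw [norm_mul]
        exact mul_le_mul_of_nonneg_left (hb' n s (uIoc_subset_uIcc (ts_uIoc_sub ht hs))) (norm_nonneg _)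
      · exact ae_of_all _ fun s hs => hb.mul_left _
      · simp_rw [tsum_mul_left]; exact (ts_ii hQ c t).norm.mul_const _
      · refine ae_of_all _ fun s hs => ?_
        exact (Summable.of_norm_bounded hb
          (fun n => hb' n s (uIoc_subset_uIcc (ts_uIoc_sub ht hs)))).hasSum.mul_left _
    set C := ∫ s in uIoc c x, ‖Q s‖ ∂μ
    refine intervalIntegral.hasSum_integral_of_dominated_convergence (fun n t => ‖Φ t‖ * (C * b n)) ?_ ?_ ?_ ?_ ?_
    · intro n; exact (ts_uioc (ts_V_li hΦ hQ (hwc n) c) c x).aestronglyMeasurable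
    · intro n; refine ae_of_all _ fun t ht => ?_
      rw [norm_mul, mul_comm]
      refine mul_le_mul_of_nonneg_left ?_ (norm_nonneg _)
      refine intervalIntegral.norm_integral_le_integral_norm_uIoc.trans ?_
      have ht' := uIoc_subset_uIcc ht
      calc ∫ s in uIoc c t, ‖Q s * w n s‖ ∂μ ≤ ∫ s in uIoc c t, ‖Q s‖ * b n ∂μ := by
            refine setIntegral_mono_on (ts_nint (hQ.mul_continuous (hwc n)) _ _)
              ((ts_nint hQ _ _).mul_const _) measurableSet_uIoc fun s hs => ?_
            rw [norm_mul]
            exact mul_le_mul_of_nonneg_left (hb' n s (uIoc_subset_uIcc (ts_uIoc_sub ht' hs))) (norm_nonneg _)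
        _ = (∫ s in uIoc c t, ‖Q s‖ ∂μ) * b n := by rw [integral_mul_const]
        _ ≤ _ := mul_le_mul_of_nonneg_right (ts_sint_mono hQ ht') (hb0 n)
    · exact ae_of_all _ fun s hs => (hb.mul_left _).mul_left _
    · simp_rw [tsum_mul_left]; exact (ts_ii hΦ c x).norm.mul_const _
    · exact ae_of_all _ fun t ht => (hin t (uIoc_subset_uIcc ht)).mul_right _
  have hfix : ∀ x, u x = w0 x + tsV μ Φ Q c u x := by
    intro x
    obtain ⟨b, hb, hb'⟩ := hbd x
    have hs : Summable (fun n => w n x) := Summable.of_norm_bounded hb (fun n => hb' n x right_mem_uIcc)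
    have : u x = w 0 x + ∑' n, w (n+1) x := hs.tsum_eq_zero_add
    rw [this]
    simp_rw [hws]
    rw [(hVu x).tsum_eq]
    rfl
  have hQu := hQ.mul_continuous huc
  have hd : LocallyIntegrable (fun t => Q t * u t + G t) μ := hQu.add hG
  set u1 : ℝ → ℂ := fun t => β + ∫ s in c..t, (Q s * u s + G s) ∂μ with hu1
  have hu1e : ∀ a x, u1 x = u1 a + ∫ s in a..x, (Q s * u s + G s) ∂μ := by
    intro a x; simp only [hu1]; rw [ts_primM hd c a x]; ring
  have hl : LocallyIntegrable (fun t => u1 t * Φ t) volume := ts_prim_mul hΦ hd hu1e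
  have hue : ∀ x, u x = α + ∫ t in c..x, u1 t * Φ t := by
    intro x
    rw [hfix x, hw0]
    simp only [tsV]
    rw [add_assoc, ← intervalIntegral.integral_add (ts_ii hkl c x) (ts_ii (ts_V_li hΦ hQ huc c) c x)]
    congr 2; ext t
    simp only [hu1, hk]
    rw [intervalIntegral.integral_add (ts_ii hQu c t) (ts_ii hG c t)]
    ring
  refine ⟨u, u1, ⟨hd, hl, huc, ?_, hu1e⟩, ?_, ?_⟩
  · intro a x; rw [hue x, hue a, ts_primM hl c a x]; ring
  · rw [hue]; simp
  · simp [hu1]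

end exun

section crit
variable {μ : Measure ℝ}

lemma TsPr.add {Φ u u1 h v v1 k : ℝ → ℂ} (hu : TsPr μ Φ u u1 h) (hv : TsPr μ Φ v v1 k) :
    TsPr μ Φ (fun t => u t + v t) (fun t => u1 t + v1 t) (fun t => h t + k t) := by
  have hl : LocallyIntegrable (fun t => (u1 t + v1 t) * Φ t) volume := by
    refine (hu.hphi.add hv.hphi).congr (ae_of_all _ fun t => ?_)
    simp only [Pi.add_apply]; ring
  refine ⟨hu.hh.add hv.hh, hl, hu.hc.add hv.hc, ?_, ?_⟩
  · intro c x
    simp_rw [add_mul]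
    rw [intervalIntegral.integral_add (ts_ii hu.hphi c x) (ts_ii hv.hphi c x), hu.e0 c x, hv.e0 c x]; ring
  · intro c x
    rw [intervalIntegral.integral_add (ts_ii hu.hh c x) (ts_ii hv.hh c x), hu.e1 c x, hv.e1 c x]; ring

lemma TsPr.smul {Φ u u1 h : ℝ → ℂ} (hu : TsPr μ Φ u u1 h) (z : ℂ) :
    TsPr μ Φ (fun t => z * u t) (fun t => z * u1 t) (fun t => z * h t) := by
  refine ⟨hu.hh.smul z, ?_, continuous_const.mul hu.hc, ?_, ?_⟩
  · refine (hu.hphi.smul z).congr (ae_of_all _ fun t => ?_)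
    simp [mul_assoc]
  · intro c x
    simp_rw [mul_assoc]
    rw [intervalIntegral.integral_const_mul, hu.e0 c x]; ring
  · intro c x
    rw [intervalIntegral.integral_const_mul, hu.e1 c x]; ring

lemma ts_ii_conj {f : ℝ → ℂ} (a b : ℝ) :
    ∫ t in a..b, (starRingEnd ℂ) (f t) ∂μ = (starRingEnd ℂ) (∫ t in a..b, f t ∂μ) := by
  simp only [intervalIntegral, map_sub, integral_conj]

lemma ts_li_conj {f : ℝ → ℂ} (hf : LocallyIntegrable f μ) :
    LocallyIntegrable (fun t => (starRingEnd ℂ) (f t)) μ := by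
  apply ts_li; intro a b _
  have := ts_ioc hf a b
  exact (Complex.conjCLE.toContinuousLinearMap.integrable_comp this)

lemma TsPr.conj {Φ u u1 h : ℝ → ℂ} (hu : TsPr μ Φ u u1 h) (hΦ : ∀ t, (starRingEnd ℂ) (Φ t) = Φ t) :
    TsPr μ Φ (fun t => (starRingEnd ℂ) (u t)) (fun t => (starRingEnd ℂ) (u1 t))
      (fun t => (starRingEnd ℂ) (h t)) := by
  have e : (fun t => (starRingEnd ℂ) (u1 t) * Φ t) = fun t => (starRingEnd ℂ) (u1 t * Φ t) := by
    ext t; rw [map_mul, hΦ]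
  refine ⟨ts_li_conj hu.hh, ?_, Complex.continuous_conj.comp hu.hc, ?_, ?_⟩
  · rw [e]; exact ts_li_conj hu.hphi
  · intro c x
    rw [e, ts_ii_conj, hu.e0 c x, map_add]
  · intro c x
    rw [ts_ii_conj, hu.e1 c x, map_add]

lemma ts_ofReal_li {r : ℝ → ℝ} (hr : LocallyIntegrable r μ) :
    LocallyIntegrable (fun t => (r t : ℂ)) μ := by
  apply ts_li; intro a b _
  exact ((hr.integrableOn_isCompact isCompact_Icc).mono_set Ioc_subset_Icc_self).ofReal

lemma ts_sq_int {r : ℝ → ℝ} (hr : LocallyIntegrable r μ) {u : ℝ → ℂ} (hu : Continuous u) (a b : ℝ) :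
    IntegrableOn (fun t => ‖u t‖^2 * r t) (uIoc a b) μ := by
  have : LocallyIntegrable (fun t => ‖u t‖^2 * r t) μ := hr.continuous_mul (by fun_prop)
  exact (this.integrableOn_isCompact isCompact_uIcc).mono_set uIoc_subset_uIcc

/-- The key estimate for `W(u,f)`. -/
lemma ts_West [IsLocallyFiniteMeasure μ] {Φ u u1 f f1 h : ℝ → ℂ} {r q : ℝ → ℝ} {z : ℂ}
    (hr : LocallyIntegrable r μ) (hrpos : ∀ᵐ t ∂μ, 0 < r t)
    (hu : TsPr μ Φ u u1 (fun t => ((q t : ℂ) - z * r t) * u t))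
    (hf : TsPr μ Φ f f1 h) {D : Set ℝ} {c x : ℝ} (hD : uIoc c x ⊆ D) (hDm : MeasurableSet D)
    {ε : ℝ} (hε : 0 < ε)
    (hk : IntegrableOn (fun t => ‖z * f t - ellApply r q h f t‖^2 * r t) D μ)
    (hke : ∫ t in D, ‖z * f t - ellApply r q h f t‖^2 * r t ∂μ ≤ ε^2) :
    ∀ t ∈ uIoc c x, ‖Wr u u1 f f1 t‖ ≤ ‖Wr u u1 f f1 c‖
      + ε * Real.sqrt ((∫ t in uIoc c x, ‖u t‖^2 * r t ∂μ) + 1) := by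
  intro t ht
  have hrD : ∀ᵐ t ∂(μ.restrict D), 0 ≤ ‖z * f t - ellApply r q h f t‖^2 * r t := by
    filter_upwards [ae_restrict_of_ae hrpos] with t ht
    positivity
  have hrS : ∀ᵐ t ∂(μ.restrict (uIoc c x)), 0 ≤ ‖u t‖^2 * r t := by
    filter_upwards [ae_restrict_of_ae hrpos] with t ht
    positivity
  set U := ∫ t in uIoc c x, ‖u t‖^2 * r t ∂μ with hU
  have hU0 : 0 ≤ U := integral_nonneg_of_ae hrS
  set N := Real.sqrt (U+1) with hN
  have hN0 : 0 < N := Real.sqrt_pos.2 (by linarith)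
  have hN2 : N^2 = U + 1 := Real.sq_sqrt (by linarith)
  rw [ts_lagrange hu hf c t]
  refine (norm_add_le _ _).trans (add_le_add le_rfl ?_)
  have hli : LocallyIntegrable (fun t => u t * h t - ((q t : ℂ) - z * r t) * u t * f t) μ :=
    (hf.hh.continuous_mul hu.hc).sub (hu.hh.mul_continuous hf.hc)
  have i1 := (ts_sq_int hr hu.hc c x).const_mul (ε / (2*N))
  have i2 := (hk.mono_set hD).const_mul (N / (2*ε))
  calc ‖∫ t in c..t, (u t * h t - ((q t : ℂ) - z * r t) * u t * f t) ∂μ‖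
      ≤ ∫ t in uIoc c t, ‖u t * h t - ((q t : ℂ) - z * r t) * u t * f t‖ ∂μ :=
        intervalIntegral.norm_integral_le_integral_norm_uIoc
    _ ≤ ∫ t in uIoc c x, ‖u t * h t - ((q t : ℂ) - z * r t) * u t * f t‖ ∂μ :=
        ts_sint_mono hli (uIoc_subset_uIcc ht)
    _ ≤ ∫ t in uIoc c x, (ε / (2*N) * (‖u t‖^2 * r t)
          + N / (2*ε) * (‖z * f t - ellApply r q h f t‖^2 * r t)) ∂μ := by
        refine integral_mono_ae (ts_nint hli c x) (i1.add i2) ?_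
        filter_upwards [ae_restrict_of_ae hrpos] with t ht
        have hrc : (r t : ℂ) ≠ 0 := by exact_mod_cast ht.ne'
        have e : u t * h t - ((q t : ℂ) - z * r t) * u t * f t
            = r t * (u t * (z * f t - ellApply r q h f t)) := by
          unfold ellApply; field_simp; ring
        rw [e, norm_mul, norm_mul, Complex.norm_real, Real.norm_of_nonneg ht.le]
        set a := ‖u t‖
        set b := ‖z * f t - ellApply r q h f t‖
        have h2 : ε / (2*N) * (a^2 * r t) + N / (2*ε) * (b^2 * r t) - r t * (a * b)
            = r t / (2 * N * ε) * (ε * a - N * b)^2 := by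
          field_simp; ring
        have h3 : 0 ≤ r t / (2 * N * ε) * (ε * a - N * b)^2 := by positivity
        linarith
    _ = ε / (2*N) * U + N / (2*ε) * ∫ t in uIoc c x, ‖z * f t - ellApply r q h f t‖^2 * r t ∂μ := by
        rw [integral_add i1 i2, integral_const_mul, integral_const_mul]
    _ ≤ ε / (2*N) * N^2 + N / (2*ε) * ε^2 := by
        refine add_le_add (mul_le_mul_of_nonneg_left (by linarith) (by positivity))
          (mul_le_mul_of_nonneg_left ?_ (by positivity))
        exact (setIntegral_mono_set hk hrD hD.eventuallyLE).trans hke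
    _ = ε * N := by field_simp; ring

lemma ts_crit [IsLocallyFiniteMeasure μ] {Φ u u1 f f1 h g g1 k : ℝ → ℂ} {r q : ℝ → ℝ} {z : ℂ}
    (hr : LocallyIntegrable r μ) (hrpos : ∀ᵐ t ∂μ, 0 < r t)
    (hu : TsPr μ Φ u u1 (fun t => ((q t : ℂ) - z * r t) * u t))
    (hf : TsPr μ Φ f f1 h) (hg : TsPr μ Φ g g1 k) {D : Set ℝ} {c : ℝ} (hDm : MeasurableSet D)
    (hD : ∀ x ∈ D, uIoc c x ⊆ D)
    {ε δ G : ℝ} (hε : 0 < ε) (hδ : 0 < δ) (hW : ∀ t ∈ D, δ ≤ ‖Wr f f1 g g1 t‖)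
    (hfi : Integrable (fun t => ‖f t‖^2 * r t) μ) (hgi : Integrable (fun t => ‖g t‖^2 * r t) μ)
    (hG : (∫ t, ‖f t‖^2 * r t ∂μ) + ∫ t, ‖g t‖^2 * r t ∂μ ≤ G)
    (hsm : 8 * G * ε^2 ≤ δ^2)
    (hk : IntegrableOn (fun t => ‖z * f t - ellApply r q h f t‖^2 * r t) D μ)
    (hke : ∫ t in D, ‖z * f t - ellApply r q h f t‖^2 * r t ∂μ ≤ ε^2)
    (hk' : IntegrableOn (fun t => ‖z * g t - ellApply r q k g t‖^2 * r t) D μ)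
    (hke' : ∫ t in D, ‖z * g t - ellApply r q k g t‖^2 * r t ∂μ ≤ ε^2) :
    ∃ M, ∀ x ∈ D, ∫ t in uIoc c x, ‖u t‖^2 * r t ∂μ ≤ M := by
  set A := ‖Wr u u1 f f1 c‖ + ‖Wr u u1 g g1 c‖ with hA
  have hA0 : 0 ≤ A := by positivity
  refine ⟨8 * G * A^2 / δ^2 + 1, fun x hx => ?_⟩
  have e1 := ts_West hr hrpos hu hf (hD x hx) hDm hε hk hke
  have e2 := ts_West hr hrpos hu hg (hD x hx) hDm hε hk' hke'
  have hrS : ∀ᵐ t ∂(μ.restrict (uIoc c x)), 0 ≤ ‖u t‖^2 * r t := by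
    filter_upwards [ae_restrict_of_ae hrpos] with t ht
    positivity
  set U := ∫ t in uIoc c x, ‖u t‖^2 * r t ∂μ with hU
  have hU0 : 0 ≤ U := integral_nonneg_of_ae hrS
  set N := Real.sqrt (U+1) with hN
  have hN2 : N^2 = U + 1 := Real.sq_sqrt (by linarith)
  have hN0 : 0 ≤ N := Real.sqrt_nonneg _
  have hpt : ∀ t ∈ uIoc c x, δ^2 * ‖u t‖^2 ≤ 2 * (A + ε * N)^2 * (‖f t‖^2 + ‖g t‖^2) := by
    intro t ht
    have h1 : ‖Wr u u1 f f1 t‖ ≤ A + ε * N := by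
      have := e1 t ht; have := norm_nonneg (Wr u u1 g g1 c); linarith
    have h2 : ‖Wr u u1 g g1 t‖ ≤ A + ε * N := by
      have := e2 t ht; have := norm_nonneg (Wr u u1 f f1 c); linarith
    have h3 : u t * Wr f f1 g g1 t = f t * Wr u u1 g g1 t - g t * Wr u u1 f f1 t := by
      unfold Wr; ring
    have h4 : ‖u t‖ * ‖Wr f f1 g g1 t‖ ≤ ‖f t‖ * ‖Wr u u1 g g1 t‖ + ‖g t‖ * ‖Wr u u1 f f1 t‖ := by
      rw [← norm_mul, h3, ← norm_mul, ← norm_mul]; exact norm_sub_le _ _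
    have h5 : ‖u t‖ * δ ≤ (‖f t‖ + ‖g t‖) * (A + ε * N) := by
      have a1 := mul_le_mul_of_nonneg_left (hW t (hD x hx ht)) (norm_nonneg (u t))
      have a2 := mul_le_mul_of_nonneg_left h2 (norm_nonneg (f t))
      have a3 := mul_le_mul_of_nonneg_left h1 (norm_nonneg (g t))
      linarith
    have h6 := pow_le_pow_left₀ (by positivity) h5 2
    have h7 : (‖f t‖ + ‖g t‖)^2 ≤ 2 * (‖f t‖^2 + ‖g t‖^2) := by nlinarith [sq_nonneg (‖f t‖ - ‖g t‖)]
    have h8 := mul_le_mul_of_nonneg_right h7 (sq_nonneg (A + ε * N))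
    nlinarith
  have hint : δ^2 * U ≤ 2 * (A + ε * N)^2 * G := by
    calc δ^2 * U = ∫ t in uIoc c x, δ^2 * (‖u t‖^2 * r t) ∂μ := by rw [integral_const_mul]
      _ ≤ ∫ t in uIoc c x, 2 * (A + ε * N)^2 * (‖f t‖^2 * r t + ‖g t‖^2 * r t) ∂μ := by
        refine integral_mono_ae ((ts_sq_int hr hu.hc c x).const_mul _)
          (((hfi.add hgi).integrableOn).const_mul _) ?_
        filter_upwards [ae_restrict_of_ae hrpos, ae_restrict_mem measurableSet_uIoc] with t ht ht'
        have := mul_le_mul_of_nonneg_right (hpt t ht') ht.le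
        linarith
      _ = 2 * (A + ε * N)^2 * ∫ t in uIoc c x, (‖f t‖^2 * r t + ‖g t‖^2 * r t) ∂μ := by
        rw [integral_const_mul]
      _ ≤ 2 * (A + ε * N)^2 * G := by
        refine mul_le_mul_of_nonneg_left ?_ (by positivity)
        refine le_trans ?_ hG
        rw [← integral_add hfi hgi]
        refine setIntegral_le_integral (hfi.add hgi) ?_
        filter_upwards [hrpos] with t ht
        simp only [Pi.zero_apply]; positivity
  have hG0 : 0 ≤ G := by
    refine le_trans ?_ hG
    have n1 : 0 ≤ ∫ t, ‖f t‖^2 * r t ∂μ := integral_nonneg_of_ae (by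
      filter_upwards [hrpos] with t ht
      simp only [Pi.zero_apply]; positivity)
    have n2 : 0 ≤ ∫ t, ‖g t‖^2 * r t ∂μ := integral_nonneg_of_ae (by
      filter_upwards [hrpos] with t ht
      simp only [Pi.zero_apply]; positivity)
    linarith
  have h9 : (A + ε * N)^2 ≤ 2 * A^2 + 2 * ε^2 * N^2 := by nlinarith [sq_nonneg (A - ε * N)]
  have h10 : δ^2 * U ≤ 4 * G * A^2 + 4 * G * ε^2 * N^2 := by
    have := mul_le_mul_of_nonneg_left h9 hG0
    nlinarith
  have h11 : 4 * G * ε^2 * N^2 ≤ δ^2 / 2 * (U+1) := by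
    rw [← hN2]
    have := mul_le_mul_of_nonneg_right hsm (sq_nonneg N)
    nlinarith
  have h12 : U * δ^2 ≤ 8 * G * A^2 + δ^2 := by nlinarith
  have hδ2 : 0 < δ^2 := by positivity
  rw [show 8 * G * A^2 / δ^2 + 1 = (8 * G * A^2 + δ^2) / δ^2 by field_simp, le_div_iff₀ hδ2]
  exact h12

/-- Naimark patching. -/
lemma ts_patch [IsLocallyFiniteMeasure μ] {Φ u u1 Q : ℝ → ℂ} {r : ℝ → ℝ}
    (hΦ : LocallyIntegrable Φ volume) (hQ : LocallyIntegrable Q μ)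
    (hr : LocallyIntegrable r μ) (hrpos : ∀ᵐ t ∂μ, 0 < r t)
    (hu : TsPr μ Φ u u1 (fun t => Q t * u t)) (α β : ℝ)
    (hnd : ∀ v v1, TsPr μ Φ v v1 (fun t => Q t * v t) → (∀ᵐ t ∂μ, t ∈ uIoc α β → v t = 0) →
      v β = 0 ∧ v1 β = 0) :
    ∃ f f1 g, Continuous g ∧
      TsPr μ Φ f f1 (fun t => Q t * f t + (uIoc α β).indicator (fun t => - (r t : ℂ) * g t) t) ∧
      f α = u α ∧ f1 α = u1 α ∧ f β = 0 ∧ f1 β = 0 := by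
  let p : Submodule ℂ (ℂ × ℂ) :=
    { carrier := {y | ∃ w w1 g, Continuous g ∧
        TsPr μ Φ w w1 (fun t => Q t * w t + (uIoc α β).indicator (fun t => - (r t : ℂ) * g t) t) ∧
        w α = 0 ∧ w1 α = 0 ∧ w β = y.1 ∧ w1 β = y.2}
      add_mem' := by
        rintro x y ⟨w, w1, g, hg, hw, h1, h2, h3, h4⟩ ⟨w', w1', g', hg', hw', h1', h2', h3', h4'⟩
        refine ⟨fun t => w t + w' t, fun t => w1 t + w1' t, fun t => g t + g' t, hg.add hg', ?_, ?_, ?_, ?_, ?_⟩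
        · convert hw.add hw' using 1
          ext t
          by_cases ht : t ∈ uIoc α β <;> simp [ht] <;> ring
        all_goals simp [*]
      zero_mem' := by
        refine ⟨fun _ => 0, fun _ => 0, fun _ => 0, continuous_const, ?_, rfl, rfl, rfl, rfl⟩
        convert hu.smul 0 using 1 <;> ext t <;> simp
      smul_mem' := by
        rintro z x ⟨w, w1, g, hg, hw, h1, h2, h3, h4⟩
        refine ⟨fun t => z * w t, fun t => z * w1 t, fun t => z * g t, continuous_const.mul hg, ?_, ?_, ?_, ?_, ?_⟩
        · convert hw.smul z using 1
          ext t
          by_cases ht : t ∈ uIoc α β <;> simp [ht] <;> ring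
        all_goals simp [*] }
  have hp : p = ⊤ := by
    by_contra hne
    obtain ⟨φ, hφ0, hφ⟩ := p.exists_le_ker_of_lt_top (lt_top_iff_ne_top.2 hne)
    have hφe : ∀ a b : ℂ, φ (a, b) = a * φ (1, 0) + b * φ (0, 1) := by
      intro a b
      rw [← smul_eq_mul, ← smul_eq_mul, ← map_smul, ← map_smul, ← map_add]
      simp
    obtain ⟨v, v1, hv, hv0, hv1⟩ := ts_exists hΦ hQ (locallyIntegrable_zero : LocallyIntegrable (fun _ => (0:ℂ)) μ) β
      (φ (0,1)) (- φ (1,0))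
    simp only [add_zero] at hv
    have hg : Continuous (fun t => (starRingEnd ℂ) (v t)) := Complex.continuous_conj.comp hv.hc
    have hGl : LocallyIntegrable ((uIoc α β).indicator (fun t => - (r t : ℂ) * (starRingEnd ℂ) (v t))) μ := by
      refine LocallyIntegrable.indicator ?_ measurableSet_uIoc
      exact ((ts_ofReal_li hr).neg).mul_continuous hg
    obtain ⟨w, w1, hw, hw0, hw1⟩ := ts_exists hΦ hQ hGl α 0 0
    have hmem : (w β, w1 β) ∈ p := ⟨w, w1, _, hg, hw, hw0, hw1, rfl, rfl⟩
    have hz : φ (w β, w1 β) = 0 := hφ hmem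
    rw [hφe] at hz
    have hL := ts_lagrange hw hv α β
    have hWb : Wr w w1 v v1 β = 0 := by
      unfold Wr; rw [hv0, hv1]; linear_combination -hz
    have hWa : Wr w w1 v v1 α = 0 := by unfold Wr; rw [hw0, hw1]; ring
    rw [hWb, hWa, zero_add] at hL
    have e : ∫ t in α..β, (w t * (Q t * v t) - (Q t * w t + (uIoc α β).indicator (fun t => - (r t : ℂ) * (starRingEnd ℂ) (v t)) t) * v t) ∂μ
        = ((∫ t in α..β, ‖v t‖^2 * r t ∂μ : ℝ) : ℂ) := by
      rw [← intervalIntegral.integral_ofReal]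
      refine intervalIntegral.integral_congr_ae (ae_of_all _ fun t ht => ?_)
      simp only [indicator_of_mem ht]
      push_cast
      rw [← Complex.conj_mul']
      ring
    rw [e] at hL
    have hL' : ∫ t in α..β, ‖v t‖^2 * r t ∂μ = 0 := by exact_mod_cast hL.symm
    have hL2 : ∫ t in uIoc α β, ‖v t‖^2 * r t ∂μ = 0 := by
      have := intervalIntegral.abs_integral_eq_abs_integral_uIoc (μ := μ) (a := α) (b := β) (fun t => ‖v t‖^2 * r t)
      rw [hL', abs_zero] at this
      exact abs_eq_zero.1 this.symm
    have hr' := ae_restrict_of_ae (s := uIoc α β) hrpos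
    rw [integral_eq_zero_iff_of_nonneg_ae (by filter_upwards [hr'] with t ht; simp only [Pi.zero_apply]; positivity)
      (ts_sq_int hr hv.hc α β)] at hL2
    have hvz : ∀ᵐ t ∂μ, t ∈ uIoc α β → v t = 0 := by
      rw [← ae_restrict_iff' measurableSet_uIoc]
      filter_upwards [hL2, hr'] with t h1 h2
      simpa [h2.ne'] using h1
    obtain ⟨hn0, hn1⟩ := hnd v v1 hv hvz
    apply hφ0
    refine LinearMap.ext fun y => ?_
    rw [show y = (y.1, y.2) from rfl, hφe]
    rw [hv0] at hn0
    rw [hv1, neg_eq_zero] at hn1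
    simp [hn0, hn1]
  have : ((-u β, -u1 β) : ℂ × ℂ) ∈ p := hp ▸ Submodule.mem_top
  obtain ⟨w, w1, g, hg, hw, h1, h2, h3, h4⟩ := this
  refine ⟨fun t => u t + w t, fun t => u1 t + w1 t, g, hg, ?_, ?_, ?_, ?_, ?_⟩
  · convert hu.add hw using 1
    ext t; ring
  all_goals simp_all

end crit

section ts
variable {T : Set ℝ} {μ ν : Measure ℝ}

lemma ts_sig_le {K : Set ℝ} {s t : ℝ} (hs : s ∈ K) (hts : t < s) : tsSigma K t ≤ s := by
  have : ({s | s ∈ K ∧ t < s}).Nonempty := ⟨s, hs, hts⟩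
  rw [tsSigma, if_pos this]
  exact csInf_le ⟨t, fun y hy => hy.2.le⟩ ⟨hs, hts⟩

lemma ts_le_sig {K : Set ℝ} {s t : ℝ} (hs : s ∈ K) (hts : t < s) : t ≤ tsSigma K t := by
  have : ({s | s ∈ K ∧ t < s}).Nonempty := ⟨s, hs, hts⟩
  rw [tsSigma, if_pos this]
  exact le_csInf this (fun y hy => hy.2.le)

lemma ts_le_sig' {K : Set ℝ} {t : ℝ} (ht : t ∈ K) : t ≤ tsSigma K t := by
  by_cases h : ({s | s ∈ K ∧ t < s}).Nonempty
  · obtain ⟨s, hs⟩ := h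
    exact ts_le_sig hs.1 hs.2
  · rw [tsSigma, if_neg h]
    refine le_csSup ⟨t, fun y hy => ?_⟩ ht
    by_contra hc
    exact h ⟨y, hy, not_le.1 hc⟩

lemma ts_sig_congr {K : Set ℝ} {x y : ℝ} (h : ∀ s ∈ K, (x < s ↔ y < s)) :
    tsSigma K x = tsSigma K y := by
  have : {s | s ∈ K ∧ x < s} = {s | s ∈ K ∧ y < s} := by
    ext s; simp only [mem_ofPred_eq]; exact and_congr_right fun hs => h s hs
  unfold tsSigma; rw [this]

lemma ts_K_sub : tsKappa T ⊆ T := by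
  unfold tsKappa; split_ifs
  · exact sdiff_subset
  · exact subset_rfl

lemma ts_mem_K {s t : ℝ} (ht : t ∈ T) (hs : s ∈ T) (hst : s < t) : t ∈ tsKappa T := by
  unfold tsKappa; split_ifs with h
  · refine ⟨ht, fun h' => ?_⟩
    rw [mem_singleton_iff] at h'
    have := csInf_le h.1 hs
    linarith
  · exact ht

lemma ts_K_closed (hcl : IsClosed T) : IsClosed (tsKappa T) := by
  unfold tsKappa; split_ifs with h
  · have : T \ {sInf T} = T ∩ Ici (tsSigma T (sInf T)) := by
      ext s
      simp only [Set.mem_sdiff, mem_singleton_iff, mem_inter_iff, mem_Ici]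
      constructor
      · rintro ⟨h1, h2⟩
        exact ⟨h1, ts_sig_le h1 (lt_of_le_of_ne (csInf_le h.1 h1) (Ne.symm h2))⟩
      · rintro ⟨h1, h2⟩
        exact ⟨h1, by linarith [h.2]|> fun (h3 : sInf T < s) => h3.ne'⟩
    rw [this]
    exact hcl.inter isClosed_Ici
  · exact hcl

lemma ts_lf_mu {K : Set ℝ} (hμ : ∀ c d : ℝ, c ≤ d →
      μ (Set.Ioc c d) = ENNReal.ofReal (tsSigma K d - tsSigma K c)) :
    IsLocallyFiniteMeasure μ := by
  refine ⟨fun x => ⟨Ioc (x-1) (x+1), Ioc_mem_nhds (by linarith) (by linarith), ?_⟩⟩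
  rw [hμ _ _ (by linarith)]
  exact ENNReal.ofReal_lt_top

lemma ts_lf_nu (hν : ∀ c d : ℝ, c ≤ d → ν (Set.Ico c d) = ENNReal.ofReal (tsRho T d - tsRho T c)) :
    IsLocallyFiniteMeasure ν := by
  refine ⟨fun x => ⟨Ico (x-1) (x+1), Ico_mem_nhds (by linarith) (by linarith), ?_⟩⟩
  rw [hν _ _ (by linarith)]
  exact ENNReal.ofReal_lt_top

lemma ts_mu_compl {K : Set ℝ} (hK : IsClosed K) (hμ : ∀ c d : ℝ, c ≤ d →
      μ (Set.Ioc c d) = ENNReal.ofReal (tsSigma K d - tsSigma K c)) : μ Kᶜ = 0 := by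
  refine measure_null_of_locally_null _ fun x hx => ?_
  obtain ⟨ε, hε, hb⟩ := Metric.isOpen_iff.1 hK.isOpen_compl x hx
  refine ⟨Ioc (x - ε/2) (x + ε/2), mem_nhdsWithin_of_mem_nhds (Ioc_mem_nhds (by linarith) (by linarith)), ?_⟩
  rw [hμ _ _ (by linarith), ts_sig_congr (x := x + ε/2) (y := x - ε/2), sub_self, ENNReal.ofReal_zero]
  intro s hs
  constructor
  · intro h; linarith
  · intro h
    by_contra hc
    refine hb (a := s) ?_ hs
    rw [Metric.mem_ball, Real.dist_eq, abs_lt]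
    constructor <;> linarith

/-- first point of `T` at or to the right of `x` -/
noncomputable def tsTau (T : Set ℝ) (x : ℝ) : ℝ :=
  if ({s | s ∈ T ∧ x ≤ s}).Nonempty then sInf {s | s ∈ T ∧ x ≤ s} else sSup T

def tsJ (T : Set ℝ) : Set ℝ := {x | (∃ s ∈ T, s < x) ∧ ∃ s ∈ T, x ≤ s}

lemma ts_J_meas : MeasurableSet (tsJ T) := by
  refine OrdConnected.measurableSet ⟨?_⟩
  rintro x ⟨⟨s, hs, hs'⟩, _⟩ y ⟨_, s2, hs2, hs2'⟩ z hz
  exact ⟨⟨s, hs, hs'.trans_le hz.1⟩, s2, hs2, hz.2.trans hs2'⟩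

lemma ts_tau_le {s x : ℝ} (hs : s ∈ T) (hx : x ≤ s) : tsTau T x ≤ s := by
  have : ({s | s ∈ T ∧ x ≤ s}).Nonempty := ⟨s, hs, hx⟩
  rw [tsTau, if_pos this]
  exact csInf_le ⟨x, fun y hy => hy.2⟩ ⟨hs, hx⟩

lemma ts_tau_mem (hcl : IsClosed T) {s x : ℝ} (hs : s ∈ T) (hx : x ≤ s) :
    tsTau T x ∈ T ∧ x ≤ tsTau T x := by
  have : ({s | s ∈ T ∧ x ≤ s}).Nonempty := ⟨s, hs, hx⟩
  rw [tsTau, if_pos this]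
  have hc : IsClosed {s | s ∈ T ∧ x ≤ s} := hcl.inter isClosed_Ici
  exact hc.csInf_mem this ⟨x, fun y hy => hy.2⟩

lemma ts_tau_mono (hcl : IsClosed T) : Monotone (tsTau T) := by
  intro x y hxy
  by_cases h : ∃ s ∈ T, y ≤ s
  · obtain ⟨s, hs, hys⟩ := h
    obtain ⟨h1, h2⟩ := ts_tau_mem hcl hs hys
    exact ts_tau_le h1 (hxy.trans h2)
  · push Not at h
    have e : tsTau T y = sSup T := by
      rw [tsTau, if_neg]
      rintro ⟨s, hs, h'⟩
      exact absurd h' (not_le.2 (h s hs))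
    rw [e]
    by_cases h2 : ∃ s ∈ T, x ≤ s
    · obtain ⟨s, hs, hxs⟩ := h2
      exact (ts_tau_le hs hxs).trans (le_csSup ⟨y, fun z hz => (h z hz).le⟩ hs)
    · rw [tsTau, if_neg]
      rintro ⟨s, hs, h'⟩
      exact h2 ⟨s, hs, h'⟩

lemma ts_nu_eq (hcl : IsClosed T)
    (hν : ∀ c d : ℝ, c ≤ d → ν (Set.Ico c d) = ENNReal.ofReal (tsRho T d - tsRho T c)) :
    ν = Measure.map (tsTau T) (volume.restrict (tsJ T)) := by
  have := ts_lf_nu hν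
  have hm : Measurable (tsTau T) := (ts_tau_mono hcl).measurable
  refine Measure.ext_of_Ico _ _ fun c d hcd => ?_
  rw [hν c d hcd.le, Measure.map_apply hm measurableSet_Ico, Measure.restrict_apply (hm measurableSet_Ico)]
  apply le_antisymm
  · rw [← Real.volume_Ioo]
    refine measure_mono ?_
    rintro x ⟨h1, h2⟩
    by_cases hd : ({s | s ∈ T ∧ s < d}).Nonempty
    · rw [tsRho, if_pos hd] at h2
      obtain ⟨s, ⟨hs, hsd⟩, hxs⟩ := exists_lt_of_lt_csSup hd h2
      obtain ⟨t1, t2⟩ := ts_tau_mem hcl hs hxs.le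
      refine ⟨⟨?_, (ts_tau_le hs hxs.le).trans_lt hsd⟩, ?_, s, hs, hxs.le⟩
      · by_contra hc
        push Not at hc
        have hn : ({s | s ∈ T ∧ s < c}).Nonempty := ⟨_, t1, hc⟩
        rw [tsRho, if_pos hn] at h1
        have := le_csSup (a := tsTau T x) (s := {s | s ∈ T ∧ s < c}) ⟨c, fun y hy => hy.2.le⟩ ⟨t1, hc⟩
        linarith
      · by_cases hn : ({s | s ∈ T ∧ s < c}).Nonempty
        · rw [tsRho, if_pos hn] at h1
          obtain ⟨y, hy⟩ := hn
          exact ⟨y, hy.1, (le_csSup (s := {s | s ∈ T ∧ s < c}) ⟨c, fun y hy => hy.2.le⟩ hy).trans_lt h1⟩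
        · rw [tsRho, if_neg hn] at h1
          exact exists_lt_of_csInf_lt ⟨s, hs⟩ h1
    · have hn : ¬ ({s | s ∈ T ∧ s < c}).Nonempty := by
        rintro ⟨s, h1, h2⟩; exact hd ⟨s, h1, h2.trans hcd⟩
      rw [tsRho, if_neg hd] at h2
      rw [tsRho, if_neg hn] at h1
      linarith
  · rw [← Real.volume_Icc]
    refine measure_mono ?_
    rintro x ⟨⟨h1, h2⟩, ⟨s, hs, hsx⟩, s', hs', hxs'⟩
    obtain ⟨t1, t2⟩ := ts_tau_mem hcl hs' hxs'
    constructor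
    · unfold tsRho
      split_ifs with hn
      · refine csSup_le hn fun y hy => ?_
        by_contra hc
        have := ts_tau_le hy.1 (not_le.1 hc).le
        linarith [hy.2]
      · refine (csInf_le ⟨c, fun y hy => ?_⟩ hs).trans hsx.le
        by_contra hc
        exact hn ⟨y, hy, not_le.1 hc⟩
    · have hd : ({s | s ∈ T ∧ s < d}).Nonempty := ⟨_, t1, h2⟩
      rw [tsRho, if_pos hd]
      exact t2.trans (le_csSup (s := {s | s ∈ T ∧ s < d}) ⟨d, fun y hy => hy.2.le⟩ ⟨t1, h2⟩)

lemma ts_ext_J (hcl : IsClosed T) (p : ℝ → ℂ) {x : ℝ} (hx : x ∈ tsJ T) :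
    extK T p x = p (tsTau T x) := by
  obtain ⟨⟨s, hs, hsx⟩, s', hs', hxs'⟩ := hx
  obtain ⟨t1, t2⟩ := ts_tau_mem hcl hs' hxs'
  unfold extK
  split_ifs with hK
  · congr 1
    exact le_antisymm t2 (ts_tau_le (ts_K_sub hK) le_rfl)
  · congr 1
    have hxT : x ∉ T := fun h => hK (ts_mem_K h hs hsx)
    have e : {s | s ∈ tsKappa T ∧ x < s} = {s | s ∈ T ∧ x ≤ s} := by
      ext y
      constructor
      · rintro ⟨h1, h2⟩; exact ⟨ts_K_sub h1, h2.le⟩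
      · rintro ⟨h1, h2⟩
        have : x < y := lt_of_le_of_ne h2 (by rintro rfl; exact hxT h1)
        exact ⟨ts_mem_K h1 hs (hsx.trans this), this⟩
    unfold tsSigma tsTau
    rw [e, if_pos ⟨s', hs', hxs'⟩, if_pos ⟨s', hs', hxs'⟩]

lemma ts_ext_gap {K : Set ℝ} (p : ℝ → ℂ) (hK : K = tsKappa T) {x y : ℝ} (hx : x ∉ K) (hy : y ∉ K)
    (h : ∀ s ∈ K, (x < s ↔ y < s)) : extK T p x = extK T p y := by
  subst hK
  unfold extK
  rw [if_neg hx, if_neg hy, ts_sig_congr h]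

/-- the reciprocal coefficient -/
noncomputable def tsPhi (T : Set ℝ) (p : ℝ → ℝ) (t : ℝ) : ℂ := 1 / extK T (cR p) t

lemma ts_Phi_conj (p : ℝ → ℝ) (t : ℝ) : (starRingEnd ℂ) (tsPhi T p t) = tsPhi T p t := by
  unfold tsPhi extK cR
  split_ifs <;> simp

lemma ts_Phi_ne (hcl : IsClosed T) {p : ℝ → ℝ}
    (hν : ∀ c d : ℝ, c ≤ d → ν (Set.Ico c d) = ENNReal.ofReal (tsRho T d - tsRho T c))
    (hpne : ∀ᵐ t ∂ν, p t ≠ 0) : ∀ᵐ t ∂(volume.restrict (tsJ T)), tsPhi T p t ≠ 0 := by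
  have hm : Measurable (tsTau T) := (ts_tau_mono hcl).measurable
  rw [ts_nu_eq hcl hν] at hpne
  have := ae_of_ae_map hm.aemeasurable hpne
  filter_upwards [this, ae_restrict_mem ts_J_meas] with t h1 h2
  unfold tsPhi
  rw [ts_ext_J hcl _ h2]
  simpa [cR] using h1

lemma ts_Phi_li (hcl : IsClosed T) {p : ℝ → ℝ}
    (hν : ∀ c d : ℝ, c ≤ d → ν (Set.Ico c d) = ENNReal.ofReal (tsRho T d - tsRho T c))
    (hp : LocallyIntegrable (fun t => 1 / p t) ν) : LocallyIntegrable (tsPhi T p) volume := by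
  have hm : Measurable (tsTau T) := (ts_tau_mono hcl).measurable
  have hp' := ts_ofReal_li hp
  rw [ts_nu_eq hcl hν] at hp'
  have HJ : ∀ a b, IntegrableOn (tsPhi T p) (Ioc a b ∩ tsJ T) volume := by
    intro a b
    have h1 := hp'.integrableOn_isCompact (isCompact_Icc (a := tsTau T a) (b := tsTau T b))
    rw [IntegrableOn, Measure.restrict_map hm measurableSet_Icc] at h1
    have h2 := h1.comp_measurable hm
    rw [Measure.restrict_restrict (hm measurableSet_Icc)] at h2
    have h3 : IntegrableOn (fun x => ((1 / p (tsTau T x) : ℝ) : ℂ)) (Ioc a b ∩ tsJ T) volume :=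
      IntegrableOn.mono_set h2 (by
        rintro x ⟨hx, hxJ⟩
        exact ⟨⟨ts_tau_mono hcl hx.1.le, ts_tau_mono hcl hx.2⟩, hxJ⟩)
    refine h3.congr_fun ?_ (measurableSet_Ioc.inter ts_J_meas)
    rintro x ⟨_, hx⟩
    simp only [tsPhi]
    rw [ts_ext_J hcl _ hx]
    simp [cR]
  have hconst : ∀ (S : Set ℝ) (C : ℂ), MeasurableSet S → (∀ x ∈ S, tsPhi T p x = C) →
      ∀ a b, IntegrableOn (tsPhi T p) (Ioc a b ∩ S) volume := by
    intro S C hS hC a b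
    have : IntegrableOn (fun _ => C) (Ioc a b ∩ S) volume := by
      refine IntegrableOn.mono_set ?_ inter_subset_left
      simp
    exact this.congr_fun (fun x hx => (hC x hx.2).symm) (measurableSet_Ioc.inter hS)
  have hKT := ts_K_sub (T := T)
  set L : Set ℝ := {x | ∀ s ∈ T, x < s} with hL
  set R : Set ℝ := {x | ∀ s ∈ T, s < x} with hR
  have hLm : MeasurableSet L := by
    refine OrdConnected.measurableSet ⟨?_⟩
    intro x hx y hy z hz s hs
    exact hz.2.trans_lt (hy s hs)
  have hRm : MeasurableSet R := by
    refine OrdConnected.measurableSet ⟨?_⟩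
    intro x hx y hy z hz s hs
    exact (hx s hs).trans_le hz.1
  have hLc : ∃ C, ∀ x ∈ L, tsPhi T p x = C := by
    by_cases hn : L.Nonempty
    · obtain ⟨y, hy⟩ := hn
      refine ⟨tsPhi T p y, fun x hx => ?_⟩
      unfold tsPhi
      rw [ts_ext_gap _ rfl (fun h => (hx x (hKT h)).false) (fun h => (hy y (hKT h)).false)]
      exact fun s hs => ⟨fun _ => hy s (hKT hs), fun _ => hx s (hKT hs)⟩
    · exact ⟨0, fun x hx => absurd ⟨x, hx⟩ hn⟩
  have hRc : ∃ C, ∀ x ∈ R, tsPhi T p x = C := by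
    by_cases hn : R.Nonempty
    · obtain ⟨y, hy⟩ := hn
      refine ⟨tsPhi T p y, fun x hx => ?_⟩
      unfold tsPhi
      rw [ts_ext_gap _ rfl (fun h => (hx x (hKT h)).false) (fun h => (hy y (hKT h)).false)]
      exact fun s hs => ⟨fun h => absurd h (hx s (hKT hs)).not_gt, fun h => absurd h (hy s (hKT hs)).not_gt⟩
    · exact ⟨0, fun x hx => absurd ⟨x, hx⟩ hn⟩
  obtain ⟨C1, hC1⟩ := hLc
  obtain ⟨C2, hC2⟩ := hRc
  apply ts_li
  intro a b _
  have h0 : IntegrableOn (tsPhi T p) {sInf T} volume := by simp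
  refine (((HJ a b).union (hconst L C1 hLm hC1 a b)).union ((hconst R C2 hRm hC2 a b).union h0)).mono_set ?_
  intro x hx
  by_cases h1 : x ∈ L
  · exact Or.inl (Or.inr ⟨hx, h1⟩)
  by_cases h2 : x ∈ R
  · exact Or.inr (Or.inl ⟨hx, h2⟩)
  by_cases h3 : x ∈ tsJ T
  · exact Or.inl (Or.inl ⟨hx, h3⟩)
  refine Or.inr (Or.inr ?_)
  simp only [hL, hR, mem_ofPred_eq, not_forall, not_lt] at h1 h2
  obtain ⟨s1, hs1, hs1'⟩ := h1
  obtain ⟨s2, hs2, hs2'⟩ := h2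
  have h4 : ∀ s ∈ T, x ≤ s := by
    intro s hs
    by_contra hc
    exact h3 ⟨⟨s, hs, not_le.1 hc⟩, s2, hs2, hs2'⟩
  have h5 : x = s1 := le_antisymm (h4 _ hs1) hs1'
  subst h5
  exact le_antisymm (le_csInf ⟨x, hs1⟩ h4) (csInf_le ⟨x, h4⟩ hs1)

lemma ts_nondeg [IsLocallyFiniteMeasure μ] (hcl : IsClosed T) {p : ℝ → ℝ}
    (hμ : ∀ c d : ℝ, c ≤ d →
      μ (Set.Ioc c d) = ENNReal.ofReal (tsSigma (tsKappa T) d - tsSigma (tsKappa T) c))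
    (hΦ : LocallyIntegrable (tsPhi T p) volume)
    (hne : ∀ᵐ t ∂(volume.restrict (tsJ T)), tsPhi T p t ≠ 0)
    {lo hi s t t' : ℝ} (hs : s ∈ tsKappa T) (ht : t ∈ tsKappa T) (ht' : t' ∈ tsKappa T)
    (h1 : lo < s) (h2 : s < t) (h3 : t < hi) (h4 : t < t')
    {Q v v1 : ℝ → ℂ} (hv : TsPr μ (tsPhi T p) v v1 (fun t => Q t * v t))
    (hz : ∀ᵐ t ∂μ, t ∈ Ioc lo hi → v t = 0) :
    ∀ x ∈ Icc lo hi, v x = 0 ∧ v1 x = 0 := by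
  have hK0 : ∀ y ∈ tsKappa T, y ∈ Icc s t → v y = 0 := by
    intro y hy hyst
    by_contra hne0
    have hop : IsOpen ({x | v x ≠ 0} ∩ Ioo lo (min hi t')) :=
      (isOpen_ne.preimage hv.hc).inter isOpen_Ioo
    obtain ⟨ε, hε, hb⟩ := Metric.isOpen_iff.1 hop y ⟨hne0, by constructor; linarith [hyst.1]; rw [lt_min_iff]; constructor <;> linarith [hyst.2]⟩
    have hball : ∀ x ∈ Ioc (y - ε/2) (y + ε/2), v x ≠ 0 ∧ x ∈ Ioo lo (min hi t') := by
      intro x hx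
      refine hb ?_
      rw [Metric.mem_ball, Real.dist_eq, abs_lt]
      constructor <;> linarith [hx.1, hx.2]
    have hm0 : μ (Ioc (y - ε/2) (y + ε/2)) = 0 := by
      refine measure_mono_null ?_ hz
      intro x hx hc
      obtain ⟨b1, b2⟩ := hball x hx
      exact b1 (hc ⟨b2.1, (b2.2.trans_le (min_le_left _ _)).le⟩)
    rw [hμ _ _ (by linarith), ENNReal.ofReal_eq_zero] at hm0
    have a1 : tsSigma (tsKappa T) (y - ε/2) ≤ y := ts_sig_le hy (by linarith)
    have a2 := (hball (y + ε/2) ⟨by linarith, le_rfl⟩).2.2.trans_le (min_le_right _ _)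
    have a3 : y + ε/2 ≤ tsSigma (tsKappa T) (y + ε/2) := ts_le_sig ht' a2
    linarith
  have hv1 : ∀ x ∈ Icc lo hi, v1 x = v1 lo := by
    intro x hx
    rw [hv.e1 lo x, intervalIntegral.integral_zero_ae, add_zero]
    filter_upwards [hz] with t ht htm
    rw [uIoc_of_le hx.1] at htm
    rw [ht ⟨htm.1, htm.2.trans hx.2⟩, mul_zero]
  set C := v1 lo with hC
  have hvF : ∀ y ∈ Icc lo hi, ∀ x ∈ Icc lo hi, v x = v y + C * ∫ t in y..x, tsPhi T p t := by
    intro y hy x hx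
    rw [hv.e0 y x, ← intervalIntegral.integral_const_mul]
    congr 1
    refine intervalIntegral.integral_congr fun t ht => ?_
    show v1 t * tsPhi T p t = C * tsPhi T p t
    rw [hv1 t]
    exact uIcc_subset_Icc hy hx ht
  have hsI : s ∈ Icc lo hi := ⟨h1.le, (h2.trans h3).le⟩
  have hC0 : C = 0 := by
    by_contra hC0
    have hF : ∀ x ∈ Icc s t, v x = 0 := by
      intro x hx
      by_cases hxK : x ∈ tsKappa T
      · exact hK0 x hxK hx
      have hKc := ts_K_closed hcl
      set g1 := sSup (tsKappa T ∩ Icc s x) with hg1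
      set g2 := sInf (tsKappa T ∩ Icc x t) with hg2
      have m1 : g1 ∈ tsKappa T ∩ Icc s x :=
        (hKc.inter isClosed_Icc).csSup_mem ⟨s, hs, le_rfl, hx.1⟩ ⟨x, fun y hy => hy.2.2⟩
      have m2 : g2 ∈ tsKappa T ∩ Icc x t :=
        (hKc.inter isClosed_Icc).csInf_mem ⟨t, ht, hx.2, le_rfl⟩ ⟨x, fun y hy => hy.2.1⟩
      have l1 : g1 < x := lt_of_le_of_ne m1.2.2 (by rintro h; exact hxK (h ▸ m1.1))
      have l2 : x < g2 := lt_of_le_of_ne m2.2.1 (by rintro h; exact hxK (h ▸ m2.1))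
      have hno : ∀ y ∈ tsKappa T, y ∈ Ioo g1 g2 → False := by
        intro y hy hyi
        rcases le_total y x with hyx | hyx
        · have : y ≤ g1 := le_csSup ⟨x, fun y hy => hy.2.2⟩ ⟨hy, m1.2.1.trans hyi.1.le, hyx⟩
          linarith [hyi.1]
        · have : g2 ≤ y := csInf_le ⟨x, fun y hy => hy.2.1⟩ ⟨hy, hyx, hyi.2.le.trans m2.2.2⟩
          linarith [hyi.2]
      have hcst : ∀ y ∈ Ioo g1 g2, tsPhi T p y = tsPhi T p x := by
        intro y hy
        unfold tsPhi
        rw [ts_ext_gap _ rfl (fun h => hno y h hy) hxK]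
        intro w hw
        constructor
        · intro h
          by_contra hc
          exact hno w hw ⟨hy.1.trans h, (not_lt.1 hc).trans_lt l2⟩
        · intro h
          by_contra hc
          exact hno w hw ⟨l1.trans h, (not_lt.1 hc).trans_lt hy.2⟩
      have hint : ∀ y ∈ Ioc g1 g2, v y = C * ((y - g1) * tsPhi T p x) := by
        intro y hy
        have i1 : g1 ∈ Icc lo hi := ⟨by linarith [m1.2.1], by linarith [hx.2]⟩
        have i2 : y ∈ Icc lo hi := ⟨by linarith [i1.1, hy.1], by linarith [hy.2, m2.2.2]⟩
        rw [hvF g1 i1 y i2, hK0 g1 m1.1 ⟨m1.2.1, by linarith [hx.2]⟩, zero_add,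
          intervalIntegral.integral_of_le hy.1.le, integral_Ioc_eq_integral_Ioo,
          setIntegral_congr_fun (g := fun _ => tsPhi T p x) measurableSet_Ioo (fun w hw => hcst w ⟨hw.1, hw.2.trans_le hy.2⟩)]
        simp [hy.1.le]
      have e2 := hint g2 ⟨l1.trans l2, le_rfl⟩
      rw [hK0 g2 m2.1 ⟨hx.1.trans l2.le, m2.2.2⟩] at e2
      have hg : ((g2 : ℂ) - g1) ≠ 0 := by
        rw [sub_ne_zero]; exact_mod_cast (l1.trans l2).ne'
      have hk0 : tsPhi T p x = 0 := by
        rcases mul_eq_zero.1 e2.symm with h | h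
        · exact absurd h hC0
        · rcases mul_eq_zero.1 h with h | h
          · exact absurd h hg
          · exact h
      rw [hint x ⟨l1, l2.le⟩, hk0]; ring
    have hd := LocallyIntegrable.ae_hasDerivAt_integral hΦ
    have hd2 : ∀ᵐ x ∂(volume.restrict (Ioo s t)), False := by
      have hne' : ∀ᵐ x ∂(volume.restrict (Ioo s t)), tsPhi T p x ≠ 0 :=
        ae_restrict_of_ae_restrict_of_subset
          (show Ioo s t ⊆ tsJ T from fun x hx => ⟨⟨s, ts_K_sub hs, hx.1⟩, t, ts_K_sub ht, hx.2.le⟩) hne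
      filter_upwards [hne', ae_restrict_of_ae hd, ae_restrict_mem measurableSet_Ioo] with x n1 n2 n3
      have n4 := n2 s
      have n5 : HasDerivAt (fun x => ∫ t in s..x, tsPhi T p t) 0 x := by
        refine (hasDerivAt_const x (0:ℂ)).congr_of_eventuallyEq ?_
        filter_upwards [Ioo_mem_nhds n3.1 n3.2] with y hy
        have := hvF s hsI y ⟨by linarith [hy.1], by linarith [hy.2]⟩
        rw [hF y ⟨hy.1.le, hy.2.le⟩, hF s ⟨le_rfl, h2.le⟩, zero_add] at this
        exact (mul_eq_zero.1 this.symm).resolve_left hC0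
      exact n1 (n4.unique n5)
    rw [ae_iff] at hd2
    simp at hd2
    linarith
  intro x hx
  rw [hv1 x hx, hvF s hsI x hx, hK0 s hs ⟨le_rfl, h2.le⟩, hC0]
  simp

end ts

section absmain
variable {μ : Measure ℝ}

/-- cleaned up domain -/
structure TsD (μ : Measure ℝ) (Φ : ℝ → ℂ) (r q : ℝ → ℝ) (f f1 h : ℝ → ℂ) : Prop where
  pr : TsPr μ Φ f f1 h
  i0 : Integrable (fun t => ‖f t‖^2 * r t) μ
  i1 : Integrable (fun t => ‖ellApply r q h f t‖^2 * r t) μ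

def TsSol (μ : Measure ℝ) (Φ : ℝ → ℂ) (r q : ℝ → ℝ) (z : ℂ) (u u1 : ℝ → ℂ) : Prop :=
  TsPr μ Φ u u1 (fun t => ((q t : ℂ) - z * r t) * u t)

lemma ts_Q_li {r q : ℝ → ℝ} (hr : LocallyIntegrable r μ) (hq : LocallyIntegrable q μ) (z : ℂ) :
    LocallyIntegrable (fun t => (q t : ℂ) - z * r t) μ :=
  (ts_ofReal_li hq).sub ((ts_ofReal_li hr).smul z)

lemma ts_sol_W [IsLocallyFiniteMeasure μ] {Φ u u1 v v1 : ℝ → ℂ} {r q : ℝ → ℝ} {z : ℂ}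
    (hu : TsSol μ Φ r q z u u1) (hv : TsSol μ Φ r q z v v1) (x : ℝ) :
    Wr u u1 v v1 x = Wr u u1 v v1 0 := by
  rw [ts_lagrange hu hv 0 x]
  have : ∀ t, (u t * (((q t : ℂ) - z * r t) * v t) - ((q t : ℂ) - z * r t) * u t * v t) = 0 := by
    intro t; ring
  simp [this]

lemma ts_sol_ex [IsLocallyFiniteMeasure μ] {Φ : ℝ → ℂ} {r q : ℝ → ℝ} (hΦ : LocallyIntegrable Φ volume)
    (hr : LocallyIntegrable r μ) (hq : LocallyIntegrable q μ) (z : ℂ) (α β : ℂ) :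
    ∃ u u1, TsSol μ Φ r q z u u1 ∧ u 0 = α ∧ u1 0 = β := by
  obtain ⟨v, v1, hv, h⟩ := ts_exists hΦ (ts_Q_li hr hq z)
    (locallyIntegrable_zero : LocallyIntegrable (fun _ => (0:ℂ)) μ) 0 α β
  simp only [add_zero] at hv
  exact ⟨v, v1, hv, h⟩

lemma ts_sol_real [IsLocallyFiniteMeasure μ] {Φ u u1 : ℝ → ℂ} {r q : ℝ → ℝ} (hΦ : LocallyIntegrable Φ volume)
    (hΦc : ∀ t, (starRingEnd ℂ) (Φ t) = Φ t)
    (hr : LocallyIntegrable r μ) (hq : LocallyIntegrable q μ) (hu : TsSol μ Φ r q 0 u u1)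
    (h0 : (starRingEnd ℂ) (u 0) = u 0) (h1 : (starRingEnd ℂ) (u1 0) = u1 0) (x : ℝ) :
    (starRingEnd ℂ) (u x) = u x ∧ (starRingEnd ℂ) (u1 x) = u1 x := by
  have h2 := (TsPr.conj hu hΦc).add (TsPr.smul hu (-1))
  have := ts_unique (c := 0) (x0 := x) hΦ (ts_Q_li hr hq 0) h2 (fun t _ => by simp; ring)
    (by simp [h0]) (by simp [h1])
  constructor
  · linear_combination this.1
  · linear_combination this.2

lemma ts_main [IsLocallyFiniteMeasure μ] {Φ : ℝ → ℂ} {r q : ℝ → ℝ} (hΦ : LocallyIntegrable Φ volume)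
    (hΦc : ∀ t, (starRingEnd ℂ) (Φ t) = Φ t)
    (hr : LocallyIntegrable r μ) (hq : LocallyIntegrable q μ) (Near : (ℝ → ℂ) → Prop) (F : Filter ℝ) [F.NeBot]
    (H1 : (∀ z u u1, TsSol μ Φ r q z u u1 → Near u) ∨ ∀ f f1 h g g1 k, TsD μ Φ r q f f1 h →
      TsD μ Φ r q g g1 k → ∃ w, Tendsto (Wr f f1 g g1) F (nhds w) ∧
        (w ≠ 0 → ∀ z u u1, TsSol μ Φ r q z u u1 → Near u))
    (H2 : ∀ z u u1, TsSol μ Φ r q z u u1 → Near u → ∃ f f1 h, TsD μ Φ r q f f1 h ∧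
      ∀ᶠ y in F, f y = u y ∧ f1 y = u1 y) :
    ((∀ z, ∃ u u1, TsSol μ Φ r q z u u1 ∧ ¬ Near u) ↔
      ∀ f f1 g g1 : ℝ → ℂ, (∃ h, TsD μ Φ r q f f1 h) → (∃ h, TsD μ Φ r q g g1 h) →
        Tendsto (Wr f f1 g g1) F (nhds 0)) ∧
    ((∀ z u u1, TsSol μ Φ r q z u u1 → Near u) ↔
      ∃ f f1 : ℝ → ℂ, (∃ h, TsD μ Φ r q f f1 h) ∧
        Tendsto (Wr f f1 (fun t => starRingEnd ℂ (f t)) (fun t => starRingEnd ℂ (f1 t))) F (nhds 0) ∧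
        ∃ g g1 : ℝ → ℂ, (∃ h, TsD μ Φ r q g g1 h) ∧
          ∃ w : ℂ, w ≠ 0 ∧ Tendsto (Wr f f1 g g1) F (nhds w)) := by
  have key : ∀ z, (∀ u u1, TsSol μ Φ r q z u u1 → Near u) →
      ∃ u u1 f f1 h g g1 k, TsSol μ Φ r q z u u1 ∧ u 0 = 1 ∧ u1 0 = 0 ∧ TsD μ Φ r q f f1 h ∧ TsD μ Φ r q g g1 k ∧
        (∀ᶠ y in F, f y = u y ∧ f1 y = u1 y) ∧ Tendsto (Wr f f1 g g1) F (nhds 1) := by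
    intro z hz
    obtain ⟨u, u1, hu, hu0, hu1⟩ := ts_sol_ex hΦ hr hq z 1 0
    obtain ⟨v, v1, hv, hv0, hv1⟩ := ts_sol_ex hΦ hr hq z 0 1
    obtain ⟨f, f1, h, hf, hfe⟩ := H2 z u u1 hu (hz _ _ hu)
    obtain ⟨g, g1, k, hg, hge⟩ := H2 z v v1 hv (hz _ _ hv)
    refine ⟨u, u1, f, f1, h, g, g1, k, hu, hu0, hu1, hf, hg, hfe, ?_⟩
    refine tendsto_const_nhds.congr' ?_
    filter_upwards [hfe, hge] with y a b
    have := ts_sol_W hu hv y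
    unfold Wr at this ⊢
    rw [a.1, a.2, b.1, b.2, this, hu0, hu1, hv0, hv1]; ring
  constructor
  · constructor
    · rintro hLP f f1 g g1 ⟨h, hf⟩ ⟨k, hg⟩
      obtain ⟨u, u1, hu, hnu⟩ := hLP 0
      rcases H1 with H1 | H1
      · exact absurd (H1 _ _ _ hu) hnu
      · obtain ⟨w, hw, hw'⟩ := H1 f f1 h g g1 k hf hg
        by_cases h0 : w = 0
        · rwa [h0] at hw
        · exact absurd (hw' h0 _ _ _ hu) hnu
    · intro hW
      by_contra hc
      push Not at hc
      obtain ⟨z, hz⟩ := hc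
      obtain ⟨u, u1, f, f1, h, g, g1, k, hu, hu0, hu1, hf, hg, hfe, ht⟩ := key z hz
      exact zero_ne_one (tendsto_nhds_unique (hW f f1 g g1 ⟨h, hf⟩ ⟨k, hg⟩) ht)
  · constructor
    · intro hLC
      obtain ⟨u, u1, f, f1, h, g, g1, k, hu, hu0, hu1, hf, hg, hfe, ht⟩ := key 0 (hLC 0)
      refine ⟨f, f1, ⟨h, hf⟩, ?_, g, g1, ⟨k, hg⟩, 1, one_ne_zero, ht⟩
      refine tendsto_const_nhds.congr' ?_
      filter_upwards [hfe] with y a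
      have := ts_sol_real hΦ hΦc hr hq hu (by simp [hu0]) (by simp [hu1]) y
      simp only [Wr]
      rw [a.1, a.2, this.1, this.2]; ring
    · rintro ⟨f, f1, ⟨h, hf⟩, -, g, g1, ⟨k, hg⟩, w, hw0, hw⟩
      rcases H1 with H1 | H1
      · exact H1
      · obtain ⟨w', hw1, hw2⟩ := H1 f f1 h g g1 k hf hg
        have := tendsto_nhds_unique hw hw1
        exact hw2 (this ▸ hw0)

lemma ts_ell_meas {r q : ℝ → ℝ} {f h : ℝ → ℂ} (hr : LocallyIntegrable r μ) (hq : LocallyIntegrable q μ)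
    (hf : Continuous f) (hh : LocallyIntegrable h μ) : AEStronglyMeasurable (ellApply r q h f) μ := by
  have a := (ts_ofReal_li hr).aestronglyMeasurable
  have b := (ts_ofReal_li hq).aestronglyMeasurable
  have c := hh.aestronglyMeasurable
  have e : ellApply r q h f = fun t => (-h t + (q t : ℂ) * f t) * ((r t : ℂ))⁻¹ := by
    ext t; unfold ellApply; rw [div_eq_mul_inv]
  rw [e]
  exact (c.neg.add (b.mul hf.aestronglyMeasurable)).mul (a.aemeasurable.inv.aestronglyMeasurable)

lemma ts_sqlin {r : ℝ → ℝ} (hr : LocallyIntegrable r μ) (hrpos : ∀ᵐ t ∂μ, 0 < r t) {f g : ℝ → ℂ} {S : Set ℝ}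
    (hfm : AEStronglyMeasurable f μ) (hgm : AEStronglyMeasurable g μ) (z : ℂ) (z' : ℂ)
    (hf : IntegrableOn (fun t => ‖f t‖^2 * r t) S μ) (hg : IntegrableOn (fun t => ‖g t‖^2 * r t) S μ) :
    IntegrableOn (fun t => ‖z * f t + z' * g t‖^2 * r t) S μ := by
  refine Integrable.mono' ((hf.const_mul (2 * ‖z‖^2)).add (hg.const_mul (2 * ‖z'‖^2))) ?_ ?_
  · exact ((((hfm.const_mul z).add (hgm.const_mul z')).norm.pow 2).mul hr.aestronglyMeasurable).restrict
  · filter_upwards [ae_restrict_of_ae hrpos] with t ht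
    rw [norm_mul, Real.norm_of_nonneg ht.le, norm_pow, norm_norm]
    simp only [Pi.add_apply]
    have h1 : ‖z * f t + z' * g t‖ ≤ ‖z‖ * ‖f t‖ + ‖z'‖ * ‖g t‖ := by
      rw [← norm_mul, ← norm_mul]; exact norm_add_le _ _
    have h2 : ‖z * f t + z' * g t‖^2 ≤ 2 * ‖z‖^2 * ‖f t‖^2 + 2 * ‖z'‖^2 * ‖g t‖^2 := by
      have := pow_le_pow_left₀ (norm_nonneg _) h1 2
      nlinarith [sq_nonneg (‖z‖ * ‖f t‖ - ‖z'‖ * ‖g t‖)]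
    have := mul_le_mul_of_nonneg_right h2 ht.le
    linarith

lemma ts_D_of [IsLocallyFiniteMeasure μ] {Φ f f1 g : ℝ → ℂ} {r q : ℝ → ℝ} {z : ℂ}
    (hr : LocallyIntegrable r μ) (hrpos : ∀ᵐ t ∂μ, 0 < r t) {α β : ℝ} (hg : Continuous g)
    (hf : TsPr μ Φ f f1 (fun t => ((q t : ℂ) - z * r t) * f t +
      (uIoc α β).indicator (fun t => - (r t : ℂ) * g t) t))
    (hi : Integrable (fun t => ‖f t‖^2 * r t) μ) :
    TsD μ Φ r q f f1 (fun t => ((q t : ℂ) - z * r t) * f t +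
      (uIoc α β).indicator (fun t => - (r t : ℂ) * g t) t) := by
  refine ⟨hf, hi, ?_⟩
  have hgi : Integrable (fun t => ‖(uIoc α β).indicator g t‖^2 * r t) μ := by
    have := (integrable_indicator_iff measurableSet_uIoc).2 (ts_sq_int hr hg α β)
    refine this.congr (ae_of_all _ fun t => ?_)
    by_cases ht : t ∈ uIoc α β <;> simp [ht]
  have := ts_sqlin (S := univ) hr hrpos hf.hc.aestronglyMeasurable
    (hg.aestronglyMeasurable.indicator (measurableSet_uIoc (a := α) (b := β))) z 1 hi.integrableOn hgi.integrableOn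
  rw [integrableOn_univ] at this
  refine this.congr ?_
  filter_upwards [hrpos] with t ht
  have hrc : (r t : ℂ) ≠ 0 := by exact_mod_cast ht.ne'
  have e : ellApply r q (fun t => ((q t : ℂ) - z * r t) * f t +
      (uIoc α β).indicator (fun t => - (r t : ℂ) * g t) t) f t = z * f t + 1 * (uIoc α β).indicator g t := by
    unfold ellApply
    by_cases ht : t ∈ uIoc α β <;> simp [ht] <;> field_simp <;> ring
  rw [e]

lemma ts_W_int [IsLocallyFiniteMeasure μ] {Φ f f1 h g g1 k : ℝ → ℂ} {r q : ℝ → ℝ}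
    (hrpos : ∀ᵐ t ∂μ, 0 < r t)
    (hf : TsD μ Φ r q f f1 h) (hg : TsD μ Φ r q g g1 k) :
    Integrable (fun t => f t * k t - h t * g t) μ := by
  refine Integrable.mono' (((hf.i0.add hf.i1).add hg.i0).add hg.i1) ?_ ?_
  · exact ((hf.pr.hc.aestronglyMeasurable).mul hg.pr.hh.aestronglyMeasurable).sub
      (hf.pr.hh.aestronglyMeasurable.mul hg.pr.hc.aestronglyMeasurable)
  · filter_upwards [hrpos] with t ht
    have hrc : (r t : ℂ) ≠ 0 := by exact_mod_cast ht.ne'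
    have e : f t * k t - h t * g t = r t * (ellApply r q h f t * g t - f t * ellApply r q k g t) := by
      unfold ellApply; field_simp; ring
    rw [e, norm_mul, Complex.norm_real, Real.norm_of_nonneg ht.le]
    simp only [Pi.add_apply]
    have h1 : ‖ellApply r q h f t * g t - f t * ellApply r q k g t‖ ≤
        ‖ellApply r q h f t‖ * ‖g t‖ + ‖f t‖ * ‖ellApply r q k g t‖ := by
      rw [← norm_mul, ← norm_mul]; exact norm_sub_le _ _
    generalize ‖ellApply r q h f t‖ = a at *
    generalize ‖ellApply r q k g t‖ = b at *
    generalize ‖f t‖ = c at *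
    generalize ‖g t‖ = d at *
    have h2 : a * d + c * b ≤ c^2 + a^2 + d^2 + b^2 := by
      nlinarith [sq_nonneg (a - d), sq_nonneg (c - b), sq_nonneg a, sq_nonneg b, sq_nonneg c, sq_nonneg d]
    have := mul_le_mul_of_nonneg_left (h1.trans h2) ht.le
    linarith

lemma ts_tail_right {F : ℝ → ℝ} (hF : Integrable F μ) :
    Tendsto (fun c => ∫ t in Ici c, F t ∂μ) atTop (nhds 0) := by
  have := tendsto_setIntegral_of_antitone (μ := μ) (f := F) (s := fun c : ℝ => Ici c) (fun i => measurableSet_Ici)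
    (fun a b hab => Ici_subset_Ici.2 hab) ⟨0, hF.integrableOn⟩
  have e : (⋂ n : ℝ, Ici n) = ∅ := by
    ext x; simp only [mem_iInter, mem_Ici, mem_empty_iff_false, iff_false, not_forall, not_le]
    exact ⟨x+1, by linarith⟩
  rw [e] at this
  simpa using this

lemma ts_tail_left {F : ℝ → ℝ} (hF : Integrable F μ) :
    Tendsto (fun c => ∫ t in Iic c, F t ∂μ) atBot (nhds 0) := by
  have := tendsto_setIntegral_of_antitone (μ := μ) (f := F) (s := fun c : ℝᵒᵈ => Iic (OrderDual.ofDual c)) (fun i => measurableSet_Iic)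
    (fun a b hab => Iic_subset_Iic.2 hab) ⟨OrderDual.toDual 0, hF.integrableOn⟩
  have e : (⋂ n : ℝᵒᵈ, Iic (OrderDual.ofDual n)) = ∅ := by
    ext x; simp only [mem_iInter, mem_Iic, mem_empty_iff_false, iff_false, not_forall, not_le]
    exact ⟨OrderDual.toDual (x-1), by simp⟩
  rw [e, setIntegral_empty] at this
  exact this

end absmain

section sides
variable {μ : Measure ℝ}

lemma ts_crit_side [IsLocallyFiniteMeasure μ] {Φ u u1 f f1 h g g1 k : ℝ → ℂ} {r q : ℝ → ℝ} {z w : ℂ}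
    {D : ℝ → Set ℝ} {l : Filter ℝ} [l.NeBot]
    (hDm : ∀ c, MeasurableSet (D c)) (hD : ∀ c, ∀ x ∈ D c, uIoc c x ⊆ D c)
    (htail : ∀ F : ℝ → ℝ, Integrable F μ → Tendsto (fun c => ∫ t in D c, F t ∂μ) l (nhds 0))
    (hev : ∀ P : ℝ → Prop, (∀ᶠ x in l, P x) → ∀ᶠ c in l, ∀ t ∈ D c, P t)
    (hr : LocallyIntegrable r μ) (hrpos : ∀ᵐ t ∂μ, 0 < r t) (hq : LocallyIntegrable q μ)
    (hf : TsD μ Φ r q f f1 h) (hg : TsD μ Φ r q g g1 k) (hw : w ≠ 0)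
    (hW : Tendsto (Wr f f1 g g1) l (nhds w)) (hu : TsSol μ Φ r q z u u1) :
    ∃ c M, ∀ x ∈ D c, ∫ t in uIoc c x, ‖u t‖^2 * r t ∂μ ≤ M := by
  have hk : ∀ {f f1 h : ℝ → ℂ}, TsD μ Φ r q f f1 h →
      Integrable (fun t => ‖z * f t - ellApply r q h f t‖^2 * r t) μ := by
    intro f f1 h hf
    have := ts_sqlin (S := univ) hr hrpos hf.pr.hc.aestronglyMeasurable
      (ts_ell_meas hr hq hf.pr.hc hf.pr.hh) z (-1) hf.i0.integrableOn hf.i1.integrableOn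
    rw [integrableOn_univ] at this
    refine this.congr (ae_of_all _ fun t => ?_)
    simp only
    congr 3; ring
  set δ := ‖w‖ / 2 with hδd
  have hδ : 0 < δ := by have := norm_pos_iff.2 hw; positivity
  set G := (∫ t, ‖f t‖^2 * r t ∂μ) + ∫ t, ‖g t‖^2 * r t ∂μ with hG
  have hG0 : 0 ≤ G := by
    refine add_nonneg (integral_nonneg_of_ae ?_) (integral_nonneg_of_ae ?_) <;>
    · filter_upwards [hrpos] with t ht
      simp only [Pi.zero_apply]; positivity
  set ε := δ / Real.sqrt (8 * G + 1) with hεd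
  have hs : 0 < Real.sqrt (8 * G + 1) := Real.sqrt_pos.2 (by linarith)
  have hε : 0 < ε := by positivity
  have hε2 : ε^2 = δ^2 / (8 * G + 1) := by
    rw [hεd, div_pow, Real.sq_sqrt (by linarith)]
  have hsm : 8 * G * ε^2 ≤ δ^2 := by
    rw [hε2, mul_div_assoc', div_le_iff₀ (by linarith)]
    nlinarith [sq_nonneg δ]
  have e1 : ∀ᶠ x in l, δ ≤ ‖Wr f f1 g g1 x‖ := by
    have := hW.norm.eventually (lt_mem_nhds (show δ < ‖w‖ by rw [hδd]; linarith))
    filter_upwards [this] with x hx using hx.le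
  have e2 := (htail _ (hk hf)).eventually (gt_mem_nhds (show (0:ℝ) < ε^2 by positivity))
  have e3 := (htail _ (hk hg)).eventually (gt_mem_nhds (show (0:ℝ) < ε^2 by positivity))
  obtain ⟨c, h1, h2, h3⟩ := ((hev _ e1).and (e2.and e3)).exists
  obtain ⟨M, hM⟩ := ts_crit hr hrpos hu hf.pr hg.pr (hDm c) (hD c) hε hδ h1 hf.i0 hg.i0 hG.ge hsm
    (hk hf).integrableOn h2.le (hk hg).integrableOn h3.le
  exact ⟨c, M, hM⟩

lemma ts_sq_li {r : ℝ → ℝ} (hr : LocallyIntegrable r μ) {u : ℝ → ℂ} (hu : Continuous u) :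
    LocallyIntegrable (fun t => ‖u t‖^2 * r t) μ := hr.continuous_mul (by fun_prop)

lemma ts_iic {F : ℝ → ℝ} (hF : LocallyIntegrable F μ) {c : ℝ} (h : IntegrableOn F (Iic c) μ) (d : ℝ) :
    IntegrableOn F (Iic d) μ := by
  refine (h.union (hF.integrableOn_isCompact (isCompact_Icc (a := c) (b := d)))).mono_set ?_
  intro x hx
  rcases le_total x c with h | h
  · exact Or.inl h
  · exact Or.inr ⟨h, hx⟩

lemma ts_ici {F : ℝ → ℝ} (hF : LocallyIntegrable F μ) {c : ℝ} (h : IntegrableOn F (Ioi c) μ) (d : ℝ) :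
    IntegrableOn F (Ici d) μ := by
  refine (h.union (hF.integrableOn_isCompact (isCompact_Icc (a := d) (b := c)))).mono_set ?_
  intro x hx
  rcases lt_or_ge c x with h | h
  · exact Or.inl h
  · exact Or.inr ⟨hx, h⟩

lemma ts_H1_left [IsLocallyFiniteMeasure μ] {Φ f f1 h g g1 k : ℝ → ℂ} {r q : ℝ → ℝ}
    (hr : LocallyIntegrable r μ) (hrpos : ∀ᵐ t ∂μ, 0 < r t) (hq : LocallyIntegrable q μ)
    (hf : TsD μ Φ r q f f1 h) (hg : TsD μ Φ r q g g1 k) :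
    ∃ w, Tendsto (Wr f f1 g g1) atBot (nhds w) ∧
        (w ≠ 0 → ∀ z u u1, TsSol μ Φ r q z u u1 → IntegrableOn (fun t => ‖u t‖^2 * r t) (Iic 0) μ) := by
  have hG := ts_W_int hrpos hf hg
  have ht := intervalIntegral_tendsto_integral_Iic (μ := μ) 0 hG.integrableOn (tendsto_id (α := ℝ) (x := atBot))
  have hW : Tendsto (Wr f f1 g g1) atBot (nhds (Wr f f1 g g1 0 - ∫ t in Iic 0, f t * k t - h t * g t ∂μ)) := by
    refine (tendsto_const_nhds.sub ht).congr fun x => ?_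
    rw [ts_lagrange hf.pr hg.pr x 0]; simp
  refine ⟨_, hW, fun hw z u u1 hu => ?_⟩
  obtain ⟨c, M, hM⟩ := ts_crit_side (D := Iic) (l := atBot) (fun c => measurableSet_Iic)
    (fun c x hx y hy => by
      rw [mem_Iic] at *
      rw [uIoc_of_ge hx] at hy
      exact hy.2)
    (fun F hF => ts_tail_left hF)
    (fun P hP => by
      obtain ⟨a, ha⟩ := eventually_atBot.1 hP
      filter_upwards [eventually_le_atBot a] with c hc t ht
      exact ha t (le_trans ht hc))
    hr hrpos hq hf hg hw hW hu
  have hl := ts_sq_li hr hu.hc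
  refine ts_iic hl (c := c) ?_ 0
  refine integrableOn_Iic_of_intervalIntegral_norm_bounded (l := atBot) (a := id) M c
    (fun i => (hl.integrableOn_isCompact isCompact_Icc).mono_set Ioc_subset_Icc_self) tendsto_id ?_
  filter_upwards [eventually_le_atBot c] with x hx
  refine le_trans (le_of_eq ?_) (hM x hx)
  rw [id, intervalIntegral.integral_of_le hx, uIoc_of_ge hx]
  refine integral_congr_ae ?_
  filter_upwards [ae_restrict_of_ae hrpos] with t ht
  rw [Real.norm_of_nonneg (by positivity)]

lemma ts_H1_right [IsLocallyFiniteMeasure μ] {Φ f f1 h g g1 k : ℝ → ℂ} {r q : ℝ → ℝ}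
    (hr : LocallyIntegrable r μ) (hrpos : ∀ᵐ t ∂μ, 0 < r t) (hq : LocallyIntegrable q μ)
    (hf : TsD μ Φ r q f f1 h) (hg : TsD μ Φ r q g g1 k) :
    ∃ w, Tendsto (Wr f f1 g g1) atTop (nhds w) ∧
        (w ≠ 0 → ∀ z u u1, TsSol μ Φ r q z u u1 → IntegrableOn (fun t => ‖u t‖^2 * r t) (Ici 0) μ) := by
  have hG := ts_W_int hrpos hf hg
  have ht := intervalIntegral_tendsto_integral_Ioi (μ := μ) 0 hG.integrableOn (tendsto_id (α := ℝ) (x := atTop))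
  have hW : Tendsto (Wr f f1 g g1) atTop (nhds (Wr f f1 g g1 0 + ∫ t in Ioi 0, f t * k t - h t * g t ∂μ)) := by
    refine (tendsto_const_nhds.add ht).congr fun x => ?_
    rw [ts_lagrange hf.pr hg.pr 0 x]; simp
  refine ⟨_, hW, fun hw z u u1 hu => ?_⟩
  obtain ⟨c, M, hM⟩ := ts_crit_side (D := Ici) (l := atTop) (fun c => measurableSet_Ici)
    (fun c x hx y hy => by
      rw [mem_Ici] at *
      rw [uIoc_of_le hx] at hy
      exact hy.1.le)
    (fun F hF => ts_tail_right hF)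
    (fun P hP => by
      obtain ⟨a, ha⟩ := eventually_atTop.1 hP
      filter_upwards [eventually_ge_atTop a] with c hc t ht
      exact ha t (le_trans hc ht))
    hr hrpos hq hf hg hw hW hu
  have hl := ts_sq_li hr hu.hc
  refine ts_ici hl (c := c) ?_ 0
  refine integrableOn_Ioi_of_intervalIntegral_norm_bounded (l := atTop) (b := id) M c
    (fun i => (hl.integrableOn_isCompact isCompact_Icc).mono_set Ioc_subset_Icc_self) tendsto_id ?_
  filter_upwards [eventually_ge_atTop c] with x hx
  refine le_trans (le_of_eq ?_) (hM x hx)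
  rw [id, intervalIntegral.integral_of_le hx, uIoc_of_le hx]
  refine integral_congr_ae ?_
  filter_upwards [ae_restrict_of_ae hrpos] with t ht
  rw [Real.norm_of_nonneg (by positivity)]

lemma ts_full {F : ℝ → ℝ} (h1 : IntegrableOn F (Iic 0) μ) (h2 : IntegrableOn F (Ici 0) μ) :
    Integrable F μ := by
  rw [← integrableOn_univ, ← Iic_union_Ici (a := (0:ℝ))]
  exact h1.union h2

/-- the bounded case of extension -/
lemma ts_H2_bdd [IsLocallyFiniteMeasure μ] {Φ u u1 : ℝ → ℂ} {r q : ℝ → ℝ} {z : ℂ}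
    (hr : LocallyIntegrable r μ) (hrpos : ∀ᵐ t ∂μ, 0 < r t) (hu : TsSol μ Φ r q z u u1)
    (hi : Integrable (fun t => ‖u t‖^2 * r t) μ) : ∃ h, TsD μ Φ r q u u1 h := by
  refine ⟨_, ts_D_of (α := 0) (β := 0) (g := fun _ => 0) (z := z) hr hrpos continuous_const ?_ hi⟩
  simpa [TsSol] using hu

/-- the patched function: equal to `u` where the path from `α` avoids the gluing interval -/
lemma ts_patch2 [IsLocallyFiniteMeasure μ] {Φ u u1 : ℝ → ℂ} {r q : ℝ → ℝ} {z : ℂ}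
    (hΦ : LocallyIntegrable Φ volume) (hq : LocallyIntegrable q μ)
    (hr : LocallyIntegrable r μ) (hrpos : ∀ᵐ t ∂μ, 0 < r t) (hu : TsSol μ Φ r q z u u1) (α β : ℝ)
    (hnd : ∀ v v1, TsSol μ Φ r q z v v1 → (∀ᵐ t ∂μ, t ∈ uIoc α β → v t = 0) → v β = 0 ∧ v1 β = 0) :
    ∃ f f1 h, (Integrable (fun t => ‖f t‖^2 * r t) μ → TsD μ Φ r q f f1 h) ∧ Continuous f ∧
      (∀ x, uIoc α x ∩ uIoc α β = ∅ → f x = u x ∧ f1 x = u1 x) ∧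
      (∀ x, uIoc β x ∩ uIoc α β = ∅ → f x = 0) := by
  have hQ := ts_Q_li hr hq z
  obtain ⟨f, f1, g, hg, hf, a0, a1, b0, b1⟩ := ts_patch hΦ hQ hr hrpos hu α β hnd
  refine ⟨f, f1, _, ts_D_of hr hrpos hg hf, hf.hc, ?_, ?_⟩
  · intro x hx
    have h2 := hf.add (TsPr.smul hu (-1))
    have := ts_unique (c := α) (x0 := x) hΦ hQ h2 (fun t ht => by
      have : t ∉ uIoc α β := fun h => (hx ▸ (⟨ht, h⟩ : t ∈ uIoc α x ∩ uIoc α β) : t ∈ (∅ : Set ℝ))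
      simp [this]; ring) (by simp [a0]) (by simp [a1])
    constructor
    · linear_combination this.1
    · linear_combination this.2
  · intro x hx
    exact (ts_unique (c := β) (x0 := x) hΦ hQ hf (fun t ht => by
      have : t ∉ uIoc α β := fun h => (hx ▸ (⟨ht, h⟩ : t ∈ uIoc β x ∩ uIoc α β) : t ∈ (∅ : Set ℝ))
      simp [this]) b0 b1).1

lemma ts_conv {r : ℝ → ℝ} (hr : LocallyIntegrable r μ) (hrpos : ∀ᵐ t ∂μ, 0 < r t) {u : ℝ → ℂ}
    (hu : AEStronglyMeasurable u μ) (S : Set ℝ) :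
    IntegrableOn (fun t => ‖u t‖^2 * r t) S μ ↔ ∫⁻ t in S, sqWeight r u t ∂μ < ∞ := by
  have hm : AEStronglyMeasurable (fun t => ‖u t‖^2 * r t) (μ.restrict S) :=
    ((hu.norm.pow 2).mul hr.aestronglyMeasurable).restrict
  rw [IntegrableOn, Integrable, and_iff_right hm, HasFiniteIntegral]
  have : ∫⁻ t in S, ‖‖u t‖^2 * r t‖ₑ ∂μ = ∫⁻ t in S, sqWeight r u t ∂μ := by
    refine lintegral_congr_ae ?_
    filter_upwards [ae_restrict_of_ae hrpos] with t ht
    unfold sqWeight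
    rw [enorm_mul, enorm_pow, enorm_norm, Real.enorm_of_nonneg ht.le]
    rfl
  rw [this]

end sides

section final
variable {T : Set ℝ} {μ ν : Measure ℝ}

lemma ts_sol_iff [IsLocallyFiniteMeasure μ] {p r q : ℝ → ℝ} (hΦ : LocallyIntegrable (tsPhi T p) volume)
    (hr : LocallyIntegrable r μ) (hq : LocallyIntegrable q μ) (z : ℂ) (u u1 : ℝ → ℂ) :
    IsSLSol T μ (cR p) (cR r) (cR q) z 0 u u1 ↔ TsSol μ (tsPhi T p) r q z u u1 := by
  have e : ∀ t, u1 t / extK T (cR p) t = u1 t * tsPhi T p t := fun t => by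
    unfold tsPhi; rw [mul_one_div]
  constructor
  · intro h
    refine ts_reg hΦ (ts_Q_li hr hq z) (fun c x hcx => ?_) (fun c x hcx => ?_)
    · have := (h c x hcx).1
      simp only [e] at this
      rwa [intervalIntegral.integral_of_le hcx] at this
    · have := (h c x hcx).2
      simpa [cR] using this
  · intro h c x hcx
    refine ⟨?_, ?_⟩
    · simp only [e]; exact h.e0 c x
    · have := h.e1 c x
      rw [intervalIntegral.integral_of_le hcx] at this
      simpa [cR] using this

lemma ts_D_iff [IsLocallyFiniteMeasure μ] {p r q : ℝ → ℝ} (hΦ : LocallyIntegrable (tsPhi T p) volume)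
    (hr : LocallyIntegrable r μ) (hrpos : ∀ᵐ t ∂μ, 0 < r t) (hq : LocallyIntegrable q μ)
    (hK : μ (tsKappa T)ᶜ = 0) (u u1 h : ℝ → ℂ) :
    MemD2 T μ p r q u u1 h ↔ TsD μ (tsPhi T p) r q u u1 h := by
  have e : ∀ t, u1 t / extK T (cR p) t = u1 t * tsPhi T p t := fun t => by
    unfold tsPhi; rw [mul_one_div]
  have hres : μ.restrict (tsKappa T) = μ := by
    refine Measure.restrict_eq_self_of_ae_mem ?_
    rw [ae_iff]; exact hK
  have hI : ∀ v : ℝ → ℂ, AEStronglyMeasurable v μ →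
      (MemL2T T μ r v ↔ Integrable (fun t => ‖v t‖^2 * r t) μ) := fun v hv => by
    unfold MemL2T
    rw [← ts_conv hr hrpos hv, IntegrableOn, hres]
  have hP : LocallyIntegrable h μ → (IsPair T μ (cR p) u u1 h ↔ TsPr μ (tsPhi T p) u u1 h) := by
    intro hl
    constructor
    · intro h
      refine ts_reg' hΦ hl (fun c x hcx => ?_) (fun c x hcx => (h c x hcx).2)
      have := (h c x hcx).1
      simp only [e] at this
      rwa [intervalIntegral.integral_of_le hcx] at this
    · intro h c x hcx
      refine ⟨?_, ?_⟩
      · simp only [e]; exact h.e0 c x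
      · have := h.e1 c x
        rwa [intervalIntegral.integral_of_le hcx] at this
  constructor
  · rintro ⟨hl, h1, h2, h3⟩
    have h4 := (hP hl).1 h1
    exact ⟨h4, (hI _ h4.hc.aestronglyMeasurable).1 h2,
      (hI _ (ts_ell_meas hr hq h4.hc hl)).1 h3⟩
  · rintro ⟨h1, h2, h3⟩
    exact ⟨h1.hh, (hP h1.hh).2 h1, (hI _ h1.hc.aestronglyMeasurable).2 h2,
      (hI _ (ts_ell_meas hr hq h1.hc h1.hh)).2 h3⟩

lemma ts_int_null {F : ℝ → ℝ} (hF : LocallyIntegrable F μ) [IsLocallyFiniteMeasure μ]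
    {K S C : Set ℝ} (hK : μ Kᶜ = 0) (hC : IsCompact C) {R : Set ℝ} (hR : IntegrableOn F R μ)
    (hS : ∀ t ∈ S, t ∈ K → t ∈ R ∨ t ∈ C) : IntegrableOn F S μ := by
  have h : IntegrableOn F ((R ∪ C) ∪ Kᶜ) μ := by
    refine (hR.union (hF.integrableOn_isCompact hC)).union ?_
    rw [IntegrableOn, Measure.restrict_zero_set hK]
    exact integrable_zero_measure
  refine h.mono_set fun t ht => ?_
  by_cases hk : t ∈ K
  · exact Or.inl (hS t ht hk)
  · exact Or.inr hk

lemma ts_near_left [IsLocallyFiniteMeasure μ] {r : ℝ → ℝ}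
    (hr : LocallyIntegrable r μ) (hrpos : ∀ᵐ t ∂μ, 0 < r t)
    (hK : μ (tsKappa T)ᶜ = 0) (hne : (tsKappa T).Nonempty) {u : ℝ → ℂ} (hu : Continuous u) :
    L2NearLeft T μ r u ↔ IntegrableOn (fun t => ‖u t‖^2 * r t) (Iic 0) μ := by
  have hF := ts_sq_li hr hu
  unfold L2NearLeft
  simp only [← ts_conv hr hrpos hu.aestronglyMeasurable]
  constructor
  · intro h
    obtain ⟨c, hc⟩ := hne
    refine ts_iic hF (c := c) ?_ 0
    refine ts_int_null hF hK (isCompact_singleton (x := sInf T)) (h c hc) ?_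
    intro t ht htK
    by_cases hs : ∃ s ∈ T, s < t
    · exact Or.inl ⟨⟨hs, ht⟩, htK⟩
    · push Not at hs
      right
      rw [mem_singleton_iff]
      exact ((show IsLeast T t from ⟨ts_K_sub htK, hs⟩).csInf_eq).symm
  · intro h c _
    exact (ts_iic hF h c).mono_set fun t ht => ht.1.2

lemma ts_near_right [IsLocallyFiniteMeasure μ] {r : ℝ → ℝ}
    (hr : LocallyIntegrable r μ) (hrpos : ∀ᵐ t ∂μ, 0 < r t)
    (hK : μ (tsKappa T)ᶜ = 0) (hne : (tsKappa T).Nonempty) {u : ℝ → ℂ} (hu : Continuous u) :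
    L2NearRight T μ r u ↔ IntegrableOn (fun t => ‖u t‖^2 * r t) (Ici 0) μ := by
  have hF := ts_sq_li hr hu
  unfold L2NearRight
  simp only [← ts_conv hr hrpos hu.aestronglyMeasurable]
  constructor
  · intro h
    obtain ⟨c, hc⟩ := hne
    refine ts_ici hF (c := c) ?_ 0
    refine ts_int_null hF hK (isCompact_singleton (x := sSup T)) (h c hc) ?_
    intro t ht htK
    by_cases hs : ∃ s ∈ T, t < s
    · exact Or.inl ⟨⟨le_of_lt ht, hs⟩, htK⟩
    · push Not at hs
      right
      rw [mem_singleton_iff]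
      exact ((show IsGreatest T t from ⟨ts_K_sub htK, hs⟩).csSup_eq).symm
  · intro h c _
    exact (ts_ici hF (h.mono_set Ioi_subset_Ici_self) c).mono_set fun t ht => ht.1.1

lemma ts_bdd_left [IsLocallyFiniteMeasure μ] {r : ℝ → ℝ} (hr : LocallyIntegrable r μ)
    (hK : μ (tsKappa T)ᶜ = 0) (hb : BddBelow T) {u : ℝ → ℂ} (hu : Continuous u) :
    IntegrableOn (fun t => ‖u t‖^2 * r t) (Iic 0) μ := by
  obtain ⟨m, hm⟩ := hb
  refine ts_int_null (ts_sq_li hr hu) hK (isCompact_Icc (a := m) (b := 0)) (R := ∅) integrableOn_empty ?_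
  exact fun t ht hk => Or.inr ⟨hm (ts_K_sub hk), ht⟩

lemma ts_bdd_right [IsLocallyFiniteMeasure μ] {r : ℝ → ℝ} (hr : LocallyIntegrable r μ)
    (hK : μ (tsKappa T)ᶜ = 0) (hb : BddAbove T) {u : ℝ → ℂ} (hu : Continuous u) :
    IntegrableOn (fun t => ‖u t‖^2 * r t) (Ici 0) μ := by
  obtain ⟨m, hm⟩ := hb
  refine ts_int_null (ts_sq_li hr hu) hK (isCompact_Icc (a := 0) (b := m)) (R := ∅) integrableOn_empty ?_
  exact fun t ht hk => Or.inr ⟨ht, hm (ts_K_sub hk)⟩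

lemma ts_lf_left (hcl : IsClosed T) (hne : T.Nonempty) : (leftLimFilter T).NeBot := by
  unfold leftLimFilter
  split_ifs with h
  · exact mem_closure_iff_nhdsWithin_neBot.1 (subset_closure (hcl.csInf_mem hne h))
  · rw [inf_principal_neBot_iff]
    intro U hU
    obtain ⟨a, ha⟩ := mem_atBot_sets.1 hU
    obtain ⟨x, hx, hxa⟩ := not_bddBelow_iff.1 h a
    exact ⟨x, ha x hxa.le, hx⟩

lemma ts_lf_right (hcl : IsClosed T) (hne : T.Nonempty) : (rightLimFilter T).NeBot := by
  unfold rightLimFilter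
  split_ifs with h
  · exact mem_closure_iff_nhdsWithin_neBot.1 (subset_closure (hcl.csSup_mem hne h))
  · rw [inf_principal_neBot_iff]
    intro U hU
    obtain ⟨a, ha⟩ := mem_atTop_sets.1 hU
    obtain ⟨x, hx, hxa⟩ := not_bddAbove_iff.1 h a
    exact ⟨x, ha x hxa.le, hx⟩

lemma ts_ev_left {x0 α : ℝ} (hx : x0 ∈ T) (hα : α ∈ T) (h : x0 < α) :
    ∀ᶠ y in map (tsSigma T) (leftLimFilter T), y ≤ α := by
  rw [eventually_map]
  suffices ∀ᶠ x in leftLimFilter T, x < α from this.mono fun x hx => ts_sig_le hα hx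
  unfold leftLimFilter
  split_ifs with hb
  · exact mem_nhdsWithin_of_mem_nhds (Iio_mem_nhds ((csInf_le hb hx).trans_lt h))
  · exact mem_inf_of_left (Iio_mem_atBot α)

lemma ts_ev_right {x0 α : ℝ} (hx : x0 ∈ T) (h : α < x0) :
    ∀ᶠ y in map (tsSigma T) (rightLimFilter T), α ≤ y := by
  rw [eventually_map]
  suffices ∀ᶠ x in rightLimFilter T, α < x ∧ x ∈ T from this.mono fun x hx => hx.1.le.trans (ts_le_sig' hx.2)
  unfold rightLimFilter
  split_ifs with hb
  · have h1 : ∀ᶠ x in nhdsWithin (sSup T) T, α < x :=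
      mem_nhdsWithin_of_mem_nhds (Ioi_mem_nhds (h.trans_le (le_csSup hb hx)))
    exact Eventually.and h1 self_mem_nhdsWithin
  · have h1 : ∀ᶠ x in atTop ⊓ principal T, α < x := mem_inf_of_left (Ioi_mem_atTop α)
    exact Eventually.and h1 (mem_inf_of_right (mem_principal_self T))

lemma ts_F_left (hb : ¬ BddBelow T) : map (tsSigma T) (leftLimFilter T) ≤ atBot := by
  change Tendsto (tsSigma T) (leftLimFilter T) atBot
  rw [tendsto_atBot]
  intro b
  obtain ⟨s, hs, hsb⟩ := not_bddBelow_iff.1 hb b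
  obtain ⟨s', hs', hss⟩ := not_bddBelow_iff.1 hb s
  exact (eventually_map.1 (ts_ev_left hs' hs hss)).mono fun x hx => le_trans hx hsb.le

lemma ts_F_right (hb : ¬ BddAbove T) : map (tsSigma T) (rightLimFilter T) ≤ atTop := by
  change Tendsto (tsSigma T) (rightLimFilter T) atTop
  rw [tendsto_atTop]
  intro b
  obtain ⟨s, hs, hsb⟩ := not_bddAbove_iff.1 hb b
  exact (eventually_map.1 (ts_ev_right hs hsb))

lemma ts_H2_left [IsLocallyFiniteMeasure μ] (hcl : IsClosed T) (hne : T.Nonempty) {p r q : ℝ → ℝ}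
    (hμ : ∀ c d : ℝ, c ≤ d →
      μ (Set.Ioc c d) = ENNReal.ofReal (tsSigma (tsKappa T) d - tsSigma (tsKappa T) c))
    (hΦ : LocallyIntegrable (tsPhi T p) volume)
    (hnz : ∀ᵐ t ∂(volume.restrict (tsJ T)), tsPhi T p t ≠ 0)
    (hr : LocallyIntegrable r μ) (hrpos : ∀ᵐ t ∂μ, 0 < r t) (hq : LocallyIntegrable q μ)
    (hK : μ (tsKappa T)ᶜ = 0) (z : ℂ) (u u1 : ℝ → ℂ) (hu : TsSol μ (tsPhi T p) r q z u u1)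
    (hn : IntegrableOn (fun t => ‖u t‖^2 * r t) (Iic 0) μ) :
    ∃ f f1 h, TsD μ (tsPhi T p) r q f f1 h ∧
      ∀ᶠ y in map (tsSigma T) (leftLimFilter T), f y = u y ∧ f1 y = u1 y := by
  by_cases hb : BddAbove T
  · obtain ⟨h, hh⟩ := ts_H2_bdd hr hrpos hu (ts_full hn (ts_bdd_right hr hK hb hu.hc))
    exact ⟨u, u1, h, hh, Eventually.of_forall fun _ => ⟨rfl, rfl⟩⟩
  rw [not_bddAbove_iff] at hb
  obtain ⟨x0, hx0⟩ := hne
  obtain ⟨α, hα, h1⟩ := hb x0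
  obtain ⟨s, hs, h2⟩ := hb α
  obtain ⟨t, ht, h3⟩ := hb s
  obtain ⟨t', ht', h4⟩ := hb t
  have hab : α ≤ t + 1 := by linarith
  obtain ⟨f, f1, h, a1, a2, a3, a4⟩ := ts_patch2 hΦ hq hr hrpos hu α (t+1) (fun v v1 hv hz => by
    rw [uIoc_of_le hab] at hz
    exact ts_nondeg hcl hμ hΦ hnz (ts_mem_K hs hα h2) (ts_mem_K ht hs h3) (ts_mem_K ht' ht h4)
      h2 h3 (by linarith) h4 hv hz (t+1) ⟨hab, le_rfl⟩)
  rw [uIoc_of_le hab] at a3 a4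
  have b3 : ∀ x ≤ α, f x = u x ∧ f1 x = u1 x := fun x hx => a3 x (by
    rw [uIoc_of_ge hx]; ext y; simp only [mem_inter_iff, mem_Ioc, mem_empty_iff_false]; grind)
  have b4 : ∀ x, t + 1 ≤ x → f x = 0 := fun x hx => a4 x (by
    rw [uIoc_of_le hx]; ext y; simp only [mem_inter_iff, mem_Ioc, mem_empty_iff_false]; grind)
  refine ⟨f, f1, h, a1 ?_, (ts_ev_left hx0 hα h1).mono b3⟩
  have hF := ts_sq_li hr a2
  refine ts_full (ts_iic hF (c := α) ?_ 0) (ts_ici hF (c := t + 1) ?_ 0)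
  · refine (ts_iic (ts_sq_li hr hu.hc) hn α).congr_fun (fun x hx => ?_) measurableSet_Iic
    simp only [(b3 x hx).1]
  · refine integrableOn_zero.congr_fun (fun x hx => ?_) measurableSet_Ioi
    simp [b4 x (le_of_lt hx)]

lemma ts_H2_right [IsLocallyFiniteMeasure μ] (hcl : IsClosed T) (hne : T.Nonempty) {p r q : ℝ → ℝ}
    (hμ : ∀ c d : ℝ, c ≤ d →
      μ (Set.Ioc c d) = ENNReal.ofReal (tsSigma (tsKappa T) d - tsSigma (tsKappa T) c))
    (hΦ : LocallyIntegrable (tsPhi T p) volume)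
    (hnz : ∀ᵐ t ∂(volume.restrict (tsJ T)), tsPhi T p t ≠ 0)
    (hr : LocallyIntegrable r μ) (hrpos : ∀ᵐ t ∂μ, 0 < r t) (hq : LocallyIntegrable q μ)
    (hK : μ (tsKappa T)ᶜ = 0) (z : ℂ) (u u1 : ℝ → ℂ) (hu : TsSol μ (tsPhi T p) r q z u u1)
    (hn : IntegrableOn (fun t => ‖u t‖^2 * r t) (Ici 0) μ) :
    ∃ f f1 h, TsD μ (tsPhi T p) r q f f1 h ∧
      ∀ᶠ y in map (tsSigma T) (rightLimFilter T), f y = u y ∧ f1 y = u1 y := by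
  by_cases hb : BddBelow T
  · obtain ⟨h, hh⟩ := ts_H2_bdd hr hrpos hu (ts_full (ts_bdd_left hr hK hb hu.hc) hn)
    exact ⟨u, u1, h, hh, Eventually.of_forall fun _ => ⟨rfl, rfl⟩⟩
  rw [not_bddBelow_iff] at hb
  obtain ⟨x0, hx0⟩ := hne
  obtain ⟨α, hα, h1⟩ := hb x0
  obtain ⟨t, ht, h2⟩ := hb α
  obtain ⟨s, hs, h3⟩ := hb t
  obtain ⟨s', hs', h4⟩ := hb s
  have hab : s - 1 ≤ α := by linarith
  obtain ⟨f, f1, h, a1, a2, a3, a4⟩ := ts_patch2 hΦ hq hr hrpos hu α (s-1) (fun v v1 hv hz => by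
    rw [uIoc_of_ge hab] at hz
    exact ts_nondeg hcl hμ hΦ hnz (ts_mem_K hs hs' h4) (ts_mem_K ht hs h3) (ts_mem_K hα ht h2)
      (by linarith) h3 h2 h2 hv hz (s-1) ⟨le_rfl, hab⟩)
  rw [uIoc_of_ge hab] at a3 a4
  have b3 : ∀ x, α ≤ x → f x = u x ∧ f1 x = u1 x := fun x hx => a3 x (by
    rw [uIoc_of_le hx]; ext y; simp only [mem_inter_iff, mem_Ioc, mem_empty_iff_false]; grind)
  have b4 : ∀ x, x ≤ s - 1 → f x = 0 := fun x hx => a4 x (by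
    rw [uIoc_of_ge hx]; ext y; simp only [mem_inter_iff, mem_Ioc, mem_empty_iff_false]; grind)
  refine ⟨f, f1, h, a1 ?_, (ts_ev_right hx0 h1).mono b3⟩
  have hF := ts_sq_li hr a2
  refine ts_full (ts_iic hF (c := s - 1) ?_ 0) (ts_ici hF (c := α) ?_ 0)
  · refine integrableOn_zero.congr_fun (fun x hx => ?_) measurableSet_Iic
    simp [b4 x hx]
  · refine ((ts_ici (ts_sq_li hr hu.hc) (hn.mono_set Ioi_subset_Ici_self) α).mono_set
      Ioi_subset_Ici_self).congr_fun (fun x hx => ?_) measurableSet_Ioi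
    simp only [(b3 x (le_of_lt hx)).1]

lemma ts_K_ne (hfive : ∃ s : Finset ℝ, ↑s ⊆ T ∧ 5 ≤ s.card) : (tsKappa T).Nonempty := by
  obtain ⟨s, hs, hc⟩ := hfive
  obtain ⟨a, ha, b, hb, hab⟩ := Finset.one_lt_card.1 (by omega : 1 < s.card)
  rcases lt_or_gt_of_ne hab with h | h
  · exact ⟨b, ts_mem_K (hs hb) (hs ha) h⟩
  · exact ⟨a, ts_mem_K (hs ha) (hs hb) h⟩

end final

/-- Characterization of the limit-point and limit-circle cases via the Wronskian:
`ℓ` is l.p. at `a` iff `W(f,g)(a) = 0` for all `f, g ∈ D_ℓ²`, and `ℓ` is l.c. at `a` iff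
there is `f ∈ D_ℓ²` with `W(f, f*)(a) = 0` and `W(f,g)(a) ≠ 0` for some `g ∈ D_ℓ²`;
analogously at `b`. -/
theorem limit_point_circle_iff_wronskian
    (T : Set ℝ) (hne : T.Nonempty) (hcl : IsClosed T)
    (hfive : ∃ s : Finset ℝ, ↑s ⊆ T ∧ 5 ≤ s.card)
    (μ ν : Measure ℝ)
    (hμ : ∀ c d : ℝ, c ≤ d →
      μ (Set.Ioc c d) = ENNReal.ofReal (tsSigma (tsKappa T) d - tsSigma (tsKappa T) c))
    (hν : ∀ c d : ℝ, c ≤ d → ν (Set.Ico c d) = ENNReal.ofReal (tsRho T d - tsRho T c))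
    (p r q : ℝ → ℝ)
    (hr : LocallyIntegrable r μ) (hrpos : ∀ᵐ t ∂μ, 0 < r t)
    (hq : LocallyIntegrable q μ)
    (hpne : ∀ᵐ t ∂ν, p t ≠ 0) (hp : LocallyIntegrable (fun t => 1 / p t) ν)
    :
    (LimitPointLeft T μ p r q ↔
      ∀ f f1 g g1 : ℝ → ℂ, (∃ h : ℝ → ℂ, MemD2 T μ p r q f f1 h) →
        (∃ h : ℝ → ℂ, MemD2 T μ p r q g g1 h) →
        Filter.Tendsto (fun x => Wr f f1 g g1 (tsSigma T x)) (leftLimFilter T) (nhds 0)) ∧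
    (LimitCircleLeft T μ p r q ↔
      ∃ f f1 : ℝ → ℂ, (∃ h : ℝ → ℂ, MemD2 T μ p r q f f1 h) ∧
        Filter.Tendsto (fun x => Wr f f1 (fun t => starRingEnd ℂ (f t))
          (fun t => starRingEnd ℂ (f1 t)) (tsSigma T x)) (leftLimFilter T) (nhds 0) ∧
        ∃ g g1 : ℝ → ℂ, (∃ h : ℝ → ℂ, MemD2 T μ p r q g g1 h) ∧
          ∃ w : ℂ, w ≠ 0 ∧
            Filter.Tendsto (fun x => Wr f f1 g g1 (tsSigma T x)) (leftLimFilter T) (nhds w)) ∧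
    (LimitPointRight T μ p r q ↔
      ∀ f f1 g g1 : ℝ → ℂ, (∃ h : ℝ → ℂ, MemD2 T μ p r q f f1 h) →
        (∃ h : ℝ → ℂ, MemD2 T μ p r q g g1 h) →
        Filter.Tendsto (fun x => Wr f f1 g g1 (tsSigma T x)) (rightLimFilter T) (nhds 0)) ∧
    (LimitCircleRight T μ p r q ↔
      ∃ f f1 : ℝ → ℂ, (∃ h : ℝ → ℂ, MemD2 T μ p r q f f1 h) ∧
        Filter.Tendsto (fun x => Wr f f1 (fun t => starRingEnd ℂ (f t))
          (fun t => starRingEnd ℂ (f1 t)) (tsSigma T x)) (rightLimFilter T) (nhds 0) ∧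
        ∃ g g1 : ℝ → ℂ, (∃ h : ℝ → ℂ, MemD2 T μ p r q g g1 h) ∧
          ∃ w : ℂ, w ≠ 0 ∧
            Filter.Tendsto (fun x => Wr f f1 g g1 (tsSigma T x)) (rightLimFilter T) (nhds w)) := by
  have hlf : IsLocallyFiniteMeasure μ := ts_lf_mu hμ
  have hΦ : LocallyIntegrable (tsPhi T p) volume := ts_Phi_li hcl hν hp
  have hnz := ts_Phi_ne hcl hν hpne
  have hK : μ (tsKappa T)ᶜ = 0 := ts_mu_compl (ts_K_closed hcl) hμ
  have hKne := ts_K_ne hfive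
  have hs := ts_sol_iff (T := T) hΦ hr hq
  have hD := ts_D_iff (T := T) hΦ hr hrpos hq hK
  have n1 := ts_lf_left hcl hne
  have n2 := ts_lf_right hcl hne
  have mL := ts_main hΦ (ts_Phi_conj p) hr hq (fun u => IntegrableOn (fun t => ‖u t‖^2 * r t) (Iic 0) μ)
    (map (tsSigma T) (leftLimFilter T)) (by
      by_cases hb : BddBelow T
      · exact Or.inl fun z u u1 hu => ts_bdd_left hr hK hb hu.hc
      · refine Or.inr fun f f1 h g g1 k hf hg => ?_
        obtain ⟨w, h1, h2⟩ := ts_H1_left hr hrpos hq hf hg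
        exact ⟨w, h1.mono_left (ts_F_left hb), h2⟩)
    (ts_H2_left hcl hne hμ hΦ hnz hr hrpos hq hK)
  have mR := ts_main hΦ (ts_Phi_conj p) hr hq (fun u => IntegrableOn (fun t => ‖u t‖^2 * r t) (Ici 0) μ)
    (map (tsSigma T) (rightLimFilter T)) (by
      by_cases hb : BddAbove T
      · exact Or.inl fun z u u1 hu => ts_bdd_right hr hK hb hu.hc
      · refine Or.inr fun f f1 h g g1 k hf hg => ?_
        obtain ⟨w, h1, h2⟩ := ts_H1_right hr hrpos hq hf hg
        exact ⟨w, h1.mono_left (ts_F_right hb), h2⟩)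
    (ts_H2_right hcl hne hμ hΦ hnz hr hrpos hq hK)
  have eL : ∀ z u u1, TsSol μ (tsPhi T p) r q z u u1 →
      (L2NearLeft T μ r u ↔ IntegrableOn (fun t => ‖u t‖^2 * r t) (Iic 0) μ) := fun z u u1 h =>
    ts_near_left hr hrpos hK hKne h.hc
  have eR : ∀ z u u1, TsSol μ (tsPhi T p) r q z u u1 →
      (L2NearRight T μ r u ↔ IntegrableOn (fun t => ‖u t‖^2 * r t) (Ici 0) μ) := fun z u u1 h =>
    ts_near_right hr hrpos hK hKne h.hc
  simp only [hD]
  refine ⟨Iff.trans ?_ mL.1, Iff.trans ?_ mL.2, Iff.trans ?_ mR.1, Iff.trans ?_ mR.2⟩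
  · unfold LimitPointLeft
    simp only [hs]
    exact forall_congr' fun z => exists_congr fun u => exists_congr fun u1 =>
      and_congr_right fun h => not_congr (eL z u u1 h)
  · unfold LimitCircleLeft
    simp only [hs]
    exact forall_congr' fun z => forall_congr' fun u => forall_congr' fun u1 =>
      forall_congr' fun h => eL z u u1 h
  · unfold LimitPointRight
    simp only [hs]
    exact forall_congr' fun z => exists_congr fun u => exists_congr fun u1 =>
      and_congr_right fun h => not_congr (eR z u u1 h)
  · unfold LimitCircleRight
    simp only [hs]
    exact forall_congr' fun z => forall_congr' fun u => forall_congr' fun u1 =>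
      forall_congr' fun h => eR z u u1 h
end
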